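/- arXiv:2109.04613 — 3 statements merged into one kernel-verified Lean document; each statement's English description precedes it below -/
import Mathlib

section
/- Let R be a commutative noetherian ring with identity, a an ideal of R, and n ∈ {0, 1}. Let M be a non-zero finitely generated R-module and t a non-negative integer such that the local cohomology module H^i_a(M) is FD_{≤ n} for every i < t. Then H^i_a(M) is a-cofinite for every i = 0, …, t−1. -/
universe u

open CategoryTheory

/-- `Ext^i_R(R/a, M)` as an `R`-module, for `M : ModuleCat R`. -/
noncomputable def extQuot {R : Type u} [CommRing R] (a : Ideal R) (i : ℕ)
    (M : ModuleCat.{u} R) : ModuleCat.{u} R :=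
  ((Ext R (ModuleCat.{u} R) i).obj (Opposite.op (ModuleCat.of R (R ⧸ a)))).obj M

/-- An `R`-module `M` is `a`-cofinite if `Supp M ⊆ V(a)` and `Ext^i_R(R/a, M)` is a
finitely generated `R`-module for every `i ≥ 0`. -/
def IsCofinite {R : Type u} [CommRing R] (a : Ideal R) (M : ModuleCat.{u} R) : Prop :=
  Module.support R M ⊆ PrimeSpectrum.zeroLocus (a : Set R) ∧
    ∀ i : ℕ, Module.Finite R (extQuot a i M)

/-!
Write `Γ_a(X) = H^0_a(X)` for the `a`-torsion submodule of `X`, and induct on the degree of the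
local cohomology, for all modules `X` such that every `Ext^i(R/a, X)` is finitely generated.

In degree zero, `Ext^0(R/a, Γ_a(X))` and `Ext^1(R/a, Γ_a(X))` are finitely generated because
`X/Γ_a(X)` is torsion-free. For an `a`-torsion module `T` which is, up to a finitely generated
submodule, of dimension at most one, these two already force all `Ext^i(R/a, T)` to be finitely
generated. Indeed, there are finitely many minimal primes `p` in the support of `T`, and each `T_p`
is artinian, so Fitting's lemma provides an `x ∈ a` such that `T/(xT + ker x)` vanishes at all of
them. Noetherian induction on the annihilator handles `ker x` and `ker x ∩ xT`, and `T/(xT + ker x)`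
has smaller dimension; as `x` annihilates `R/a`, these three modules determine the finiteness for
`T`.

To raise the degree, embed `X/Γ_a(X)` into a torsion-free injective module with cokernel `C`. Then
`H^i_a(C) ≃ H^{i+1}_a(X)`, and all `Ext^i(R/a, C)` are again finitely generated.
-/

namespace CofiniteLocalCohomology

section ExtComparison

variable {R : Type u} [CommRing R]

lemma exists_iCycles_eq (K : CochainComplex (ModuleCat.{u} R) ℕ) (n : ℕ) (x : K.X n)
    (hx : K.d n (n + 1) x = 0) : ∃ z : K.cycles n, K.iCycles n z = x :=
  (ShortComplex.moduleCat_exact_iff (.mk _ _ (K.iCycles_d n (n + 1)))).1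
    (ShortComplex.exact_of_f_is_kernel _ (K.cyclesIsKernel n (n + 1) (by simp))) x hx

lemma homologyπ_eq_zero_iff (K : CochainComplex (ModuleCat.{u} R) ℕ) (n : ℕ) (z : K.cycles n) :
    K.homologyπ n z = 0 ↔ ∃ (p : ℕ) (g : K.X p), K.d p n g = K.iCycles n z := by
  have hi : Function.Injective (K.iCycles n) := (ModuleCat.mono_iff_injective _).1 inferInstance
  have hd (p : ℕ) (g : K.X p) : K.iCycles n (K.toCycles p n g) = K.d p n g :=
    ConcreteCategory.congr_hom (K.toCycles_i p n) g
  constructor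
  · intro h
    obtain ⟨g, hg⟩ := (ShortComplex.moduleCat_exact_iff (.mk _ _
      (K.toCycles_comp_homologyπ _ n))).1 (ShortComplex.exact_of_g_is_cokernel _
        (K.homologyIsCokernel _ n rfl)) z h
    exact ⟨_, g, (hd _ g).symm.trans (congrArg _ hg)⟩
  · rintro ⟨p, g, hg⟩
    rw [← hi ((hd p g).trans hg)]
    exact ConcreteCategory.congr_hom (K.toCycles_comp_homologyπ p n) g

variable {X X' : ModuleCat.{u} R} (P : ProjectiveResolution X) (Y : ModuleCat.{u} R) (n : ℕ)

/-- The morphism `P_n ⟶ Y` underlying an `n`-cocycle of `Hom(P, Y)`. -/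
noncomputable def cocycleHom :
    (P.complex.linearYonedaObj R Y).cycles n →ₗ[R] (P.complex.X n ⟶ Y) :=
  ((P.complex.linearYonedaObj R Y).iCycles n).hom

lemma d_comp_cocycleHom (z : (P.complex.linearYonedaObj R Y).cycles n) :
    P.complex.d (n + 1) n ≫ cocycleHom P Y n z = 0 :=
  ConcreteCategory.congr_hom ((P.complex.linearYonedaObj R Y).iCycles_d n (n + 1)) z

/-- The class in `Abelian.Ext X Y n` of a cocycle of `Hom(P, Y)`, for a projective resolution `P`
of `X`. -/
noncomputable def abelianExtClass :
    (P.complex.linearYonedaObj R Y).cycles n →ₗ[R] Abelian.Ext.{u} X Y n where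
  toFun z := P.extMk (cocycleHom P Y n z) (n + 1) rfl (d_comp_cocycleHom P Y n z)
  map_add' z w := by
    rw [P.add_extMk]
    congr 1
    exact map_add _ z w
  map_smul' r z := by
    rw [RingHom.id_apply, Abelian.Ext.smul_eq_comp_mk₀, P.extMk_comp_mk₀]
    congr 1
    rw [map_smul, Linear.comp_smul, Category.comp_id]

lemma abelianExtClass_surjective : Function.Surjective (abelianExtClass P Y n) := by
  intro x
  obtain ⟨f, hf, rfl⟩ := P.extMk_surjective x (n + 1) rfl
  obtain ⟨z, rfl⟩ := exists_iCycles_eq (P.complex.linearYonedaObj R Y) n f hf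
  exact ⟨z, rfl⟩

lemma extMk_zero_injective (f : P.complex.X 0 ⟶ Y) (hf : P.complex.d 1 0 ≫ f = 0)
    (h : P.extMk f 1 rfl hf = 0) : f = 0 := by
  rw [← P.extEquivCohomologyClass.apply_eq_iff_eq,
    ProjectiveResolution.extEquivCohomologyClass_extMk,
    ProjectiveResolution.extEquivCohomologyClass_zero,
    CochainComplex.HomComplex.CohomologyClass.mk_eq_zero_iff,
    CochainComplex.HomComplex.Cocycle.toSingleMk_mem_coboundaries_iff _ _ _ _ _ 1 (by simp)] at h
  obtain ⟨g, hg⟩ := h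
  have hz : Limits.IsZero (P.cochainComplex.X 1) :=
    P.cochainComplex.isZero_of_isStrictlyLE 0 1 (by simp)
  rwa [hz.eq_of_src g 0, Limits.comp_zero, eq_comm, Preadditive.IsIso.comp_left_eq_zero] at hg

lemma abelianExtClass_eq_zero_iff (z : (P.complex.linearYonedaObj R Y).cycles n) :
    abelianExtClass P Y n z = 0 ↔
      ∃ (p : ℕ) (g : P.complex.X p ⟶ Y),
        P.complex.d n p ≫ g = cocycleHom P Y n z := by
  have hz := d_comp_cocycleHom P Y n z
  change P.extMk _ _ rfl hz = 0 ↔ _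
  generalize cocycleHom P Y n z = f at hz
  cases n with
  | zero =>
    refine ⟨fun h => ⟨0, 0, by rw [extMk_zero_injective P Y f hz h, Limits.comp_zero]⟩, ?_⟩
    rintro ⟨p, g, hg⟩
    obtain rfl : f = 0 := by
      rw [← hg, P.complex.shape _ _ (by simp), Limits.zero_comp]
    exact P.extMk_zero 1 rfl
  | succ n =>
    refine (P.extMk_eq_zero_iff f (n + 1 + 1) rfl hz n rfl).trans ⟨fun ⟨g, hg⟩ => ⟨n, g, hg⟩, ?_⟩
    rintro ⟨p, g, hg⟩
    obtain rfl | hp := eq_or_ne p n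
    · exact ⟨g, hg⟩
    · rw [P.complex.shape _ _ (by simpa using hp), Limits.zero_comp] at hg
      exact ⟨0, by rw [Limits.comp_zero, hg]⟩

/-- The class in the derived functor `Ext R (ModuleCat R) n` of a cocycle of `Hom(P, Y)`, for a
projective resolution `P` of `X`. -/
noncomputable def derivedExtClass :
    (P.complex.linearYonedaObj R Y).cycles n ⟶
      ((Ext R (ModuleCat.{u} R) n).obj (Opposite.op X)).obj Y :=
  (P.complex.linearYonedaObj R Y).homologyπ n ≫ (P.isoExt n Y).inv

lemma derivedExtClass_surjective : Function.Surjective (derivedExtClass P Y n) :=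
  (ModuleCat.epi_iff_surjective _).1 (by unfold derivedExtClass; infer_instance)

lemma ker_abelianExtClass :
    LinearMap.ker (abelianExtClass P Y n) = LinearMap.ker (derivedExtClass P Y n).hom := by
  ext z
  have hinj : Function.Injective (P.isoExt (R := R) n Y).inv :=
    (ModuleCat.mono_iff_injective _).1 inferInstance
  rw [LinearMap.mem_ker, LinearMap.mem_ker, abelianExtClass_eq_zero_iff]
  exact (homologyπ_eq_zero_iff _ n z).symm.trans
    (map_eq_zero_iff (P.isoExt (R := R) n Y).inv.hom hinj).symm

/-- Mathlib has two versions of `Ext`: morphisms in the derived category, for which the long exact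
sequences are available, and the derived functors in terms of which `localCohomology` is defined.
Both are quotients of the cocycles of `Hom(P, Y)` by the coboundaries. -/
noncomputable def extEquiv (X Y : ModuleCat.{u} R) (n : ℕ) :
    Abelian.Ext.{u} X Y n ≃ₗ[R] ((Ext R (ModuleCat.{u} R) n).obj (Opposite.op X)).obj Y :=
  ((abelianExtClass (projectiveResolution X) Y n).quotKerEquivOfSurjective
      (abelianExtClass_surjective _ Y n)).symm ≪≫ₗ
    Submodule.quotEquivOfEq _ _ (ker_abelianExtClass _ Y n) ≪≫ₗ
      (derivedExtClass (projectiveResolution X) Y n).hom.quotKerEquivOfSurjective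
        (derivedExtClass_surjective _ Y n)

lemma extEquiv_abelianExtClass
    (z : ((projectiveResolution X).complex.linearYonedaObj R Y).cycles n) :
    extEquiv X Y n (abelianExtClass (projectiveResolution X) Y n z) =
      derivedExtClass (projectiveResolution X) Y n z := by
  have hz : ((abelianExtClass (projectiveResolution X) Y n).quotKerEquivOfSurjective
      (abelianExtClass_surjective _ Y n)).symm (abelianExtClass (projectiveResolution X) Y n z) =
        Submodule.Quotient.mk z := by
    rw [LinearEquiv.symm_apply_eq]
    rfl
  simp only [extEquiv, LinearEquiv.trans_apply, hz]
  rfl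

/-- Precomposition `Hom(B, Y) ⟶ Hom(A, Y)` with a morphism of complexes `A ⟶ B`. -/
noncomputable def linearYonedaMap {A B : ChainComplex (ModuleCat.{u} R) ℕ} (φ : A ⟶ B)
    (Y : ModuleCat.{u} R) : B.linearYonedaObj R Y ⟶ A.linearYonedaObj R Y :=
  (HomologicalComplex.unopFunctor _ _).map
    ((((linearYoneda R (ModuleCat.{u} R)).obj Y).rightOp.mapHomologicalComplex _).map φ).op

variable {P} {P' : ProjectiveResolution X'} {g : X' ⟶ X} (φ : ProjectiveResolution.Hom P' P g)

lemma isoExt_inv_comp_extMap :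
    (P.isoExt n Y).inv ≫ ((Ext R (ModuleCat.{u} R) n).map g.op).app Y =
      HomologicalComplex.homologyMap (linearYonedaMap φ.hom Y) n ≫ (P'.isoExt n Y).inv := by
  let F := ((linearYoneda R (ModuleCat.{u} R)).obj Y).rightOp
  have hF := congrArg Quiver.Hom.unop (ProjectiveResolution.isoLeftDerivedObj_hom_naturality g P' P
    φ.hom (φ.hom_f_zero_comp_π_f_zero.trans (by simp)) F n)
  have hop := congrArg Quiver.Hom.unop
    (HomologicalComplex.homologyOp_hom_naturality (linearYonedaMap φ.hom Y) n)
  have he : (P.isoExt (R := R) n Y).inv = ((P.complex.linearYonedaObj R Y).homologyOp n).hom.unop ≫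
    (P.isoLeftDerivedObj F n).hom.unop := rfl
  refine (congrArg (· ≫ _) he).trans <| (Category.assoc _ _ _).trans <|
    (congrArg (_ ≫ ·) hF).trans <| (Category.assoc _ _ _).symm.trans <|
      (congrArg (· ≫ _) hop).trans (Category.assoc _ _ _)

lemma extMap_derivedExtClass (z : (P.complex.linearYonedaObj R Y).cycles n) :
    ((Ext R (ModuleCat.{u} R) n).map g.op).app Y (derivedExtClass P Y n z) =
      derivedExtClass P' Y n (HomologicalComplex.cyclesMap (linearYonedaMap φ.hom Y) n z) := by
  have h : derivedExtClass P Y n ≫ ((Ext R (ModuleCat.{u} R) n).map g.op).app Y =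
      HomologicalComplex.cyclesMap (linearYonedaMap φ.hom Y) n ≫ derivedExtClass P' Y n := by
    rw [derivedExtClass, derivedExtClass, Category.assoc, isoExt_inv_comp_extMap Y n φ,
      HomologicalComplex.homologyπ_naturality_assoc]
  exact ConcreteCategory.congr_hom h z

lemma cocycleHom_cyclesMap (z : (P.complex.linearYonedaObj R Y).cycles n) :
    cocycleHom P' Y n (HomologicalComplex.cyclesMap (linearYonedaMap φ.hom Y) n z) =
      φ.hom.f n ≫ cocycleHom P Y n z :=
  ConcreteCategory.congr_hom (HomologicalComplex.cyclesMap_i (linearYonedaMap φ.hom Y) n) z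

lemma mk₀_comp_abelianExtClass (z : (P.complex.linearYonedaObj R Y).cycles n) :
    (Abelian.Ext.mk₀ g).comp (abelianExtClass P Y n z) (zero_add n) =
      abelianExtClass P' Y n (HomologicalComplex.cyclesMap (linearYonedaMap φ.hom Y) n z) := by
  simp only [abelianExtClass, LinearMap.coe_mk, AddHom.coe_mk,
    ProjectiveResolution.mk₀_comp_extMk _ _ rfl _ φ, cocycleHom_cyclesMap]

lemma extEquiv_naturality (g : X' ⟶ X) (x : Abelian.Ext.{u} X Y n) :
    ((Ext R (ModuleCat.{u} R) n).map g.op).app Y (extEquiv X Y n x) =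
      extEquiv X' Y n ((Abelian.Ext.mk₀ g).comp x (zero_add n)) := by
  obtain ⟨z, rfl⟩ := abelianExtClass_surjective (projectiveResolution X) Y n x
  let φ : ProjectiveResolution.Hom (projectiveResolution X') (projectiveResolution X) g :=
    { hom := ProjectiveResolution.lift g _ _
      hom_f_zero_comp_π_f_zero := ProjectiveResolution.lift_commutes_zero _ _ _ }
  rw [extEquiv_abelianExtClass, extMap_derivedExtClass Y n φ, mk₀_comp_abelianExtClass Y n φ,
    extEquiv_abelianExtClass]

end ExtComparison

section ExtModule

variable {R : Type u} [CommRing R]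

/-- The `R`-module `Ext^i_R(A, X)`, for unbundled modules `A` and `X`. -/
abbrev ExtModule (R : Type u) [CommRing R] (A X : Type u) [AddCommGroup A] [Module R A]
    [AddCommGroup X] [Module R X] (i : ℕ) : Type u :=
  Abelian.Ext.{u} (ModuleCat.of R A) (ModuleCat.of R X) i

variable (A : Type u) {A' X Y Z : Type u} [AddCommGroup A] [Module R A] [AddCommGroup A']
  [Module R A'] [AddCommGroup X] [Module R X] [AddCommGroup Y] [Module R Y] [AddCommGroup Z]
  [Module R Z]

/-- The map `Ext^i(A, X) → Ext^i(A, Y)` induced by `f : X → Y`. -/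
noncomputable def extPostcomp (f : X →ₗ[R] Y) (i : ℕ) : ExtModule R A X i →ₗ[R] ExtModule R A Y i :=
  (Abelian.Ext.mk₀ (ModuleCat.ofHom f)).postcompOfLinear R _ (add_zero i)

/-- The map `Ext^i(A', X) → Ext^i(A, X)` induced by `g : A → A'`. -/
noncomputable def extPrecomp {A : Type u} [AddCommGroup A] [Module R A] (g : A →ₗ[R] A')
    (X : Type u) [AddCommGroup X] [Module R X] (i : ℕ) :
    ExtModule R A' X i →ₗ[R] ExtModule R A X i :=
  (Abelian.Ext.mk₀ (ModuleCat.ofHom g)).precompOfLinear R _ (zero_add i)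

lemma extPostcomp_comp (f : X →ₗ[R] Y) (g : Y →ₗ[R] Z) (i : ℕ) (x : ExtModule R A X i) :
    extPostcomp A (g ∘ₗ f) i x = extPostcomp A g i (extPostcomp A f i x) := by
  change x.comp (Abelian.Ext.mk₀ (ModuleCat.ofHom f ≫ ModuleCat.ofHom g)) (add_zero i) =
    (x.comp (Abelian.Ext.mk₀ _) (add_zero i)).comp (Abelian.Ext.mk₀ _) (add_zero i)
  rw [Abelian.Ext.comp_assoc_of_second_deg_zero, Abelian.Ext.mk₀_comp_mk₀]

lemma extPrecomp_id (i : ℕ) (x : ExtModule R A X i) :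
    extPrecomp (LinearMap.id : A →ₗ[R] A) X i x = x :=
  Abelian.Ext.mk₀_id_comp x

lemma extPrecomp_comp {A : Type u} [AddCommGroup A] [Module R A] {A'' : Type u} [AddCommGroup A'']
    [Module R A''] (g : A →ₗ[R] A') (h : A' →ₗ[R] A'') (i : ℕ) (x : ExtModule R A'' X i) :
    extPrecomp (h ∘ₗ g) X i x = extPrecomp g X i (extPrecomp h X i x) :=
  (Abelian.Ext.mk₀_comp_mk₀_assoc _ _ x).symm

lemma extPrecomp_extPostcomp {A : Type u} [AddCommGroup A] [Module R A] (g : A →ₗ[R] A')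
    (f : X →ₗ[R] Y) (i : ℕ) (x : ExtModule R A' X i) :
    extPrecomp g Y i (extPostcomp A' f i x) = extPostcomp A f i (extPrecomp g X i x) :=
  (Abelian.Ext.comp_assoc_of_third_deg_zero _ _ _ (zero_add i)).symm

lemma extPostcomp_lsmul (r : R) (i : ℕ) (x : ExtModule R A X i) :
    extPostcomp A (LinearMap.lsmul R X r) i x = r • x :=
  (Abelian.Ext.smul_eq_comp_mk₀ x r).symm

lemma smul_ext_eq_zero {r : R} (hr : ∀ y : A, r • y = 0) (i : ℕ) (x : ExtModule R A X i) :
    r • x = 0 := by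
  have hid : r • 𝟙 (ModuleCat.of R A) = 0 := ModuleCat.hom_ext (LinearMap.ext hr)
  have hx : r • x = (Abelian.Ext.mk₀ (r • 𝟙 (ModuleCat.of R A))).comp x (zero_add i) := by
    rw [Abelian.Ext.mk₀_smul, Abelian.Ext.smul_comp, Abelian.Ext.mk₀_id_comp]
  rw [hx, hid, Abelian.Ext.mk₀_zero, Abelian.Ext.zero_comp]

lemma smul_ext_quotient_eq_zero {J : Ideal R} {r : R} (hr : r ∈ J) (i : ℕ)
    (x : ExtModule R (R ⧸ J) X i) : r • x = 0 :=
  smul_ext_eq_zero _ (fun y => by rw [Algebra.smul_def, Ideal.Quotient.algebraMap_eq,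
    Ideal.Quotient.eq_zero_iff_mem.2 hr, zero_mul]) i x

section LongExactSequence

variable {f : X →ₗ[R] Y} {g : Y →ₗ[R] Z} (hf : Function.Injective f) (hfg : Function.Exact f g)
  (hg : Function.Surjective g)

include hf hfg hg in
lemma shortExact_of_exact : (ShortComplex.mk (ModuleCat.ofHom f) (ModuleCat.ofHom g)
    (ModuleCat.hom_ext hfg.linearMap_comp_eq_zero)).ShortExact :=
  ModuleCat.shortComplex_shortExact _ hfg hf hg

/-- The connecting map `Ext^i(A, Z) → Ext^{i+1}(A, X)` of a short exact sequence
`0 → X → Y → Z → 0`. -/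
noncomputable def extConnecting (i : ℕ) : ExtModule R A Z i →ₗ[R] ExtModule R A X (i + 1) :=
  (shortExact_of_exact hf hfg hg).extClass.postcompOfLinear R _ rfl

include hf hfg hg in
lemma extPostcomp_exact (i : ℕ) : Function.Exact (extPostcomp A f i) (extPostcomp A g i) :=
  (ShortComplex.ab_exact_iff_function_exact _).1
    (Abelian.Ext.covariant_sequence_exact₂' _ (shortExact_of_exact hf hfg hg) i)

lemma extPostcomp_extConnecting_exact (i : ℕ) :
    Function.Exact (extPostcomp A g i) (extConnecting A hf hfg hg i) :=
  (ShortComplex.ab_exact_iff_function_exact _).1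
    (Abelian.Ext.covariant_sequence_exact₃' _ (shortExact_of_exact hf hfg hg) i (i + 1) rfl)

lemma extConnecting_extPostcomp_exact (i : ℕ) :
    Function.Exact (extConnecting A hf hfg hg i) (extPostcomp A f (i + 1)) :=
  (ShortComplex.ab_exact_iff_function_exact _).1
    (Abelian.Ext.covariant_sequence_exact₁' _ (shortExact_of_exact hf hfg hg) i (i + 1) rfl)

lemma extPrecomp_extConnecting {A : Type u} [AddCommGroup A] [Module R A] (h : A →ₗ[R] A') (i : ℕ)
    (x : ExtModule R A' Z i) :
    extPrecomp h X (i + 1) (extConnecting A' hf hfg hg i x) =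
      extConnecting A hf hfg hg i (extPrecomp h Z i x) :=
  (Abelian.Ext.comp_assoc _ _ _ (zero_add i) rfl (by simp)).symm

end LongExactSequence

/-- `Ext^0(A, X) ≃ Hom(A, X)`. -/
noncomputable def extZeroEquiv (X : Type u) [AddCommGroup X] [Module R X] :
    ExtModule R A X 0 ≃ₗ[R] (A →ₗ[R] X) :=
  Abelian.Ext.linearEquiv₀ ≪≫ₗ ModuleCat.homLinearEquiv

lemma extZeroEquiv_extPrecomp {A : Type u} [AddCommGroup A] [Module R A] (g : A →ₗ[R] A')
    (x : ExtModule R A' X 0) :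
    extZeroEquiv A X (extPrecomp g X 0 x) = extZeroEquiv A' X x ∘ₗ g := by
  obtain ⟨h, rfl⟩ := (Abelian.Ext.linearEquiv₀ (R := R)).symm.surjective x
  have hx : extPrecomp g X 0 ((Abelian.Ext.linearEquiv₀ (R := R)).symm h) =
      (Abelian.Ext.linearEquiv₀ (R := R)).symm (ModuleCat.ofHom g ≫ h) :=
    Abelian.Ext.mk₀_comp_mk₀ _ _
  simp only [hx, extZeroEquiv, LinearEquiv.trans_apply, LinearEquiv.apply_symm_apply]
  rfl

lemma extZeroEquiv_extPostcomp (f : X →ₗ[R] Y) (x : ExtModule R A X 0) :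
    extZeroEquiv A Y (extPostcomp A f 0 x) = f ∘ₗ extZeroEquiv A X x := by
  obtain ⟨h, rfl⟩ := (Abelian.Ext.linearEquiv₀ (R := R)).symm.surjective x
  have hx : extPostcomp A f 0 ((Abelian.Ext.linearEquiv₀ (R := R)).symm h) =
      (Abelian.Ext.linearEquiv₀ (R := R)).symm (h ≫ ModuleCat.ofHom f) :=
    Abelian.Ext.mk₀_comp_mk₀ _ _
  simp only [hx, extZeroEquiv, LinearEquiv.trans_apply, LinearEquiv.apply_symm_apply]
  rfl

end ExtModule

section ExtFinite

variable {R : Type u} [CommRing R]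

/-- `Ext^i(R/a, X)` is finitely generated. An `a`-torsion module `X` is `a`-cofinite if this holds
for all `i`. -/
def ExtFinite (a : Ideal R) (X : Type u) [AddCommGroup X] [Module R X] (i : ℕ) : Prop :=
  Module.Finite R (ExtModule R (R ⧸ a) X i)

lemma finite_extQuot_iff (a : Ideal R) (X : ModuleCat.{u} R) (i : ℕ) :
    Module.Finite R (extQuot a i X) ↔ ExtFinite a X i :=
  Module.Finite.equiv_iff (extEquiv (ModuleCat.of R (R ⧸ a)) X i).symm

/-- `Hom(R/a, X)` is the submodule of elements of `X` annihilated by `a`. -/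
noncomputable def homQuotientEquiv (a : Ideal R) (X : Type*) [AddCommGroup X] [Module R X] :
    ((R ⧸ a) →ₗ[R] X) ≃ₗ[R] Submodule.torsionBySet R X a where
  toFun f := ⟨f 1, (Submodule.mem_torsionBySet_iff _ _).2 fun r => by
    rw [← map_smul, Algebra.smul_def, mul_one, Ideal.Quotient.algebraMap_eq,
      Ideal.Quotient.eq_zero_iff_mem.2 r.2, map_zero]⟩
  map_add' _ _ := rfl
  map_smul' _ _ := rfl
  invFun x := Submodule.liftQ a (LinearMap.toSpanSingleton R X x) fun r hr =>
    (Submodule.mem_torsionBySet_iff _ _).1 x.2 ⟨r, hr⟩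
  left_inv f := by
    ext
    exact one_smul R (f 1)
  right_inv x := by
    ext
    exact one_smul R (x : X)

variable {a : Ideal R} {X Y Z : Type u} [AddCommGroup X] [Module R X] [AddCommGroup Y] [Module R Y]
  [AddCommGroup Z] [Module R Z]

lemma extFinite_zero_iff : ExtFinite a X 0 ↔ (Submodule.torsionBySet R X a).FG :=
  (Module.Finite.equiv_iff (extZeroEquiv (R ⧸ a) X ≪≫ₗ homQuotientEquiv a X)).trans
    Module.Finite.iff_fg

lemma exact_ker_subtype_rangeRestrict (f : X →ₗ[R] Y) :
    Function.Exact (LinearMap.ker f).subtype f.rangeRestrict := by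
  rw [LinearMap.exact_iff, LinearMap.ker_rangeRestrict, Submodule.range_subtype]

variable [IsNoetherianRing R]

lemma ExtFinite.of_finite (a : Ideal R) (X : Type u) [AddCommGroup X] [Module R X]
    [Module.Finite R X] (i : ℕ) : ExtFinite a X i := by
  unfold ExtFinite
  infer_instance

lemma finite_of_exact {A B C : Type*} [AddCommGroup A] [Module R A] [AddCommGroup B] [Module R B]
    [AddCommGroup C] [Module R C] {f : A →ₗ[R] B} {g : B →ₗ[R] C} (h : Function.Exact f g)
    (_ : Module.Finite R A) (_ : Module.Finite R C) : Module.Finite R B :=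
  have := isNoetherian_of_range_eq_ker f g (LinearMap.exact_iff.1 h).symm
  inferInstance

variable {f : X →ₗ[R] Y} {g : Y →ₗ[R] Z}

lemma ExtFinite.middle_of_exact {i : ℕ} (hX : ExtFinite a X i) (hZ : ExtFinite a Z i)
    (hf : Function.Injective f) (hfg : Function.Exact f g) (hg : Function.Surjective g) :
    ExtFinite a Y i :=
  finite_of_exact (extPostcomp_exact (R ⧸ a) hf hfg hg i) hX hZ

lemma ExtFinite.right_of_exact {i : ℕ} (hX : ExtFinite a X (i + 1)) (hY : ExtFinite a Y i)
    (hf : Function.Injective f) (hfg : Function.Exact f g) (hg : Function.Surjective g) :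
    ExtFinite a Z i :=
  finite_of_exact (extPostcomp_extConnecting_exact (R ⧸ a) hf hfg hg i) hY hX

lemma ExtFinite.left_of_exact {i : ℕ} (hY : ExtFinite a Y (i + 1)) (hZ : ExtFinite a Z i)
    (hf : Function.Injective f) (hfg : Function.Exact f g) (hg : Function.Surjective g) :
    ExtFinite a X (i + 1) :=
  finite_of_exact (extConnecting_extPostcomp_exact (R ⧸ a) hf hfg hg i) hZ hY

lemma fg_torsionBySet_of_injective {X Y : Type*} [AddCommGroup X] [Module R X] [AddCommGroup Y]
    [Module R Y] {f : X →ₗ[R] Y} (hf : Function.Injective f)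
    (hY : (Submodule.torsionBySet R Y a).FG) : (Submodule.torsionBySet R X a).FG := by
  rw [← Module.Finite.iff_fg] at hY ⊢
  have hmaps : ∀ x ∈ Submodule.torsionBySet R X a, f x ∈ Submodule.torsionBySet R Y a := by
    simp only [Submodule.mem_torsionBySet_iff, ← map_smul]
    exact fun x hx r => by rw [hx r, map_zero]
  exact Module.Finite.of_injective (f.restrict hmaps) fun x y hxy =>
    Subtype.ext (hf (congrArg Subtype.val hxy))

lemma ExtFinite.of_injective (hY : ExtFinite a Y 0) (hf : Function.Injective f) :
    ExtFinite a X 0 :=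
  extFinite_zero_iff.2 (fg_torsionBySet_of_injective hf (extFinite_zero_iff.1 hY))

lemma ExtFinite.of_linearEquiv {i : ℕ} (hX : ExtFinite a X i) (e : X ≃ₗ[R] Y) : ExtFinite a Y i :=
  hX.middle_of_exact (g := (0 : Y →ₗ[R] PUnit.{u + 1})) (.of_finite a _ i) e.injective
    (fun y => ⟨fun _ => e.surjective y, fun _ => rfl⟩) (fun _ => ⟨0, Subsingleton.elim _ _⟩)

variable {N : Submodule R X}

lemma ExtFinite.of_submodule_quotient {i : ℕ} (hN : ExtFinite a N i) (hQ : ExtFinite a (X ⧸ N) i) :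
    ExtFinite a X i :=
  hN.middle_of_exact hQ N.subtype_injective (LinearMap.exact_subtype_mkQ N) N.mkQ_surjective

lemma ExtFinite.quotient {i : ℕ} (hN : ExtFinite a N (i + 1)) (hX : ExtFinite a X i) :
    ExtFinite a (X ⧸ N) i :=
  hN.right_of_exact hX N.subtype_injective (LinearMap.exact_subtype_mkQ N) N.mkQ_surjective

lemma ExtFinite.submodule {i : ℕ} (hX : ExtFinite a X (i + 1)) (hQ : ExtFinite a (X ⧸ N) i) :
    ExtFinite a N (i + 1) :=
  hX.left_of_exact hQ N.subtype_injective (LinearMap.exact_subtype_mkQ N) N.mkQ_surjective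

lemma ExtFinite.submodule_zero (hX : ExtFinite a X 0) : ExtFinite a N 0 :=
  hX.of_injective N.subtype_injective

/-- Multiplication by `x` on `X` induces zero on `Ext^i(R/a, X)`, so the image of
`Ext^i(R/a, X) → Ext^i(R/a, xX)` lies in the image of the connecting map. -/
lemma ExtFinite.of_ker_of_quotient_range {x : R} (hx : x ∈ a)
    (hK : ∀ i, ExtFinite a (LinearMap.ker (LinearMap.lsmul R X x)) i)
    (hQ : ∀ i, ExtFinite a (X ⧸ LinearMap.range (LinearMap.lsmul R X x)) i)
    (h0 : ExtFinite a X 0) (i : ℕ) : ExtFinite a X i := by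
  cases i with
  | zero => exact h0
  | succ i =>
    let φ := LinearMap.lsmul R X x
    let N := LinearMap.range φ
    let δ := extConnecting (R ⧸ a) N.subtype_injective (LinearMap.exact_subtype_mkQ N)
      N.mkQ_surjective i
    have hδ (y) : extPostcomp (R ⧸ a) φ.rangeRestrict (i + 1) y ∈ LinearMap.range δ := by
      refine (extConnecting_extPostcomp_exact (R ⧸ a) _ _ _ i _).1 ?_
      rw [← extPostcomp_comp]
      exact (extPostcomp_lsmul (R ⧸ a) x (i + 1) y).trans (smul_ext_quotient_eq_zero hx _ y)
    have hexact : Function.Exact (extPostcomp (R ⧸ a) (LinearMap.ker φ).subtype (i + 1))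
        ((extPostcomp (R ⧸ a) φ.rangeRestrict (i + 1)).codRestrict (LinearMap.range δ) hδ) := by
      rw [LinearMap.exact_iff, LinearMap.ker_codRestrict]
      exact LinearMap.exact_iff.1 (extPostcomp_exact (R ⧸ a) (Submodule.subtype_injective _)
        (exact_ker_subtype_rangeRestrict φ) φ.surjective_rangeRestrict (i + 1))
    have : Module.Finite R (ExtModule R (R ⧸ a) (X ⧸ N) i) := hQ i
    exact finite_of_exact hexact (hK (i + 1)) inferInstance

end ExtFinite

section Artinian

lemma exists_forall_eq_of_antitone {α : Type*} [PartialOrder α] [WellFoundedLT α] {f : ℕ → ℕ → α}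
    (hf : ∀ i, Antitone fun m => f m i) (hf' : ∀ m, Antitone (f m)) :
    ∃ N, ∀ m ≥ N, ∀ i, f m i = f N i := by
  have hstab (g : ℕ → α) (hg : Antitone g) : ∃ N, ∀ m ≥ N, g m = g N :=
    (WellFoundedGT.monotone_chain_condition (α := αᵒᵈ) ⟨g, hg⟩).imp fun N h m hm => (h m hm).symm
  choose c hc using fun i => hstab _ (hf i)
  obtain ⟨d, hd⟩ := hstab (fun m => f m m) fun m n hmn => (hf n hmn).trans (hf' m hmn)
  refine ⟨max d ((Finset.range d).sup c), fun m hm i => ?_⟩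
  obtain hi | hi := lt_or_ge i d
  · have hcN : c i ≤ max d ((Finset.range d).sup c) :=
      (Finset.le_sup (Finset.mem_range.2 hi)).trans (le_max_right _ _)
    exact (hc i m (hcN.trans hm)).trans (hc i _ hcN).symm
  · have hdiag (n : ℕ) (hn : d ≤ n) : f n i = f d d := by
      refine le_antisymm ((hf i hn).trans (hf' d hi)) ?_
      rw [← hd (max n i) (hn.trans (le_max_left _ _))]
      exact (hf _ (le_max_left n i)).trans (hf' n (le_max_right n i))
    rw [hdiag m ((le_max_left _ _).trans hm), hdiag _ (le_max_left _ _)]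

variable {A V : Type*} [CommRing A] [AddCommGroup V] [Module A V] {x : A}

/-- The elements of `V` annihilated by `x` which are divisible by `x ^ i` within `D`. -/
def divisibleTorsion (x : A) (D : Submodule A V) (i : ℕ) :
    Submodule A (LinearMap.ker (LinearMap.lsmul A V x)) :=
  (D.map (LinearMap.lsmul A V (x ^ i))).comap (LinearMap.ker (LinearMap.lsmul A V x)).subtype

lemma divisibleTorsion_mono (i : ℕ) :
    Monotone fun D : Submodule A V => divisibleTorsion x D i :=
  fun _ _ h => Submodule.comap_mono (Submodule.map_mono h)

lemma divisibleTorsion_antitone (D : Submodule A V) : Antitone (divisibleTorsion x D) := by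
  refine antitone_nat_of_succ_le fun i => Submodule.comap_mono ?_
  rintro _ ⟨v, hv, rfl⟩
  exact ⟨x • v, D.smul_mem x hv, by simp only [LinearMap.lsmul_apply, smul_smul, pow_succ]⟩

lemma le_of_divisibleTorsion_le (hx : ∀ v : V, ∃ k : ℕ, x ^ k • v = 0) {D D' : Submodule A V}
    (hle : D ≤ D') (h : ∀ i, divisibleTorsion x D' i ≤ divisibleTorsion x D i) : D' ≤ D := by
  have key (k : ℕ) : ∀ v ∈ D', x ^ k • v = 0 → v ∈ D := by
    induction k with
    | zero =>
      intro v _ hv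
      rw [pow_zero, one_smul] at hv
      exact hv ▸ D.zero_mem
    | succ k ih =>
      intro v hv hxv
      have hmem : x ^ k • v ∈ LinearMap.ker (LinearMap.lsmul A V x) := by
        rw [LinearMap.mem_ker, LinearMap.lsmul_apply, smul_smul, ← pow_succ', hxv]
      obtain ⟨w, hw, hwv⟩ := h k (x := ⟨x ^ k • v, hmem⟩) ⟨v, hv, rfl⟩
      have hvw : v - w ∈ D := ih _ (D'.sub_mem hv (hle hw)) (by
        rw [smul_sub, sub_eq_zero]
        exact hwv.symm)
      exact (D.sub_mem_iff_left hw).1 hvw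
  exact fun v hv => (hx v).elim fun k hk => key k v hv hk

/-- A descending chain `D` is determined by the family of chains `divisibleTorsion x (D m) i`,
which stabilize simultaneously for all `i`. -/
lemma isArtinian_of_ker_lsmul (hx : ∀ v : V, ∃ k : ℕ, x ^ k • v = 0)
    [IsArtinian A (LinearMap.ker (LinearMap.lsmul A V x))] : IsArtinian A V := by
  rw [← monotone_stabilizes_iff_artinian]
  intro D
  have hanti : Antitone fun m => OrderDual.ofDual (D m) := fun _ _ h => D.monotone h
  obtain ⟨N, hN⟩ := exists_forall_eq_of_antitone
    (f := fun m => divisibleTorsion x (OrderDual.ofDual (D m)))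
    (fun i => (divisibleTorsion_mono i).comp_antitone hanti) fun m => divisibleTorsion_antitone _
  exact ⟨N, fun m hm => le_antisymm (D.monotone hm)
    (le_of_divisibleTorsion_le hx (hanti hm) fun i => (hN m hm i).ge)⟩

end Artinian

section LocalArtinian

variable {R : Type*} [CommRing R] {X : Type*} [AddCommGroup X] [Module R X]

lemma annihilator_lt_of_le_ker_lsmul {x : R} (hx : x ∉ Module.annihilator R X) {N : Submodule R X}
    (hN : N ≤ LinearMap.ker (LinearMap.lsmul R X x)) :
    Module.annihilator R X < Module.annihilator R N :=
  lt_of_le_of_ne (N.subtype.annihilator_le_of_injective N.subtype_injective) fun h =>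
    hx (h ▸ Module.mem_annihilator.2 fun v => Subtype.ext (hN v.2))

lemma torsionBySet_eq_top_of_le_annihilator {I : Ideal R} (hI : I ≤ Module.annihilator R X) :
    Submodule.torsionBySet R X I = ⊤ :=
  eq_top_iff.2 fun v _ => (Submodule.mem_torsionBySet_iff _ _).2 fun r =>
    Module.mem_annihilator.1 (hI r.2) v

lemma isArtinian_of_maximalIdeal_le_annihilator {A V : Type*} [CommRing A] [IsLocalRing A]
    [AddCommGroup V] [Module A V] [Module.Finite A V]
    (h : IsLocalRing.maximalIdeal A ≤ Module.annihilator A V) : IsArtinian A V := by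
  have htors : Module.IsTorsionBySet A V (IsLocalRing.maximalIdeal A) :=
    fun v r => Module.mem_annihilator.1 (h r.2) v
  let _ := htors.module
  have := htors.isScalarTower (S := A)
  let _ := Ideal.Quotient.field (IsLocalRing.maximalIdeal A)
  have := Module.Finite.of_restrictScalars_finite A (A ⧸ IsLocalRing.maximalIdeal A) V
  exact isArtinian_of_surjective_algebraMap
    (Ideal.Quotient.mk_surjective (I := IsLocalRing.maximalIdeal A))

variable {p : PrimeSpectrum R}

lemma mem_minimalPrimes_annihilator_span (hp : ∀ q < p, q ∉ Module.support R X) {v : X}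
    (hv : (Submodule.span R {v}).annihilator ≤ p.asIdeal) :
    p.asIdeal ∈ (Submodule.span R {v}).annihilator.minimalPrimes := by
  refine ⟨⟨p.2, hv⟩, fun q ⟨hq, hvq⟩ hqp => ?_⟩
  by_contra hpq
  exact hp ⟨q, hq⟩ (lt_of_le_not_ge hqp hpq)
    (Module.mem_support_iff_exists_annihilator.2 ⟨v, hvq⟩)

lemma exists_pow_mul_smul_eq_zero (hp : ∀ q < p, q ∉ Module.support R X) {x : R}
    (hx : x ∈ p.asIdeal) (v : X) : ∃ k : ℕ, ∃ s ∈ p.asIdeal.primeCompl, (x ^ k * s) • v = 0 := by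
  by_cases hv : (Submodule.span R {v}).annihilator ≤ p.asIdeal
  · have hrad := Ideal.mem_map_of_mem (algebraMap R (Localization.AtPrime p.asIdeal)) hx
    rw [← IsLocalization.AtPrime.radical_map_of_mem_minimalPrimes _ _ _
      (mem_minimalPrimes_annihilator_span hp hv)] at hrad
    obtain ⟨k, hk⟩ := hrad
    rw [← map_pow, IsLocalization.algebraMap_mem_map_algebraMap_iff p.asIdeal.primeCompl] at hk
    obtain ⟨s, hs, hsk⟩ := hk
    rw [Submodule.mem_annihilator_span_singleton, mul_comm] at hsk
    exact ⟨k, s, hs, hsk⟩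
  · obtain ⟨s, hsv, hsp⟩ := SetLike.not_le_iff_exists.1 hv
    rw [Submodule.mem_annihilator_span_singleton] at hsv
    exact ⟨0, s, hsp, by rwa [pow_zero, one_mul]⟩

lemma exists_pow_smul_eq_zero_of_localizedModule (hp : ∀ q < p, q ∉ Module.support R X) {x : R}
    (hx : x ∈ p.asIdeal) (v : LocalizedModule p.asIdeal.primeCompl X) :
    ∃ k : ℕ, algebraMap R (Localization.AtPrime p.asIdeal) x ^ k • v = 0 := by
  induction v using LocalizedModule.induction_on with
  | h v t =>
    obtain ⟨k, s, hs, hv⟩ := exists_pow_mul_smul_eq_zero hp hx v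
    refine ⟨k, ?_⟩
    rw [← map_pow, algebraMap_smul, LocalizedModule.smul'_mk,
      ← LocalizedModule.mk_cancel_common_left ⟨s, hs⟩, Submonoid.mk_smul, smul_smul, mul_comm, hv,
      LocalizedModule.zero_mk]

lemma map_lsmul (S : Submonoid R) (x : R) :
    LocalizedModule.map S (LinearMap.lsmul R X x) =
      LinearMap.lsmul (Localization S) (LocalizedModule S X) (algebraMap R (Localization S) x) := by
  ext v
  induction v using LocalizedModule.induction_on with
  | h v s => rw [LocalizedModule.map_mk, LinearMap.lsmul_apply, LinearMap.lsmul_apply,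
      algebraMap_smul, LocalizedModule.smul'_mk]

lemma localized_ker_lsmul (S : Submonoid R) (x : R) :
    (LinearMap.ker (LinearMap.lsmul R X x)).localized S =
      LinearMap.ker (LinearMap.lsmul (Localization S) (LocalizedModule S X)
        (algebraMap R (Localization S) x)) :=
  (LinearMap.localized'_ker_eq_ker_localizedMap _ _ _ _ _).trans
    (congrArg LinearMap.ker (map_lsmul S x))

lemma localized_range_lsmul (S : Submonoid R) (x : R) :
    (LinearMap.range (LinearMap.lsmul R X x)).localized S =
      LinearMap.range (LinearMap.lsmul (Localization S) (LocalizedModule S X)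
        (algebraMap R (Localization S) x)) :=
  (LinearMap.localized'_range_eq_range_localizedMap _ _ _ _ _).trans
    (congrArg LinearMap.range (map_lsmul S x))

/-- `S⁻¹N` as a localization of the module `N` and as a submodule of `S⁻¹X`. -/
noncomputable def localizedModuleEquivLocalized (S : Submonoid R) (N : Submodule R X) :
    LocalizedModule S N ≃ₗ[Localization S] N.localized S :=
  IsLocalizedModule.linearEquiv S (LocalizedModule.mkLinearMap S N)
    (N.toLocalized' (Localization S) S (LocalizedModule.mkLinearMap S X))
    |>.extendScalarsOfIsLocalization S (Localization S)

/-- By noetherian induction on the annihilator, `X` may be replaced by the kernel of an element of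
`p` until it is annihilated by `p`; then it is finite and `X_p` is a finite-dimensional vector space
over the residue field. -/
lemma isArtinian_localizedModule_of_fg_torsionBySet [IsNoetherianRing R] {a : Ideal R}
    (hap : a ≤ p.asIdeal) (hp : ∀ q < p, q ∉ Module.support R X)
    (hfg : (Submodule.torsionBySet R X a).FG) :
    IsArtinian (Localization.AtPrime p.asIdeal) (LocalizedModule p.asIdeal.primeCompl X) := by
  induction h : Module.annihilator R X using WellFoundedGT.induction generalizing X with
  | ind I ih =>
    subst h
    by_cases hpX : p.asIdeal ≤ Module.annihilator R X
    · rw [torsionBySet_eq_top_of_le_annihilator (hap.trans hpX), ← Module.finite_def] at hfg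
      apply isArtinian_of_maximalIdeal_le_annihilator
      rw [← Localization.AtPrime.map_eq_maximalIdeal, Ideal.map_le_iff_le_comap]
      refine fun x hx => Module.mem_annihilator.2 fun v => ?_
      induction v using LocalizedModule.induction_on with
      | h v t =>
        rw [algebraMap_smul, LocalizedModule.smul'_mk, Module.mem_annihilator.1 (hpX hx),
          LocalizedModule.zero_mk]
    · obtain ⟨x, hxp, hxX⟩ := SetLike.not_le_iff_exists.1 hpX
      let K := LinearMap.ker (LinearMap.lsmul R X x)
      have hK : IsArtinian (Localization.AtPrime p.asIdeal)
          (LocalizedModule p.asIdeal.primeCompl K) := by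
        refine ih _ (annihilator_lt_of_le_ker_lsmul hxX le_rfl) (fun q hq hqK => hp q hq ?_) ?_ rfl
        · exact Module.support_subset_of_injective _ K.subtype_injective hqK
        · exact fg_torsionBySet_of_injective K.subtype_injective hfg
      have : IsArtinian (Localization.AtPrime p.asIdeal)
          (LinearMap.ker (LinearMap.lsmul (Localization.AtPrime p.asIdeal)
            (LocalizedModule p.asIdeal.primeCompl X) (algebraMap R _ x))) := by
        rw [← localized_ker_lsmul]
        exact isArtinian_of_linearEquiv (localizedModuleEquivLocalized p.asIdeal.primeCompl K)
      exact isArtinian_of_ker_lsmul (exists_pow_smul_eq_zero_of_localizedModule hp hxp)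

lemma localized_range_sup_ker_lsmul (S : Submonoid R) (x : R) :
    (LinearMap.range (LinearMap.lsmul R X x) ⊔ LinearMap.ker (LinearMap.lsmul R X x)).localized S =
      LinearMap.range (LinearMap.lsmul (Localization S) (LocalizedModule S X)
          (algebraMap R (Localization S) x)) ⊔
        LinearMap.ker (LinearMap.lsmul (Localization S) (LocalizedModule S X)
          (algebraMap R (Localization S) x)) := by
  rw [← localized_ker_lsmul, ← localized_range_lsmul]
  exact map_sup
    (Submodule.localized'FrameHom (Localization S) S (LocalizedModule.mkLinearMap S X)) _ _

lemma eventually_notMem_support_quotient (x : R)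
    [IsArtinian (Localization.AtPrime p.asIdeal) (LocalizedModule p.asIdeal.primeCompl X)] :
    ∀ᶠ k : ℕ in Filter.atTop, p ∉ Module.support R (X ⧸
      (LinearMap.range (LinearMap.lsmul R X (x ^ k)) ⊔
        LinearMap.ker (LinearMap.lsmul R X (x ^ k)))) := by
  let S := p.asIdeal.primeCompl
  let φ := LinearMap.lsmul (Localization S) (LocalizedModule S X)
    (algebraMap R (Localization S) x)
  filter_upwards [φ.eventually_codisjoint_ker_pow_range_pow] with k hk
  have hφ : φ ^ k = LinearMap.lsmul (Localization S) (LocalizedModule S X)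
      (algebraMap R (Localization S) (x ^ k)) := by
    rw [map_pow]
    exact (map_pow (algebraMap (Localization S) (Module.End _ (LocalizedModule S X))) _ k).symm
  rw [hφ, codisjoint_iff, sup_comm, ← localized_range_sup_ker_lsmul] at hk
  rw [Module.notMem_support_iff, ← (localizedQuotientEquiv S _).toEquiv.subsingleton_congr,
    Submodule.Quotient.subsingleton_iff]
  exact hk

end LocalArtinian

section SmallDimension

variable {R : Type*} [CommRing R] [IsNoetherianRing R] {a : Ideal R}

variable {X : Type*} [AddCommGroup X] [Module R X]

lemma fg_torsionBySet_pow (hfg : (Submodule.torsionBySet R X a).FG) (m : ℕ) :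
    (Submodule.torsionBySet R X (a ^ m : Ideal R)).FG := by
  induction m with
  | zero =>
    have hbot : Submodule.torsionBySet R X (a ^ 0 : Ideal R) = ⊥ := by
      rw [pow_zero, Ideal.one_eq_top, Submodule.top_coe, Submodule.torsionBySet_univ]
    exact hbot ▸ Submodule.fg_bot
  | succ m ih =>
    obtain ⟨s, hs⟩ := IsNoetherian.noetherian a
    let f : X →ₗ[R] s → X := LinearMap.pi fun x => LinearMap.lsmul R X x
    refine Submodule.fg_of_fg_map_of_fg_inf_ker f ((Submodule.fg_pi fun _ => ih).of_le ?_)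
      (hfg.of_le ?_)
    · rintro _ ⟨v, hv, rfl⟩ x -
      refine (Submodule.mem_torsionBySet_iff _ _).2 fun r => ?_
      have hrx : (r * x : R) ∈ a ^ (m + 1) :=
        pow_succ a m ▸ Ideal.mul_mem_mul r.2 (hs ▸ Ideal.subset_span x.2)
      exact (smul_smul _ _ _).trans ((Submodule.mem_torsionBySet_iff _ _).1 hv ⟨_, hrx⟩)
    · rw [← hs, ← Submodule.torsionBySet_eq_torsionBySet_span]
      exact fun v hv => (Submodule.mem_torsionBySet_iff _ _).2 (congrFun hv.2)

lemma mem_associatedPrimes_torsionBySet {p : PrimeSpectrum R} (hap : a ≤ p.asIdeal)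
    (hpX : p ∈ Module.support R X) (hp : ∀ q < p, q ∉ Module.support R X) :
    p.asIdeal ∈ associatedPrimes R (Submodule.torsionBySet R X a) := by
  obtain ⟨v, hv⟩ := Module.mem_support_iff_exists_annihilator.1 hpX
  have hpv : p.asIdeal ∈ associatedPrimes R (Submodule.span R {v}) := by
    apply Module.associatedPrimes.minimalPrimes_annihilator_subset_associatedPrimes
    exact mem_minimalPrimes_annihilator_span hp hv
  obtain ⟨hp', w, hw⟩ := isAssociatedPrime_iff.1
    (associatedPrimes.subset_of_injective (Submodule.subtype_injective _) hpv)
  have hmem (r : R) : r ∈ p.asIdeal ↔ r • w = 0 := by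
    rw [hw, Submodule.mem_colon_singleton, Submodule.mem_bot]
  refine isAssociatedPrime_iff.2 ⟨hp', ⟨w, ?_⟩, ?_⟩
  · exact (Submodule.mem_torsionBySet_iff _ _).2 fun r => (hmem r).1 (hap r.2)
  · ext r
    rw [hmem, Submodule.mem_colon_singleton, Submodule.mem_bot]
    exact (Subtype.ext_iff (a1 := r • (⟨w, _⟩ : Submodule.torsionBySet R X a)) (a2 := 0)).symm

lemma finite_minimal_support (hX : Module.support R X ⊆ PrimeSpectrum.zeroLocus (a : Set R))
    (hfg : (Submodule.torsionBySet R X a).FG) :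
    {p | p ∈ Module.support R X ∧ ∀ q < p, q ∉ Module.support R X}.Finite := by
  rw [← Module.Finite.iff_fg] at hfg
  refine ((associatedPrimes.finite R (Submodule.torsionBySet R X a)).preimage
    (fun p _ q _ => PrimeSpectrum.ext)).subset fun p ⟨hpX, hp⟩ => ?_
  exact mem_associatedPrimes_torsionBySet (hX hpX) hpX hp

lemma finite_or_exists_lt_of_mem_support_quotient
    (hX : Module.support R X ⊆ PrimeSpectrum.zeroLocus (a : Set R))
    (hfg : (Submodule.torsionBySet R X a).FG) :
    Module.Finite R X ∨ ∃ x ∈ a, x ∉ Module.annihilator R X ∧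
      ∀ p ∈ Module.support R (X ⧸
        (LinearMap.range (LinearMap.lsmul R X x) ⊔ LinearMap.ker (LinearMap.lsmul R X x))),
      ∃ q ∈ Module.support R X, q < p := by
  by_cases hrad : a ≤ (Module.annihilator R X).radical
  · obtain ⟨m, hm⟩ := Ideal.exists_pow_le_of_le_radical_of_fg hrad (IsNoetherian.noetherian a)
    have hfin := fg_torsionBySet_pow hfg m
    rw [torsionBySet_eq_top_of_le_annihilator hm, ← Module.finite_def] at hfin
    exact .inl hfin
  · obtain ⟨x, hxa, hx⟩ := SetLike.not_le_iff_exists.1 hrad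
    have hev := (Filter.eventually_all_finite (finite_minimal_support hX hfg)).2
      fun p (hp : p ∈ Module.support R X ∧ ∀ q < p, q ∉ Module.support R X) =>
        have := isArtinian_localizedModule_of_fg_torsionBySet (hX hp.1) hp.2 hfg
        eventually_notMem_support_quotient (p := p) (X := X) x
    obtain ⟨k, hk, hk0⟩ := (hev.and (Filter.eventually_gt_atTop 0)).exists
    refine .inr ⟨x ^ k, a.pow_mem_of_mem hxa k hk0, fun h => hx ⟨k, h⟩, fun p hp => ?_⟩
    by_contra! hmin
    refine hk p ⟨?_, fun q hq hqX => hmin q hqX hq⟩ hp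
    exact Module.support_subset_of_surjective _ (Submodule.mkQ_surjective _) hp

end SmallDimension

section Cofinite

variable {R : Type u} [CommRing R] {a : Ideal R} {X : Type u} [AddCommGroup X] [Module R X]

lemma subsingleton_of_forall_exists_lt {Y : Type*} [AddCommGroup Y] [Module R Y]
    (hX : Module.supportDim R X ≤ 0)
    (h : ∀ p ∈ Module.support R Y, ∃ q ∈ Module.support R X, q < p) : Subsingleton Y := by
  rw [← Module.support_eq_empty_iff (R := R), Set.eq_empty_iff_forall_notMem]
  intro p hp
  obtain ⟨q, hq, hqp⟩ := h p hp
  exact (Order.krullDim_nonpos_iff_forall_isMax.1 hX ⟨q, hq⟩).not_lt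
    (b := ⟨p, Module.mem_support_mono hqp.le hq⟩) hqp

lemma supportDim_le_zero_of_forall_exists_lt {Y : Type*} [AddCommGroup Y] [Module R Y]
    (hX : Module.supportDim R X ≤ 1)
    (h : ∀ p ∈ Module.support R Y, ∃ q ∈ Module.support R X, q < p) :
    Module.supportDim R Y ≤ 0 := by
  refine Order.krullDim_nonpos_iff_forall_isMax.2 fun ⟨p, hp⟩ ⟨p', hp'⟩ hpp' => ?_
  obtain ⟨q, hq, hqp⟩ := h p hp
  have hpX := Module.mem_support_mono hqp.le hq
  obtain hmin | hmax := Order.krullDim_le_one_iff.1 hX ⟨p, hpX⟩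
  · exact (hmin.not_lt (b := ⟨q, hq⟩) hqp).elim
  · exact hmax (b := ⟨p', Module.mem_support_mono hpp' hpX⟩) hpp'

lemma exact_inclusion_submoduleMap_mkQ (K L : Submodule R X) :
    Function.Exact (Submodule.inclusion (inf_le_left : K ⊓ L ≤ K)) (L.mkQ.submoduleMap K) := by
  rintro ⟨v, hv⟩
  rw [Subtype.ext_iff, LinearMap.submoduleMap_coe_apply, Submodule.mkQ_apply, ZeroMemClass.coe_zero,
    Submodule.Quotient.mk_eq_zero]
  exact ⟨fun hvL => ⟨⟨v, hv, hvL⟩, rfl⟩, fun ⟨w, hw⟩ => congrArg Subtype.val hw ▸ w.2.2⟩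

variable [IsNoetherianRing R]

lemma ExtFinite.map_mkQ {K L : Submodule R X} {i : ℕ} (hinf : ExtFinite a ↥(K ⊓ L) (i + 1))
    (hK : ExtFinite a K i) : ExtFinite a (K.map L.mkQ) i :=
  hinf.right_of_exact hK (Submodule.inclusion_injective _) (exact_inclusion_submoduleMap_mkQ K L)
    (L.mkQ.submoduleMap_surjective K)

lemma ExtFinite.of_lsmul {x : R} (hx : x ∈ a) {K L : Submodule R X}
    (hK : LinearMap.ker (LinearMap.lsmul R X x) = K)
    (hL : LinearMap.range (LinearMap.lsmul R X x) = L)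
    (h0 : ExtFinite a X 0) (hextK : ∀ i, ExtFinite a K i) (hinf : ∀ i, ExtFinite a ↥(K ⊓ L) i)
    (hsup : ∀ i, ExtFinite a (X ⧸ (L ⊔ K)) i) (i : ℕ) : ExtFinite a X i := by
  subst hK hL
  refine of_ker_of_quotient_range hx hextK (fun j => ?_) h0 i
  exact of_submodule_quotient ((hinf (j + 1)).map_mkQ (hextK j))
    ((hsup j).of_linearEquiv (Submodule.quotientQuotientEquivQuotientSup _ _).symm)

lemma ExtFinite.of_supportDim_le_zero
    (hX : Module.support R X ⊆ PrimeSpectrum.zeroLocus (a : Set R))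
    (hdim : Module.supportDim R X ≤ 0) (h0 : ExtFinite a X 0) (i : ℕ) : ExtFinite a X i := by
  induction h : Module.annihilator R X using WellFoundedGT.induction generalizing X i with
  | ind I ih =>
    subst h
    obtain hfin | ⟨x, hxa, hxX, hx⟩ :=
      finite_or_exists_lt_of_mem_support_quotient hX (extFinite_zero_iff.1 h0)
    · exact .of_finite a X i
    have hsub (N : Submodule R X) (hN : N ≤ LinearMap.ker (LinearMap.lsmul R X x)) (j : ℕ) :
        ExtFinite a N j :=
      ih _ (annihilator_lt_of_le_ker_lsmul hxX hN)
        ((Module.support_subset_of_injective _ N.subtype_injective).trans hX)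
        ((Module.supportDim_le_of_injective _ N.subtype_injective).trans hdim)
        h0.submodule_zero j rfl
    have := subsingleton_of_forall_exists_lt hdim hx
    exact .of_lsmul hxa rfl rfl h0 (hsub _ le_rfl) (hsub _ inf_le_left) (.of_finite a _) i

lemma ExtFinite.of_supportDim_le_one
    (hX : Module.support R X ⊆ PrimeSpectrum.zeroLocus (a : Set R))
    (hdim : Module.supportDim R X ≤ 1) (h0 : ExtFinite a X 0) (h1 : ExtFinite a X 1) (i : ℕ) :
    ExtFinite a X i := by
  induction h : Module.annihilator R X using WellFoundedGT.induction generalizing X i with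
  | ind I ih =>
    subst h
    obtain hfin | ⟨x, hxa, hxX, hx⟩ :=
      finite_or_exists_lt_of_mem_support_quotient hX (extFinite_zero_iff.1 h0)
    · exact .of_finite a X i
    let φ := LinearMap.lsmul R X x
    let L := LinearMap.range φ
    let K := LinearMap.ker φ
    have hsub (N : Submodule R X) (hN : N ≤ K) (hN1 : ExtFinite a N 1) (j : ℕ) : ExtFinite a N j :=
      ih _ (annihilator_lt_of_le_ker_lsmul hxX hN)
        ((Module.support_subset_of_injective _ N.subtype_injective).trans hX)
        ((Module.supportDim_le_of_injective _ N.subtype_injective).trans hdim)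
        h0.submodule_zero hN1 j rfl
    have hK : ∀ j, ExtFinite a K j :=
      hsub K le_rfl (h1.left_of_exact h0.submodule_zero K.subtype_injective
        (exact_ker_subtype_rangeRestrict φ) φ.surjective_rangeRestrict)
    have hL : ExtFinite a L 1 :=
      (hK 2).right_of_exact h1 K.subtype_injective
        (exact_ker_subtype_rangeRestrict φ) φ.surjective_rangeRestrict
    have hQ : ExtFinite a (X ⧸ L) 0 := hL.quotient h0
    have hinf : ∀ j, ExtFinite a ↥(K ⊓ L) j :=
      hsub _ inf_le_left ((hK 1).left_of_exact hQ.submodule_zero (Submodule.inclusion_injective _)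
        (exact_inclusion_submoduleMap_mkQ K L) (L.mkQ.submoduleMap_surjective K))
    have hsup : ExtFinite a (X ⧸ (L ⊔ K)) 0 :=
      (((hinf 2).map_mkQ (hK 1)).quotient hQ).of_linearEquiv
        (Submodule.quotientQuotientEquivQuotientSup L K)
    exact .of_lsmul hxa rfl rfl h0 hK hinf (.of_supportDim_le_zero
      ((Module.support_subset_of_surjective _ (Submodule.mkQ_surjective _)).trans hX)
      (supportDim_le_zero_of_forall_exists_lt hdim hx) hsup) i

lemma ExtFinite.of_fg_of_supportDim_quotient_le_one {N : Submodule R X} (hN : N.FG)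
    (hX : Module.support R X ⊆ PrimeSpectrum.zeroLocus (a : Set R))
    (hdim : Module.supportDim R (X ⧸ N) ≤ 1) (h0 : ExtFinite a X 0) (h1 : ExtFinite a X 1)
    (i : ℕ) : ExtFinite a X i := by
  have := Module.Finite.iff_fg.2 hN
  refine .of_submodule_quotient (.of_finite a N i) (.of_supportDim_le_one ?_ hdim ?_ ?_ i)
  · exact (Module.support_subset_of_surjective _ N.mkQ_surjective).trans hX
  · exact .quotient (.of_finite a N 1) h0
  · exact .quotient (.of_finite a N 2) h1

end Cofinite

section DirectLimit

variable {R ι : Type*} [CommRing R] [Preorder ι] [DecidableEq ι] [IsDirectedOrder ι] [Nonempty ι]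
  {G G' G'' : ι → Type*} [∀ k, AddCommGroup (G k)] [∀ k, Module R (G k)]
  [∀ k, AddCommGroup (G' k)] [∀ k, Module R (G' k)] [∀ k, AddCommGroup (G'' k)]
  [∀ k, Module R (G'' k)] {f : ∀ k l, k ≤ l → G k →ₗ[R] G l}
  {f' : ∀ k l, k ≤ l → G' k →ₗ[R] G' l} {f'' : ∀ k l, k ≤ l → G'' k →ₗ[R] G'' l}
  [DirectedSystem G'' (f'' · · ·)]

lemma directLimit_map_exact {g : ∀ k, G k →ₗ[R] G' k} {g' : ∀ k, G' k →ₗ[R] G'' k}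
    (hg : ∀ k l h, g l ∘ₗ f k l h = f' k l h ∘ₗ g k)
    (hg' : ∀ k l h, g' l ∘ₗ f' k l h = f'' k l h ∘ₗ g' k)
    (hexact : ∀ k, Function.Exact (g k) (g' k)) :
    Function.Exact (Module.DirectLimit.map g hg) (Module.DirectLimit.map g' hg') := by
  intro z
  constructor
  · intro hz
    obtain ⟨k, y, rfl⟩ := Module.DirectLimit.exists_of z
    rw [Module.DirectLimit.map_apply_of] at hz
    obtain ⟨l, hkl, hl⟩ := Module.DirectLimit.of.zero_exact hz
    obtain ⟨x, hx⟩ := (hexact l _).1 ((LinearMap.congr_fun (hg' k l hkl) y).trans hl)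
    exact ⟨Module.DirectLimit.of R ι G f l x, by
      rw [Module.DirectLimit.map_apply_of, hx, Module.DirectLimit.of_f]⟩
  · rintro ⟨w, rfl⟩
    obtain ⟨k, x, rfl⟩ := Module.DirectLimit.exists_of w
    rw [Module.DirectLimit.map_apply_of, Module.DirectLimit.map_apply_of,
      (hexact k).apply_apply_eq_zero, map_zero]

end DirectLimit

section LocalCohomologyModule

variable {R : Type u} [CommRing R] (a : Ideal R) (X : Type u) [AddCommGroup X] [Module R X] (i : ℕ)

/-- The map `Ext^i(R/a^k, X) → Ext^i(R/a^l, X)` induced by the projection `R/a^l → R/a^k`. -/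
noncomputable def extTransition (k l : ℕ) (h : k ≤ l) :
    ExtModule R (R ⧸ a ^ k) X i →ₗ[R] ExtModule R (R ⧸ a ^ l) X i :=
  extPrecomp (Submodule.factor (Ideal.pow_le_pow_right h)) X i

instance : DirectedSystem (fun k => ExtModule R (R ⧸ a ^ k) X i) (extTransition a X i · · ·) where
  map_self k x := by
    rw [extTransition, Submodule.factor, Submodule.mapQ_id, extPrecomp_id]
  map_map k l m hkl hlm x := by
    simp only [extTransition, ← extPrecomp_comp, Submodule.factor_comp]

/-- `H^i_a(X)` as the concrete direct limit of the modules `Ext^i(R/a^k, X)`. -/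
abbrev LocalCohomologyModule : Type u :=
  Module.DirectLimit (fun k => ExtModule R (R ⧸ a ^ k) X i) (extTransition a X i)

end LocalCohomologyModule

section LocalCohomologyEquiv

open Limits Opposite

variable {R : Type u} [CommRing R] (a : Ideal R) (M : ModuleCat.{u} R) (i : ℕ)

/-- The diagram of the modules `Ext^i(R/a^k, M)` whose colimit is `(localCohomology a i).obj M`. -/
noncomputable abbrev extDiagram : ℕᵒᵖᵒᵖ ⥤ ModuleCat.{u} R :=
  localCohomology.diagram (localCohomology.idealPowersDiagram a) i ⋙ (evaluation _ _).obj M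

/-- The colimit cocone on `extDiagram a M i` with point `(localCohomology a i).obj M`. -/
noncomputable def localCohomologyCocone : Cocone (extDiagram a M i) :=
  have := localCohomology.hasColimitDiagram.{u, 0} (localCohomology.idealPowersDiagram a) i
  ((evaluation _ _).obj M).mapCocone (colimit.cocone _)

/-- `localCohomologyCocone` is a colimit since evaluation at `M` preserves colimits. -/
noncomputable def isColimitLocalCohomologyCocone : IsColimit (localCohomologyCocone a M i) :=
  have := localCohomology.hasColimitDiagram.{u, 0} (localCohomology.idealPowersDiagram a) i
  isColimitOfPreserves _ (colimit.isColimit _)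

lemma extDiagram_map_extEquiv {k l : ℕ} (f : op (op k) ⟶ op (op l)) (h : k ≤ l)
    (x : ExtModule R (R ⧸ a ^ k) M i) :
    (extDiagram a M i).map f (extEquiv _ M i x) = extEquiv _ M i (extTransition a M i k l h x) :=
  extEquiv_naturality M i (ModuleCat.ofHom (Submodule.factor (Ideal.pow_le_pow_right h))) x

/-- The map from `Ext^i(R/a^k, M)` to the colimit defining `(localCohomology a i).obj M`. -/
noncomputable def toLocalCohomology (k : ℕ) :
    ExtModule R (R ⧸ a ^ k) M i →ₗ[R] (localCohomology a i).obj M :=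
  ((localCohomologyCocone a M i).ι.app (op (op k))).hom ∘ₗ (extEquiv _ M i).toLinearMap

lemma toLocalCohomology_extTransition (k l : ℕ) (h : k ≤ l) (x : ExtModule R (R ⧸ a ^ k) M i) :
    toLocalCohomology a M i l (extTransition a M i k l h x) = toLocalCohomology a M i k x := by
  let f : op (op k) ⟶ op (op l) := (homOfLE h).op.op
  exact (congrArg ((localCohomologyCocone a M i).ι.app (op (op l)))
    (extDiagram_map_extEquiv a M i f h x).symm).trans
      (ConcreteCategory.congr_hom ((localCohomologyCocone a M i).w f) _)

instance : PreservesFilteredColimitsOfSize.{0, 0} (forget (ModuleCat.{u} R)) :=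
  preservesFilteredColimitsOfSize_shrink.{0, u, 0, u} _

lemma exists_extTransition_eq_zero {k : ℕ} {x : ExtModule R (R ⧸ a ^ k) M i}
    (hx : toLocalCohomology a M i k x = 0) : ∃ l h, extTransition a M i k l h x = 0 := by
  have hx' : (localCohomologyCocone a M i).ι.app (op (op k)) (extEquiv _ M i x) =
      (localCohomologyCocone a M i).ι.app (op (op k)) 0 := hx.trans (map_zero _).symm
  obtain ⟨j, f, g, hfg⟩ := (Concrete.isColimit_rep_eq_iff_exists _
    (isColimitLocalCohomologyCocone a M i) _ _).1 hx'
  refine ⟨j.unop.unop, f.unop.unop.down.down, (extEquiv _ M i).injective ?_⟩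
  rw [← extDiagram_map_extEquiv a M i f, hfg]
  exact (map_zero ((extDiagram a M i).map g).hom).trans (map_zero _).symm

lemma exists_toLocalCohomology_eq (y : (localCohomology a i).obj M) :
    ∃ k x, toLocalCohomology a M i k x = y := by
  obtain ⟨j, z, rfl⟩ :=
    Concrete.isColimit_exists_rep _ (isColimitLocalCohomologyCocone a M i) y
  obtain ⟨x, rfl⟩ := (extEquiv _ M i).surjective z
  exact ⟨j.unop.unop, x, rfl⟩

/-- The direct limit `LocalCohomologyModule` is Mathlib's local cohomology, which is defined as a
colimit in the category of functors. -/
noncomputable def localCohomologyEquiv :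
    LocalCohomologyModule a M i ≃ₗ[R] (localCohomology a i).obj M :=
  LinearEquiv.ofBijective
    (Module.DirectLimit.lift R ℕ _ _ (toLocalCohomology a M i)
      (toLocalCohomology_extTransition a M i)) <| by
    refine ⟨(injective_iff_map_eq_zero _).2 fun z hz => ?_, fun y => ?_⟩
    · obtain ⟨k, x, rfl⟩ := Module.DirectLimit.exists_of z
      rw [Module.DirectLimit.lift_of] at hz
      obtain ⟨l, hkl, hx⟩ := exists_extTransition_eq_zero a M i hz
      rw [← Module.DirectLimit.of_f (hij := hkl), hx, map_zero]
    · obtain ⟨k, x, rfl⟩ := exists_toLocalCohomology_eq a M i y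
      exact ⟨Module.DirectLimit.of R ℕ _ _ k x, Module.DirectLimit.lift_of _ _ _⟩

end LocalCohomologyEquiv

section PowTorsion

variable {R : Type*} [CommRing R] (a : Ideal R) (X : Type*) [AddCommGroup X] [Module R X]

/-- The submodule `Γ_a(X)` of elements of `X` annihilated by a power of `a`. The module `X` is
`a`-torsion if it is all of `X` and `a`-torsion-free if it is zero. -/
def powTorsion : Submodule R X :=
  ⨆ k : ℕ, Submodule.torsionBySet R X (a ^ k : Ideal R)

lemma torsionBySet_pow_le_powTorsion (k : ℕ) :
    Submodule.torsionBySet R X (a ^ k : Ideal R) ≤ powTorsion a X :=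
  le_iSup (fun k : ℕ => Submodule.torsionBySet R X (a ^ k : Ideal R)) k

lemma monotone_torsionBySet_pow :
    Monotone fun k : ℕ => Submodule.torsionBySet R X (a ^ k : Ideal R) :=
  fun k l h => Submodule.torsionBySet_le_torsionBySet_pow k l h a

variable {a X}

lemma mem_powTorsion {x : X} : x ∈ powTorsion a X ↔ ∃ k : ℕ, ∀ r ∈ a ^ k, r • x = 0 := by
  simp only [powTorsion,
    Submodule.mem_iSup_of_directed _ (monotone_torsionBySet_pow a X).directed_le,
    Submodule.mem_torsionBySet_iff, SetLike.coe_sort_coe, Subtype.forall]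

lemma comap_powTorsion_of_injective {Y : Type*} [AddCommGroup Y] [Module R Y] {f : X →ₗ[R] Y}
    (hf : Function.Injective f) : (powTorsion a Y).comap f = powTorsion a X := by
  ext x
  simp only [Submodule.mem_comap, mem_powTorsion, ← map_smul, map_eq_zero_iff f hf]

lemma powTorsion_powTorsion : powTorsion a (powTorsion a X) = ⊤ := by
  rw [← comap_powTorsion_of_injective (Submodule.subtype_injective _), Submodule.comap_subtype_self]

lemma torsionBySet_pow_eq_bot (h : powTorsion a X = ⊥) (k : ℕ) :
    Submodule.torsionBySet R X (a ^ k : Ideal R) = ⊥ :=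
  eq_bot_iff.2 (h ▸ torsionBySet_pow_le_powTorsion a X k)

lemma torsionBySet_eq_bot (h : powTorsion a X = ⊥) : Submodule.torsionBySet R X a = ⊥ := by
  simpa only [pow_one] using torsionBySet_pow_eq_bot h 1

lemma exists_le_torsionBySet_pow {N : Submodule R X} (hN : N.FG) (h : N ≤ powTorsion a X) :
    ∃ k : ℕ, N ≤ Submodule.torsionBySet R X (a ^ k : Ideal R) := by
  obtain ⟨_, ⟨k, rfl⟩, hk⟩ := (Submodule.fg_iff_compact N).1 hN _ _ (Set.range_nonempty _)
    (monotone_torsionBySet_pow a X).directed_le.directedOn_range isLUB_iSup h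
  exact ⟨k, hk⟩

lemma powTorsion_quotient_powTorsion [IsNoetherianRing R] :
    powTorsion a (X ⧸ powTorsion a X) = ⊥ := by
  refine eq_bot_iff.2 fun x hx => ?_
  obtain ⟨m, rfl⟩ := Submodule.Quotient.mk_surjective _ x
  obtain ⟨k, hk⟩ := mem_powTorsion.1 hx
  have hle : Submodule.map (LinearMap.toSpanSingleton R X m) (a ^ k) ≤ powTorsion a X := by
    rintro _ ⟨r, hr, rfl⟩
    exact (Submodule.Quotient.mk_eq_zero _).1 (hk r hr)
  obtain ⟨l, hl⟩ := exists_le_torsionBySet_pow ((IsNoetherian.noetherian (a ^ k)).map _) hle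
  have hmul : a ^ l * a ^ k ≤ LinearMap.ker (LinearMap.toSpanSingleton R X m) :=
    Ideal.mul_le.2 fun c hc d hd => (mul_smul c d m).trans <|
      (Submodule.mem_torsionBySet_iff _ _).1 (hl (Submodule.mem_map_of_mem hd)) ⟨c, hc⟩
  exact (Submodule.Quotient.mk_eq_zero _).2
    (mem_powTorsion.2 ⟨l + k, fun r hr => hmul (pow_add a l k ▸ hr)⟩)

lemma powTorsion_quotient_eq_top (h : powTorsion a X = ⊤) (N : Submodule R X) :
    powTorsion a (X ⧸ N) = ⊤ := by
  refine eq_top_iff.2 fun x _ => ?_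
  obtain ⟨m, rfl⟩ := Submodule.Quotient.mk_surjective _ x
  obtain ⟨k, hk⟩ := mem_powTorsion.1 (h ▸ Submodule.mem_top : m ∈ powTorsion a X)
  exact mem_powTorsion.2 ⟨k, fun r hr => congrArg N.mkQ (hk r hr)⟩

lemma support_subset_zeroLocus_of_powTorsion_eq_top (h : powTorsion a X = ⊤) :
    Module.support R X ⊆ PrimeSpectrum.zeroLocus (a : Set R) := by
  intro p hp
  obtain ⟨x, hx⟩ := Module.mem_support_iff_exists_annihilator.1 hp
  obtain ⟨k, hk⟩ := mem_powTorsion.1 (h ▸ Submodule.mem_top : x ∈ powTorsion a X)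
  exact p.2.le_of_pow_le (n := k) fun r hr =>
    hx ((Submodule.mem_annihilator_span_singleton _ _).2 (hk r hr))

end PowTorsion

section InjectiveModule

variable {R : Type u} [CommRing R] {X Y E : Type u} [AddCommGroup X] [Module R X]
  [AddCommGroup Y] [Module R Y] [AddCommGroup E] [Module R E]

lemma exists_comp_eq_of_ker_le [Module.Injective R E] (f : X →ₗ[R] Y) (g : X →ₗ[R] E)
    (h : LinearMap.ker f ≤ LinearMap.ker g) : ∃ g' : Y →ₗ[R] E, g' ∘ₗ f = g := by
  obtain ⟨g', hg'⟩ := Module.Injective.extension_property R E _ _ ((LinearMap.ker f).liftQ f le_rfl)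
    (LinearMap.ker_eq_bot.1 (Submodule.ker_liftQ_eq_bot _ _ _ le_rfl)) ((LinearMap.ker f).liftQ g h)
  refine ⟨g', LinearMap.ext fun x => ?_⟩
  exact LinearMap.congr_fun hg' (Submodule.Quotient.mk x)

variable (R X) in
lemma exists_injective_module :
    ∃ (E : Type u) (_ : AddCommGroup E) (_ : Module R E) (j : X →ₗ[R] E),
      Module.Injective R E ∧ Function.Injective j := by
  let E : ModuleCat.{u} R := Injective.under (ModuleCat.of R X)
  let j : ModuleCat.of R X ⟶ E := Injective.ι _
  have : Injective (ModuleCat.of R E) := inferInstanceAs (Injective (Injective.under _))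
  exact ⟨E, inferInstance, inferInstance, j.hom, Module.injective_module_of_injective_object R E,
    (ModuleCat.mono_iff_injective j).1 inferInstance⟩

variable [IsNoetherianRing R] {a : Ideal R}

lemma exists_comap_pow_smul_top_le [Module.Finite R X] (N : Submodule R X) (k : ℕ) :
    ∃ n, (a ^ n • ⊤ : Submodule R X).comap N.subtype ≤ a ^ k • ⊤ := by
  obtain ⟨m, hm⟩ := Ideal.exists_pow_inf_eq_pow_smul a N
  refine ⟨m + k, (Submodule.map_le_map_iff_of_injective N.injective_subtype _ _).1 ?_⟩
  rw [Submodule.map_comap_subtype, Submodule.map_smul'', Submodule.map_subtype_top, inf_comm,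
    hm _ le_self_add, add_tsub_cancel_left]
  exact smul_mono_right _ inf_le_right

instance injective_powTorsion [Module.Injective R E] : Module.Injective R (powTorsion a E) := by
  refine Module.Baer.injective fun I g => ?_
  obtain ⟨k, hk⟩ := exists_le_torsionBySet_pow (Module.Finite.iff_fg.1 (Module.Finite.range g))
    (powTorsion_powTorsion (a := a) (X := E) ▸ le_top)
  obtain ⟨n, hn⟩ := exists_comap_pow_smul_top_le (a := a) I k
  have hker : LinearMap.ker ((a ^ n).mkQ ∘ₗ I.subtype) ≤
      LinearMap.ker ((powTorsion a E).subtype ∘ₗ g) := by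
    intro x hx
    have hx' : x ∈ (a ^ k • ⊤ : Submodule R I) := hn <| by
      simpa only [Submodule.mem_comap, smul_eq_mul, Ideal.mul_top] using
        (Submodule.Quotient.mk_eq_zero _).1 hx
    have hle : (a ^ k • ⊤ : Submodule R I) ≤ LinearMap.ker g := Submodule.smul_le.2 fun r hr y _ =>
      (map_smul g r y).trans <|
        (Submodule.mem_torsionBySet_iff _ _).1 (hk (LinearMap.mem_range_self g y)) ⟨r, hr⟩
    exact congrArg Subtype.val (hle hx')
  obtain ⟨h, hh⟩ := exists_comp_eq_of_ker_le _ _ hker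
  refine ⟨(h ∘ₗ (a ^ n).mkQ).codRestrict _ fun c => mem_powTorsion.2 ⟨n, fun r hr => ?_⟩,
    fun x hx => Subtype.ext (LinearMap.congr_fun hh ⟨x, hx⟩)⟩
  rw [← map_smul, LinearMap.comp_apply, Submodule.mkQ_apply, smul_eq_mul,
    (Submodule.Quotient.mk_eq_zero _).2 ((a ^ n).mul_mem_right c hr), map_zero]

instance injective_quotient_powTorsion [Module.Injective R E] :
    Module.Injective R (E ⧸ powTorsion a E) := by
  obtain ⟨ρ, hρ⟩ := Module.Injective.extension_property R (powTorsion a E) _ _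
    (powTorsion a E).subtype (Submodule.subtype_injective _) LinearMap.id
  have hker : powTorsion a E ≤ LinearMap.ker (LinearMap.id - (powTorsion a E).subtype ∘ₗ ρ) :=
    fun x hx => sub_eq_zero.2 (congrArg Subtype.val (LinearMap.congr_fun hρ ⟨x, hx⟩)).symm
  refine ⟨fun Y Z _ _ _ _ f hf g => ?_⟩
  obtain ⟨h, hh⟩ := Module.Injective.out f hf ((powTorsion a E).liftQ _ hker ∘ₗ g)
  refine ⟨(powTorsion a E).mkQ ∘ₗ h, fun y => ?_⟩
  obtain ⟨e, he⟩ := Submodule.Quotient.mk_surjective _ (g y)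
  rw [LinearMap.comp_apply, hh, LinearMap.comp_apply, ← he]
  exact (Submodule.Quotient.eq _).2 (by simp)

lemma exists_injective_module_of_powTorsion_eq_bot (h : powTorsion a X = ⊥) :
    ∃ (E : Type u) (_ : AddCommGroup E) (_ : Module R E) (j : X →ₗ[R] E),
      Module.Injective R E ∧ powTorsion a E = ⊥ ∧ Function.Injective j := by
  obtain ⟨E, _, _, j, _, hj⟩ := exists_injective_module R X
  refine ⟨E ⧸ powTorsion a E, inferInstance, inferInstance, (powTorsion a E).mkQ ∘ₗ j,
    inferInstance, powTorsion_quotient_powTorsion, LinearMap.ker_eq_bot.1 ?_⟩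
  rw [LinearMap.ker_comp, Submodule.ker_mkQ, comap_powTorsion_of_injective hj, h]

lemma exists_injective_module_of_powTorsion_eq_top (h : powTorsion a X = ⊤) :
    ∃ (E : Type u) (_ : AddCommGroup E) (_ : Module R E) (j : X →ₗ[R] E),
      Module.Injective R E ∧ powTorsion a E = ⊤ ∧ Function.Injective j := by
  obtain ⟨E, _, _, j, _, hj⟩ := exists_injective_module R X
  have hrange (x : X) : j x ∈ powTorsion a E := by
    rw [← Submodule.mem_comap, comap_powTorsion_of_injective hj, h]
    exact Submodule.mem_top
  exact ⟨powTorsion a E, inferInstance, inferInstance, j.codRestrict _ hrange, inferInstance,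
    powTorsion_powTorsion, (LinearMap.injective_codRestrict_iff hrange).2 hj⟩

end InjectiveModule

section ExtInjective

variable {R : Type u} [CommRing R] (A E : Type u) [AddCommGroup A] [Module R A] [AddCommGroup E]
  [Module R E] [Module.Injective R E]

lemma subsingleton_ext_succ_of_injective (i : ℕ) : Subsingleton (ExtModule R A E (i + 1)) :=
  have := Module.injective_object_of_injective_module R E
  ⟨fun x y => (Abelian.Ext.eq_zero_of_injective x).trans (Abelian.Ext.eq_zero_of_injective y).symm⟩

variable {E}

lemma subsingleton_ext_of_torsionBySet_eq_bot {J : Ideal R}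
    (h : Submodule.torsionBySet R E J = ⊥) (i : ℕ) : Subsingleton (ExtModule R (R ⧸ J) E i) := by
  cases i with
  | zero =>
    have := Submodule.subsingleton_iff_eq_bot.2 h
    exact (extZeroEquiv (R ⧸ J) E ≪≫ₗ homQuotientEquiv J E).toEquiv.subsingleton
  | succ i => exact subsingleton_ext_succ_of_injective _ E i

end ExtInjective

section LocalCohomologySequence

variable {R : Type u} [CommRing R] (a : Ideal R) {X Y Z : Type u} [AddCommGroup X] [Module R X]
  [AddCommGroup Y] [Module R Y] [AddCommGroup Z] [Module R Z]

/-- The map `H^i_a(X) → H^i_a(Y)` induced by `f : X → Y`. -/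
noncomputable def localCohomologyMap (f : X →ₗ[R] Y) (i : ℕ) :
    LocalCohomologyModule a X i →ₗ[R] LocalCohomologyModule a Y i :=
  Module.DirectLimit.map (fun k => extPostcomp (R ⧸ a ^ k) f i) fun _ _ _ =>
    LinearMap.ext fun x => (extPrecomp_extPostcomp _ f i x).symm

variable {f : X →ₗ[R] Y} {g : Y →ₗ[R] Z} (hf : Function.Injective f) (hfg : Function.Exact f g)
  (hg : Function.Surjective g)

/-- The connecting map `H^i_a(Z) → H^{i+1}_a(X)` of a short exact sequence `0 → X → Y → Z → 0`. -/
noncomputable def localCohomologyConnecting (i : ℕ) :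
    LocalCohomologyModule a Z i →ₗ[R] LocalCohomologyModule a X (i + 1) :=
  Module.DirectLimit.map (fun k => extConnecting (R ⧸ a ^ k) hf hfg hg i) fun _ _ _ =>
    LinearMap.ext fun x => (extPrecomp_extConnecting hf hfg hg _ i x).symm

include hf hfg hg in
lemma localCohomologyMap_exact (i : ℕ) :
    Function.Exact (localCohomologyMap a f i) (localCohomologyMap a g i) :=
  directLimit_map_exact _ _ fun k => extPostcomp_exact (R ⧸ a ^ k) hf hfg hg i

lemma localCohomologyMap_connecting_exact (i : ℕ) :
    Function.Exact (localCohomologyMap a g i) (localCohomologyConnecting a hf hfg hg i) :=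
  directLimit_map_exact _ _ fun k => extPostcomp_extConnecting_exact (R ⧸ a ^ k) hf hfg hg i

lemma localCohomologyConnecting_map_exact (i : ℕ) :
    Function.Exact (localCohomologyConnecting a hf hfg hg i) (localCohomologyMap a f (i + 1)) :=
  directLimit_map_exact _ _ fun k => extConnecting_extPostcomp_exact (R ⧸ a ^ k) hf hfg hg i

lemma subsingleton_localCohomologyModule {i : ℕ}
    (h : ∀ k, Subsingleton (ExtModule R (R ⧸ a ^ k) X i)) :
    Subsingleton (LocalCohomologyModule a X i) := by
  refine subsingleton_of_forall_eq 0 fun z => ?_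
  obtain ⟨k, x, rfl⟩ := Module.DirectLimit.exists_of z
  rw [Subsingleton.elim x 0, map_zero]

/-- The connecting isomorphism `H^i_a(Z) ≃ H^{i+1}_a(X)` of a short exact sequence
`0 → X → Y → Z → 0` with `H^i_a(Y) = 0` and `H^{i+1}_a(Y) = 0`. -/
noncomputable def localCohomologyShift (i : ℕ) (hY : Subsingleton (LocalCohomologyModule a Y i))
    (hY' : Subsingleton (LocalCohomologyModule a Y (i + 1))) :
    LocalCohomologyModule a Z i ≃ₗ[R] LocalCohomologyModule a X (i + 1) :=
  LinearEquiv.ofBijective (localCohomologyConnecting a hf hfg hg i) <| by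
    refine ⟨(injective_iff_map_eq_zero _).2 fun z hz => ?_, fun x => ?_⟩
    · obtain ⟨y, rfl⟩ := (localCohomologyMap_connecting_exact a hf hfg hg i z).1 hz
      rw [Subsingleton.elim y 0, map_zero]
    · exact (localCohomologyConnecting_map_exact a hf hfg hg i x).1 (Subsingleton.elim _ _)

/-- The isomorphism `H^i_a(Y) ≃ H^i_a(Z)` induced by a short exact sequence `0 → X → Y → Z → 0`
with `H^i_a(X) = 0` and `H^{i+1}_a(X) = 0`. -/
noncomputable def localCohomologyMapEquiv (i : ℕ)
    (hX : Subsingleton (LocalCohomologyModule a X i))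
    (hX' : Subsingleton (LocalCohomologyModule a X (i + 1))) :
    LocalCohomologyModule a Y i ≃ₗ[R] LocalCohomologyModule a Z i :=
  LinearEquiv.ofBijective (localCohomologyMap a g i) <| by
    refine ⟨(injective_iff_map_eq_zero _).2 fun y hy => ?_, fun z => ?_⟩
    · obtain ⟨x, rfl⟩ := (localCohomologyMap_exact a hf hfg hg i y).1 hy
      rw [Subsingleton.elim x 0, map_zero]
    · exact (localCohomologyMap_connecting_exact a hf hfg hg i z).1 (Subsingleton.elim _ _)

end LocalCohomologySequence

section LocalCohomologyZero

variable {R : Type u} [CommRing R] (a : Ideal R) (X : Type u) {Y : Type u} [AddCommGroup X]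
  [Module R X] [AddCommGroup Y] [Module R Y]

lemma powTorsion_localCohomologyModule (i : ℕ) :
    powTorsion a (LocalCohomologyModule a X i) = ⊤ := by
  refine eq_top_iff.2 fun z _ => ?_
  obtain ⟨k, x, rfl⟩ := Module.DirectLimit.exists_of z
  refine mem_powTorsion.2 ⟨k, fun r hr => ?_⟩
  rw [← map_smul, smul_ext_quotient_eq_zero hr i x, map_zero]

/-- Evaluation at `1`, from `Ext^0(R/a^k, X) = Hom(R/a^k, X)` to the `a`-torsion of `X`. -/
noncomputable def extZeroToPowTorsion (k : ℕ) :
    ExtModule R (R ⧸ a ^ k) X 0 →ₗ[R] powTorsion a X :=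
  Submodule.inclusion (torsionBySet_pow_le_powTorsion a X k) ∘ₗ
    (extZeroEquiv (R ⧸ a ^ k) X ≪≫ₗ homQuotientEquiv (a ^ k) X).toLinearMap

lemma extZeroToPowTorsion_extTransition (k l : ℕ) (h : k ≤ l)
    (x : ExtModule R (R ⧸ a ^ k) X 0) :
    extZeroToPowTorsion a X l (extTransition a X 0 k l h x) = extZeroToPowTorsion a X k x :=
  Subtype.ext (LinearMap.congr_fun (extZeroEquiv_extPrecomp _ x) 1)

/-- `H^0_a(X) ≃ Γ_a(X)`. -/
noncomputable def localCohomologyZeroEquiv : LocalCohomologyModule a X 0 ≃ₗ[R] powTorsion a X :=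
  LinearEquiv.ofBijective
    (Module.DirectLimit.lift R ℕ _ _ (extZeroToPowTorsion a X)
      (extZeroToPowTorsion_extTransition a X)) <| by
    refine ⟨Module.DirectLimit.lift_injective _ _ fun k => ?_, fun x => ?_⟩
    · exact (Submodule.inclusion_injective (torsionBySet_pow_le_powTorsion a X k)).comp
        (extZeroEquiv (R ⧸ a ^ k) X ≪≫ₗ homQuotientEquiv (a ^ k) X).injective
    · obtain ⟨k, hk⟩ := mem_powTorsion.1 x.2
      let y : Submodule.torsionBySet R X (a ^ k : Ideal R) :=
        ⟨x, (Submodule.mem_torsionBySet_iff _ _).2 fun r => hk r r.2⟩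
      refine ⟨Module.DirectLimit.of R ℕ _ _ k
        ((extZeroEquiv (R ⧸ a ^ k) X ≪≫ₗ homQuotientEquiv (a ^ k) X).symm y), ?_⟩
      rw [Module.DirectLimit.lift_of]
      exact congrArg (Submodule.inclusion (torsionBySet_pow_le_powTorsion a X k))
        (LinearEquiv.apply_symm_apply _ y)

lemma localCohomologyZeroEquiv_of (k : ℕ) (x : ExtModule R (R ⧸ a ^ k) X 0) :
    localCohomologyZeroEquiv a X (Module.DirectLimit.of R ℕ _ _ k x) =
      extZeroToPowTorsion a X k x :=
  Module.DirectLimit.lift_of _ (extZeroToPowTorsion_extTransition a X) x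

lemma localCohomologyZeroEquiv_localCohomologyMap (f : X →ₗ[R] Y)
    (x : LocalCohomologyModule a X 0) :
    (localCohomologyZeroEquiv a Y (localCohomologyMap a f 0 x) : Y) =
      f (localCohomologyZeroEquiv a X x) := by
  obtain ⟨k, x, rfl⟩ := Module.DirectLimit.exists_of x
  rw [localCohomologyMap, Module.DirectLimit.map_apply_of, localCohomologyZeroEquiv_of,
    localCohomologyZeroEquiv_of]
  exact LinearMap.congr_fun (extZeroEquiv_extPostcomp (R ⧸ a ^ k) f x) 1

lemma surjective_localCohomologyMap_zero {f : X →ₗ[R] Y} (hf : Function.Surjective f)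
    (h : powTorsion a X = ⊤) : Function.Surjective (localCohomologyMap a f 0) := by
  intro y
  obtain ⟨x, hx⟩ := hf (localCohomologyZeroEquiv a Y y)
  refine ⟨(localCohomologyZeroEquiv a X).symm ⟨x, h ▸ Submodule.mem_top⟩,
    (localCohomologyZeroEquiv a Y).injective (Subtype.ext ?_)⟩
  rw [localCohomologyZeroEquiv_localCohomologyMap, LinearEquiv.apply_symm_apply, hx]

end LocalCohomologyZero

section Support

variable {R : Type u} [CommRing R]

lemma support_localCohomology_subset (a : Ideal R) (M : ModuleCat.{u} R) (i : ℕ) :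
    Module.support R ((localCohomology a i).obj M) ⊆ PrimeSpectrum.zeroLocus (a : Set R) :=
  (localCohomologyEquiv a M i).support_eq ▸
    support_subset_zeroLocus_of_powTorsion_eq_top (powTorsion_localCohomologyModule a M i)

end Support

section PowTorsionVanishing

variable {R : Type u} [CommRing R] [IsNoetherianRing R] {a : Ideal R}

lemma subsingleton_localCohomologyModule_one {A : Type u} [AddCommGroup A] [Module R A]
    (h : powTorsion a A = ⊤) : Subsingleton (LocalCohomologyModule a A 1) := by
  obtain ⟨E, _, _, j, _, hE, hj⟩ := exists_injective_module_of_powTorsion_eq_top h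
  have hH : Subsingleton (LocalCohomologyModule a E 1) :=
    subsingleton_localCohomologyModule a fun k => subsingleton_ext_succ_of_injective _ E 0
  have hC := LinearMap.exact_map_mkQ_range j
  have hmkQ := (LinearMap.range j).mkQ_surjective
  refine subsingleton_of_forall_eq 0 fun x => ?_
  obtain ⟨z, rfl⟩ :=
    (localCohomologyConnecting_map_exact a hj hC hmkQ 0 x).1 (Subsingleton.elim _ _)
  exact (localCohomologyMap_connecting_exact a hj hC hmkQ 0 z).2
    (surjective_localCohomologyMap_zero a _ hmkQ hE z)

lemma subsingleton_localCohomologyModule_succ {A : Type u} [AddCommGroup A] [Module R A]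
    (h : powTorsion a A = ⊤) (i : ℕ) : Subsingleton (LocalCohomologyModule a A (i + 1)) := by
  induction i generalizing A with
  | zero => exact subsingleton_localCohomologyModule_one h
  | succ i ih =>
    obtain ⟨E, _, _, j, _, hE, hj⟩ := exists_injective_module_of_powTorsion_eq_top h
    have hH (i : ℕ) : Subsingleton (LocalCohomologyModule a E (i + 1)) :=
      subsingleton_localCohomologyModule a fun k => subsingleton_ext_succ_of_injective _ E i
    have := ih (powTorsion_quotient_eq_top hE (LinearMap.range j))
    exact (localCohomologyShift a hj (LinearMap.exact_map_mkQ_range j)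
      (Submodule.mkQ_surjective _) (i + 1) (hH i) (hH (i + 1))).symm.toEquiv.subsingleton

end PowTorsionVanishing

section Shift

variable {R : Type u} [CommRing R] [IsNoetherianRing R] {a : Ideal R} {X : Type u}
  [AddCommGroup X] [Module R X]

/-- Since `H^{i+1}_a` does not see `Γ_a(X)`, one may embed the torsion-free module `X/Γ_a(X)` into
a torsion-free injective module `E`, which has neither local cohomology nor `Ext^i(R/a, E)`, and
take the cokernel. -/
lemma exists_localCohomologyModule_equiv_succ (hX : ∀ i, ExtFinite a X i)
    (hΓ : ∀ i, ExtFinite a (powTorsion a X) i) :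
    ∃ (C : Type u) (_ : AddCommGroup C) (_ : Module R C), (∀ i, ExtFinite a C i) ∧
      ∀ i, Nonempty (LocalCohomologyModule a C i ≃ₗ[R] LocalCohomologyModule a X (i + 1)) := by
  obtain ⟨E, _, _, j, _, hE, hj⟩ := exists_injective_module_of_powTorsion_eq_bot
    (powTorsion_quotient_powTorsion (a := a) (X := X))
  have hext (k i : ℕ) : Subsingleton (ExtModule R (R ⧸ a ^ k) E i) :=
    subsingleton_ext_of_torsionBySet_eq_bot (torsionBySet_pow_eq_bot hE k) i
  have hH (i : ℕ) : Subsingleton (LocalCohomologyModule a E i) :=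
    subsingleton_localCohomologyModule a fun k => hext k i
  have hEfin (i : ℕ) : ExtFinite a E i := by
    have := subsingleton_ext_of_torsionBySet_eq_bot (torsionBySet_eq_bot hE) i
    exact Module.Finite.of_finite
  have hΓH := subsingleton_localCohomologyModule_succ (powTorsion_powTorsion (a := a) (X := X))
  have hC := LinearMap.exact_map_mkQ_range j
  refine ⟨E ⧸ LinearMap.range j, inferInstance, inferInstance, fun i => ?_, fun i => ⟨?_⟩⟩
  · exact ((hΓ (i + 2)).quotient (hX (i + 1))).right_of_exact (hEfin i) hj hC
      (Submodule.mkQ_surjective _)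
  · exact localCohomologyShift a hj hC (Submodule.mkQ_surjective _) i (hH i) (hH (i + 1)) ≪≫ₗ
      (localCohomologyMapEquiv a (Submodule.subtype_injective _)
        (LinearMap.exact_subtype_mkQ (powTorsion a X)) (Submodule.mkQ_surjective _) (i + 1)
        (hΓH i) (hΓH (i + 1))).symm

end Shift

section Cofiniteness

/-- `X` is an `FD_{≤ n}` module: the quotient by some finitely generated submodule has support of
dimension at most `n`. -/
def IsFD (R X : Type*) [CommRing R] [AddCommGroup X] [Module R X] (n : WithBot ℕ∞) : Prop :=
  ∃ N : Submodule R X, N.FG ∧ Module.supportDim R (X ⧸ N) ≤ n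

lemma IsFD.of_linearEquiv {R X Y : Type*} [CommRing R] [AddCommGroup X] [Module R X]
    [AddCommGroup Y] [Module R Y] {n : WithBot ℕ∞} (hX : IsFD R X n) (e : X ≃ₗ[R] Y) :
    IsFD R Y n := by
  obtain ⟨N, hN, hdim⟩ := hX
  exact ⟨N.map e.toLinearMap, hN.map _,
    (Module.supportDim_eq_of_equiv (Submodule.Quotient.equiv _ _ e rfl)).symm.trans_le hdim⟩

variable {R : Type u} [CommRing R] [IsNoetherianRing R] {a : Ideal R} {X : Type u}
  [AddCommGroup X] [Module R X]

lemma extFinite_powTorsion (hX0 : ExtFinite a X 0) (hX1 : ExtFinite a X 1)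
    (hFD : IsFD R (powTorsion a X) 1) (i : ℕ) : ExtFinite a (powTorsion a X) i := by
  obtain ⟨N, hN, hdim⟩ := hFD
  have hQ : ExtFinite a (X ⧸ powTorsion a X) 0 := by
    rw [extFinite_zero_iff, torsionBySet_eq_bot powTorsion_quotient_powTorsion]
    exact Submodule.fg_bot
  exact .of_fg_of_supportDim_quotient_le_one hN
    (support_subset_zeroLocus_of_powTorsion_eq_top powTorsion_powTorsion) hdim
    hX0.submodule_zero (hX1.submodule hQ) i

theorem extFinite_localCohomologyModule (hX : ∀ i, ExtFinite a X i) {t : ℕ}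
    (hFD : ∀ i < t, IsFD R (LocalCohomologyModule a X i) 1) :
    ∀ i < t, ∀ j, ExtFinite a (LocalCohomologyModule a X i) j := by
  induction t generalizing X with
  | zero => exact fun i hi => absurd hi i.not_lt_zero
  | succ t ih =>
    have hΓ := extFinite_powTorsion (hX 0) (hX 1)
      ((hFD 0 t.succ_pos).of_linearEquiv (localCohomologyZeroEquiv a X))
    obtain ⟨C, _, _, hC, e⟩ := exists_localCohomologyModule_equiv_succ hX hΓ
    have hCH := ih hC fun i hi => (hFD (i + 1) (by lia)).of_linearEquiv (e i).some.symm
    rintro (_ | i) hi j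
    · exact (hΓ j).of_linearEquiv (localCohomologyZeroEquiv a X).symm
    · exact (hCH i (by lia) j).of_linearEquiv (e i).some

end Cofiniteness

end CofiniteLocalCohomology

open CofiniteLocalCohomology in
theorem stmt11_general {R : Type u} [CommRing R] [IsNoetherianRing R] (a : Ideal R)
    (M : ModuleCat.{u} R) (hM : ∀ i, Module.Finite R (extQuot a i M)) (t : ℕ)
    (hFD : ∀ i < t, IsFD R ((localCohomology a i).obj M) 1) :
    ∀ i < t, IsCofinite a ((localCohomology a i).obj M) := by
  have hext := extFinite_localCohomologyModule (fun i => (finite_extQuot_iff a M i).1 (hM i))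
    fun i hi => (hFD i hi).of_linearEquiv (localCohomologyEquiv a M i).symm
  exact fun i hi => ⟨support_localCohomology_subset a M i, fun j =>
    (finite_extQuot_iff a _ j).2 ((hext i hi j).of_linearEquiv (localCohomologyEquiv a M i))⟩

theorem stmt11 {R : Type u} [CommRing R] [IsNoetherianRing R] (a : Ideal R)
    (n : ℕ) (hn : n ≤ 1) (M : ModuleCat.{u} R) (hM : Nontrivial M)
    (hfg : Module.Finite R M) (t : ℕ)
    (hFD : ∀ i < t, ∃ N : Submodule R ((localCohomology a i).obj M), N.FG ∧
      Order.krullDim (Module.support R (((localCohomology a i).obj M) ⧸ N)) ≤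
        (n : WithBot (WithTop ℕ))) :
    ∀ i < t, IsCofinite a ((localCohomology a i).obj M) :=
  stmt11_general a M
    (fun i => (CofiniteLocalCohomology.finite_extQuot_iff a M i).2 (.of_finite a M i)) t
    fun i hi => (hFD i hi).imp fun _ hN => ⟨hN.1, hN.2.trans (Nat.cast_le_one.2 hn)⟩
end

section
/- Let R be a commutative noetherian ring with identity, a an ideal of R, and n ∈ {0, 1}. Let M be a non-zero finitely generated R-module and t a non-negative integer such that the local cohomology module H^i_a(M) is FD_{≤ n} for every i < t. Then Ext^j_R(R/a, H^t_a(M)) is a finitely generated R-module for every j ≤ n. -/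
universe u

open CategoryTheory

/-! Dimension shifting along embeddings into injective modules shows that `Ext^0` and `Ext^1` of
`H^t_a(M)` are finite as soon as every `Ext` of every `H^i_a(M)` with `i < t` is. So it suffices
that an `a`-torsion module `Y` of dimension at most one has all `Ext^j_R(R/a, Y)` finitely
generated once `Ext^0` and `Ext^1` are. At a minimal prime of its support `Y` localizes to an
Artinian module, by Melkersson's criterion, and there are finitely many such primes, since they are
associated primes of `(0 :_Y a)`. Hence, for `x ∈ a` and `w = x^n` with `n` large, `w Y / w² Y` has
smaller dimension than `Y`; the kernels of `w` on `Y` and on `w Y` have a larger annihilator as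
long as `w` does not kill `Y`, and multiplication by `w` is zero on `Ext_R(R/a, -)`. An induction
on the dimension and on the annihilator concludes. -/

section ExtComparison

variable {R : Type u} [CommRing R] {X X' : ModuleCat.{u} R}

/-- The cochain complex `Hom(P, Y)` attached to a projective resolution `P`; its cohomology
computes `Ext(X, Y)`. -/
noncomputable abbrev homComplex (P : ProjectiveResolution X) (Y : ModuleCat.{u} R) :
    CochainComplex (ModuleCat.{u} R) ℕ :=
  P.complex.linearYonedaObj R Y

/-- The morphism `Pₙ ⟶ Y` underlying an `n`-cocycle of `Hom(P, Y)`. -/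
noncomputable def cocycleHom (P : ProjectiveResolution X) (Y : ModuleCat.{u} R) (n : ℕ) :
    (homComplex P Y).cycles n →ₗ[R] (P.complex.X n ⟶ Y) :=
  ((homComplex P Y).iCycles n).hom

lemma homologyπ_eq_zero_iff (K : CochainComplex (ModuleCat.{u} R) ℕ) (n : ℕ) (z : K.cycles n) :
    (K.homologyπ n).hom z = 0 ↔
      ∃ w, (K.toCycles ((ComplexShape.up ℕ).prev n) n).hom w = z := by
  have exact : (ShortComplex.mk (K.toCycles ((ComplexShape.up ℕ).prev n) n) (K.homologyπ n)
      (by simp)).Exact :=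
    ShortComplex.exact_of_g_is_cokernel _ (K.homologyIsCokernel _ n rfl)
  exact (ShortComplex.ShortExact.moduleCat_exact_iff_function_exact _).1 exact z

variable (P : ProjectiveResolution X) (P' : ProjectiveResolution X') {Y : ModuleCat.{u} R} {n : ℕ}

lemma cocycleHom_injective : Function.Injective (cocycleHom P Y n) :=
  (ModuleCat.mono_iff_injective _).1 (inferInstance : Mono ((homComplex P Y).iCycles n))

lemma d_comp_cocycleHom (z : (homComplex P Y).cycles n) :
    P.complex.d (n + 1) n ≫ cocycleHom P Y n z = 0 :=
  congrArg (fun φ ↦ φ.hom z) ((homComplex P Y).iCycles_d n (n + 1))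

lemma exists_cocycleHom_eq (f : P.complex.X n ⟶ Y) (hf : P.complex.d (n + 1) n ≫ f = 0) :
    ∃ z, cocycleHom P Y n z = f := by
  have exact : (ShortComplex.mk ((homComplex P Y).iCycles n) ((homComplex P Y).d n (n + 1))
      ((homComplex P Y).iCycles_d _ _)).Exact :=
    ShortComplex.exact_of_f_is_kernel _ ((homComplex P Y).cyclesIsKernel n (n + 1) (by simp))
  exact (ShortComplex.moduleCat_exact_iff _).1 exact f hf

lemma cocycleHom_toCycles (m : ℕ) (w : P.complex.X m ⟶ Y) :
    cocycleHom P Y n (((homComplex P Y).toCycles m n).hom w) = P.complex.d n m ≫ w :=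
  congrArg (fun φ ↦ φ.hom w) ((homComplex P Y).toCycles_i m n)

lemma eq_zero_of_extMk_zero_eq_zero (f : P.complex.X 0 ⟶ Y) (hf : P.complex.d 1 0 ≫ f = 0)
    (h : P.extMk f 1 rfl hf = 0) : f = 0 := by
  simp only [← P.extEquivCohomologyClass.apply_eq_iff_eq,
    ProjectiveResolution.extEquivCohomologyClass_extMk,
    ProjectiveResolution.extEquivCohomologyClass_zero,
    CochainComplex.HomComplex.CohomologyClass.mk_eq_zero_iff] at h
  rw [CochainComplex.HomComplex.Cocycle.toSingleMk_mem_coboundaries_iff _ _ _ _ _ 1 (by simp)] at h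
  obtain ⟨g, hg⟩ := h
  have hg_zero : g = 0 :=
    Limits.IsZero.eq_of_src (CochainComplex.isZero_of_isStrictlyLE _ 0 1 (by simp)) _ _
  simpa [hg_zero] using hg.symm

lemma smul_extMk (r : R) (f : P.complex.X n ⟶ Y) (m : ℕ) (hm : n + 1 = m)
    (hf : P.complex.d m n ≫ f = 0) :
    r • P.extMk f m hm hf = P.extMk (r • f) m hm (by simp [hf]) := by
  rw [Abelian.Ext.smul_eq_comp_mk₀, ProjectiveResolution.extMk_comp_mk₀]
  congr 1

variable (Y n) in
/-- The class in `Abelian.Ext X Y n` of an `n`-cocycle of `Hom(P, Y)`. -/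
noncomputable def abelianExtClass : (homComplex P Y).cycles n →ₗ[R] Abelian.Ext.{u} X Y n where
  toFun z := P.extMk (cocycleHom P Y n z) (n + 1) rfl (d_comp_cocycleHom P z)
  map_add' z w := by rw [ProjectiveResolution.add_extMk]; congr 1; exact map_add _ z w
  map_smul' r z := by rw [RingHom.id_apply, smul_extMk]; congr 1; exact map_smul _ r z

lemma abelianExtClass_surjective : Function.Surjective (abelianExtClass P Y n) := by
  intro x
  obtain ⟨f, hf, rfl⟩ := P.extMk_surjective x (n + 1) rfl
  obtain ⟨z, rfl⟩ := exists_cocycleHom_eq P f hf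
  exact ⟨z, rfl⟩

lemma toCycles_prev_zero (w) :
    ((homComplex P Y).toCycles ((ComplexShape.up ℕ).prev 0) 0).hom w = 0 := by
  refine cocycleHom_injective P ?_
  rw [map_zero]
  refine (cocycleHom_toCycles P _ w).trans ?_
  rw [P.complex.shape _ _ (by simp)]
  exact Limits.zero_comp

lemma abelianExtClass_eq_zero_iff (z : (homComplex P Y).cycles n) :
    abelianExtClass P Y n z = 0 ↔ ((homComplex P Y).homologyπ n).hom z = 0 := by
  rw [homologyπ_eq_zero_iff]
  cases n with
  | zero =>
    refine ⟨fun h ↦ ⟨0, ?_⟩, ?_⟩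
    · have hz : cocycleHom P Y 0 z = 0 :=
        eq_zero_of_extMk_zero_eq_zero P _ (d_comp_cocycleHom P z) h
      rw [map_zero, cocycleHom_injective P (hz.trans (map_zero _).symm)]
    · rintro ⟨w, rfl⟩
      rw [toCycles_prev_zero, map_zero]
  | succ n =>
    rw [show (ComplexShape.up ℕ).prev (n + 1) = n by simp]
    refine (ProjectiveResolution.extMk_eq_zero_iff (R := P) _ _ rfl
      (d_comp_cocycleHom P z) n rfl).trans (exists_congr fun w ↦ ?_)
    exact ⟨fun hw ↦ cocycleHom_injective P ((cocycleHom_toCycles P _ w).trans hw),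
      fun hw ↦ (cocycleHom_toCycles P _ w).symm.trans (congrArg _ hw)⟩

variable (Y n) in
/-- The class in the left-derived `Ext` of an `n`-cocycle of `Hom(P, Y)`. -/
noncomputable def derivedExtClass :
    (homComplex P Y).cycles n →ₗ[R] ((Ext R (ModuleCat.{u} R) n).obj (Opposite.op X)).obj Y :=
  ((homComplex P Y).homologyπ n ≫ (P.isoExt (R := R) n Y).inv).hom

lemma derivedExtClass_surjective : Function.Surjective (derivedExtClass P Y n) :=
  (ModuleCat.epi_iff_surjective _).1
    (inferInstance : Epi ((homComplex P Y).homologyπ n ≫ (P.isoExt (R := R) n Y).inv))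

lemma ker_derivedExtClass :
    LinearMap.ker (derivedExtClass P Y n) = LinearMap.ker (abelianExtClass P Y n) := by
  ext z
  have hinj : Function.Injective (P.isoExt (R := R) n Y).inv.hom :=
    (ModuleCat.mono_iff_injective _).1 inferInstance
  rw [LinearMap.mem_ker, LinearMap.mem_ker, abelianExtClass_eq_zero_iff, ← map_eq_zero_iff _ hinj]
  rfl

variable (Y n) in
/-- The comparison of the left-derived `Ext`, which defines `extQuot` and `localCohomology`, with
`Abelian.Ext`, for which the long exact sequences are available. -/
noncomputable def derivedExtEquiv :
    (((Ext R (ModuleCat.{u} R) n).obj (Opposite.op X)).obj Y) ≃ₗ[R] Abelian.Ext.{u} X Y n :=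
  ((derivedExtClass P Y n).quotKerEquivOfSurjective (derivedExtClass_surjective P)).symm ≪≫ₗ
    Submodule.quotEquivOfEq _ _ (ker_derivedExtClass P) ≪≫ₗ
    (abelianExtClass P Y n).quotKerEquivOfSurjective (abelianExtClass_surjective P)

lemma derivedExtEquiv_derivedExtClass (z : (homComplex P Y).cycles n) :
    derivedExtEquiv P Y n (derivedExtClass P Y n z) = abelianExtClass P Y n z := by
  have hz : ((derivedExtClass P Y n).quotKerEquivOfSurjective
      (derivedExtClass_surjective P)).symm (derivedExtClass P Y n z) =
      Submodule.Quotient.mk z := by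
    rw [LinearEquiv.symm_apply_eq]; rfl
  simp only [derivedExtEquiv, LinearEquiv.trans_apply, hz]
  rfl

variable {P P'}

variable (Y) in
/-- The morphism `Hom(P, Y) ⟶ Hom(P', Y)` induced by a chain map `P' ⟶ P`. -/
noncomputable def homComplexMap (φ : P'.complex ⟶ P.complex) :
    homComplex P Y ⟶ homComplex P' Y where
  f n := (((linearYoneda R (ModuleCat.{u} R)).obj Y).rightOp.map (φ.f n)).unop
  comm' i j _ := congrArg Quiver.Hom.unop
    ((((linearYoneda R (ModuleCat.{u} R)).obj Y).rightOp.mapHomologicalComplex _).map φ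
      |>.comm j i).symm

lemma isoExt_inv_naturality (g : X' ⟶ X) (φ : P'.complex ⟶ P.complex)
    (comm : φ.f 0 ≫ P.π.f 0 = P'.π.f 0 ≫ g) :
    (P.isoExt (R := R) n Y).inv ≫ ((Ext R (ModuleCat.{u} R) n).map g.op).app Y =
      HomologicalComplex.homologyMap (homComplexMap Y φ) n ≫ (P'.isoExt (R := R) n Y).inv := by
  let F := ((linearYoneda R (ModuleCat.{u} R)).obj Y).rightOp
  have derived : (P.isoLeftDerivedObj F n).hom.unop ≫ ((F.leftDerived n).map g).unop =
      (HomologicalComplex.homologyMap ((F.mapHomologicalComplex _).map φ) n).unop ≫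
        (P'.isoLeftDerivedObj F n).hom.unop :=
    congrArg Quiver.Hom.unop
      (ProjectiveResolution.isoLeftDerivedObj_hom_naturality g P' P φ comm F n)
  have homology : (HomologicalComplex.homologyUnop _ n).hom ≫
      (HomologicalComplex.homologyMap ((F.mapHomologicalComplex _).map φ) n).unop =
      HomologicalComplex.homologyMap (homComplexMap Y φ) n ≫
        (HomologicalComplex.homologyUnop _ n).hom :=
    congrArg Quiver.Hom.unop
      (HomologicalComplex.homologyOp_hom_naturality (homComplexMap Y φ) n)
  change ((HomologicalComplex.homologyUnop _ n).hom ≫ (P.isoLeftDerivedObj F n).hom.unop) ≫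
      ((F.leftDerived n).map g).unop = _ ≫ (HomologicalComplex.homologyUnop _ n).hom ≫
        (P'.isoLeftDerivedObj F n).hom.unop
  exact (Category.assoc _ _ _).trans ((congrArg _ derived).trans
    ((Category.assoc _ _ _).symm.trans ((congrArg (· ≫ _) homology).trans (Category.assoc _ _ _))))

lemma derivedExtClass_cyclesMap (g : X' ⟶ X) (φ : P'.complex ⟶ P.complex)
    (comm : φ.f 0 ≫ P.π.f 0 = P'.π.f 0 ≫ g) (z : (homComplex P Y).cycles n) :
    derivedExtClass P' Y n ((HomologicalComplex.cyclesMap (homComplexMap Y φ) n).hom z) =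
      (((Ext R (ModuleCat.{u} R) n).map g.op).app Y).hom (derivedExtClass P Y n z) := by
  have h : HomologicalComplex.cyclesMap (homComplexMap Y φ) n ≫
        ((homComplex P' Y).homologyπ n ≫ (P'.isoExt (R := R) n Y).inv) =
      ((homComplex P Y).homologyπ n ≫ (P.isoExt (R := R) n Y).inv) ≫
        ((Ext R (ModuleCat.{u} R) n).map g.op).app Y := by
    rw [Category.assoc, isoExt_inv_naturality g φ comm, ← Category.assoc, ← Category.assoc,
      HomologicalComplex.homologyπ_naturality]
  exact congrArg (fun ψ ↦ ψ.hom z) h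

lemma cocycleHom_cyclesMap (φ : P'.complex ⟶ P.complex) (z : (homComplex P Y).cycles n) :
    cocycleHom P' Y n ((HomologicalComplex.cyclesMap (homComplexMap Y φ) n).hom z) =
      φ.f n ≫ cocycleHom P Y n z :=
  congrArg (fun ψ ↦ ψ.hom z) (HomologicalComplex.cyclesMap_i (homComplexMap Y φ) n)

lemma derivedExtEquiv_naturality (g : X' ⟶ X)
    (x : ((Ext R (ModuleCat.{u} R) n).obj (Opposite.op X)).obj Y) :
    derivedExtEquiv P' Y n ((((Ext R (ModuleCat.{u} R) n).map g.op).app Y).hom x) =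
      (Abelian.Ext.mk₀ g).comp (derivedExtEquiv P Y n x) (zero_add n) := by
  obtain ⟨z, rfl⟩ := derivedExtClass_surjective P x
  let φ := ProjectiveResolution.lift g P' P
  have comm : φ.f 0 ≫ P.π.f 0 = P'.π.f 0 ≫ g := ProjectiveResolution.lift_commutes_zero g P' P
  rw [← derivedExtClass_cyclesMap g φ comm, derivedExtEquiv_derivedExtClass,
    derivedExtEquiv_derivedExtClass]
  refine Eq.trans ?_ (ProjectiveResolution.mk₀_comp_extMk (R := P) (cocycleHom P Y n z) (n + 1) rfl
    (d_comp_cocycleHom P z) (R' := P') (g := g) ⟨φ, by simpa using comm⟩).symm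
  change P'.extMk _ (n + 1) rfl (d_comp_cocycleHom P' _) = _
  congr 1
  exact cocycleHom_cyclesMap φ z

end ExtComparison

section LongExactSequence

variable {R : Type u} [CommRing R] (X : ModuleCat.{u} R)
variable {A B C : Type u} [AddCommGroup A] [Module R A] [AddCommGroup B] [Module R B]
  [AddCommGroup C] [Module R C]

/-- `Ext^j(X, A)` with an unbundled second argument. -/
abbrev ModuleExt (A : Type u) [AddCommGroup A] [Module R A] (j : ℕ) : Type u :=
  Abelian.Ext.{u} X (ModuleCat.of R A) j

/-- The map `Ext^j(X, A) → Ext^j(X, B)` induced by a linear map `A → B`. -/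
noncomputable def extMap (f : A →ₗ[R] B) (j : ℕ) : ModuleExt X A j →ₗ[R] ModuleExt X B j :=
  Abelian.Ext.postcompOfLinear (Abelian.Ext.mk₀ (ModuleCat.ofHom f)) R X (add_zero j)

variable {X}

lemma extMap_apply (f : A →ₗ[R] B) {j : ℕ} (x : ModuleExt X A j) :
    extMap X f j x = x.comp (Abelian.Ext.mk₀ (ModuleCat.ofHom f)) (add_zero j) := rfl

lemma extMap_comp (g : B →ₗ[R] C) (f : A →ₗ[R] B) {j : ℕ} (x : ModuleExt X A j) :
    extMap X g j (extMap X f j x) = extMap X (g ∘ₗ f) j x := by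
  simp only [extMap_apply, ModuleCat.ofHom_comp, ← Abelian.Ext.mk₀_comp_mk₀,
    Abelian.Ext.comp_assoc_of_third_deg_zero]

lemma extMap_id {j : ℕ} (x : ModuleExt X A j) : extMap X LinearMap.id j x = x :=
  Abelian.Ext.comp_mk₀_id x

lemma extMap_lsmul (r : R) {j : ℕ} (x : ModuleExt X A j) :
    extMap X (LinearMap.lsmul R A r) j x = r • x :=
  (Abelian.Ext.smul_eq_comp_mk₀ x r).symm

variable (X) in
/-- A linear equivalence `A ≃ B` induces `Ext^j(X, A) ≃ Ext^j(X, B)`. -/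
noncomputable def extMapEquiv (e : A ≃ₗ[R] B) (j : ℕ) : ModuleExt X A j ≃ₗ[R] ModuleExt X B j :=
  LinearEquiv.ofLinearMap (extMap X e.toLinearMap j) (extMap X e.symm.toLinearMap j)
    (by ext x; simp [extMap_comp, extMap_id]) (by ext x; simp [extMap_comp, extMap_id])

lemma extMap_zero_injective {f : A →ₗ[R] B} (hf : Function.Injective f) :
    Function.Injective (extMap X f 0) := by
  have : Mono (ModuleCat.ofHom f) := (ModuleCat.mono_iff_injective _).2 hf
  exact Abelian.Ext.postcomp_mk₀_injective_of_mono X (ModuleCat.ofHom f)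

instance subsingleton_moduleExt_succ [Module.Injective R A] (j : ℕ) :
    Subsingleton (ModuleExt X A (j + 1)) := by
  have : Injective (ModuleCat.of R A) := Module.injective_object_of_injective_module R A
  exact Abelian.Ext.subsingleton_of_injective X _ j

variable {f : A →ₗ[R] B} {g : B →ₗ[R] C}

lemma shortExact_moduleCat (hf : Function.Injective f) (hfg : Function.Exact f g)
    (hg : Function.Surjective g) :
    (ModuleCat.shortComplexOfCompEqZero f g hfg.linearMap_comp_eq_zero).ShortExact :=
  ModuleCat.shortComplex_shortExact _ hfg hf hg

variable (hf : Function.Injective f) (hfg : Function.Exact f g) (hg : Function.Surjective g)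

variable (X) in
/-- The connecting map `Ext^j(X, C) → Ext^{j+1}(X, A)` of a short exact sequence
`0 → A → B → C → 0`. -/
noncomputable def extConnecting (j : ℕ) : ModuleExt X C j →ₗ[R] ModuleExt X A (j + 1) :=
  Abelian.Ext.postcompOfLinear (shortExact_moduleCat hf hfg hg).extClass R X rfl

lemma extConnecting_apply {j : ℕ} (x : ModuleExt X C j) :
    extConnecting X hf hfg hg j x = x.comp (shortExact_moduleCat hf hfg hg).extClass rfl := rfl

include hf hfg hg in
lemma extMap_extMap_exact (j : ℕ) : Function.Exact (extMap X f j) (extMap X g j) := fun x ↦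
  ⟨Abelian.Ext.covariant_sequence_exact₂ X (shortExact_moduleCat hf hfg hg) x, by
    rintro ⟨y, rfl⟩
    rw [extMap_comp, hfg.linearMap_comp_eq_zero, extMap_apply]
    simp⟩

lemma extMap_extConnecting_exact (j : ℕ) :
    Function.Exact (extMap X g j) (extConnecting X hf hfg hg j) := fun x ↦
  ⟨Abelian.Ext.covariant_sequence_exact₃ X (shortExact_moduleCat hf hfg hg) x rfl, by
    rintro ⟨y, rfl⟩
    have hcomp := (shortExact_moduleCat hf hfg hg).comp_extClass
    rw [extConnecting_apply, extMap_apply, Abelian.Ext.comp_assoc_of_second_deg_zero]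
    exact (congrArg (fun z ↦ y.comp z _) hcomp).trans (Abelian.Ext.comp_zero ..)⟩

lemma extConnecting_extMap_exact (j : ℕ) :
    Function.Exact (extConnecting X hf hfg hg j) (extMap X f (j + 1)) := fun x ↦
  ⟨fun hx ↦ Abelian.Ext.covariant_sequence_exact₁ X (shortExact_moduleCat hf hfg hg) x hx rfl, by
    rintro ⟨y, rfl⟩
    have hcomp := (shortExact_moduleCat hf hfg hg).extClass_comp
    rw [extConnecting_apply, extMap_apply, Abelian.Ext.comp_assoc_of_third_deg_zero]
    exact (congrArg (fun z ↦ y.comp z _) hcomp).trans (Abelian.Ext.comp_zero ..)⟩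

end LongExactSequence

section QuotientEvaluation

variable {R : Type u} [CommRing R] (I : Ideal R)
variable (Y : Type u) {Z : Type u} [AddCommGroup Y] [Module R Y] [AddCommGroup Z] [Module R Z]

lemma mem_torsionBySet_ideal_iff {I : Ideal R} {Y : Type*} [AddCommGroup Y] [Module R Y] {y : Y} :
    y ∈ Submodule.torsionBySet R Y I ↔ ∀ r ∈ I, r • y = 0 := by
  simp [Submodule.mem_torsionBySet_iff]

lemma smul_quotient_mk_one_eq_zero {r : R} (hr : r ∈ I) :
    r • (Submodule.Quotient.mk 1 : R ⧸ I) = 0 := by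
  rw [← Submodule.Quotient.mk_smul, Submodule.Quotient.mk_eq_zero]
  simpa using hr

/-- Evaluation at `1`, as a map from `Ext^0(R/I, Y) = Hom(R/I, Y)` to `Y`. -/
noncomputable def extZeroEval : ModuleExt (ModuleCat.of R (R ⧸ I)) Y 0 →ₗ[R] Y :=
  LinearMap.applyₗ (Submodule.Quotient.mk 1 : R ⧸ I) ∘ₗ
    (ModuleCat.homLinearEquiv (S := R)).toLinearMap ∘ₗ
      (Abelian.Ext.linearEquiv₀ (R := R)).toLinearMap

variable {I Y}

lemma extZeroEval_mk₀ (φ : (R ⧸ I) →ₗ[R] Y) :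
    extZeroEval I Y (Abelian.Ext.mk₀ (ModuleCat.ofHom φ)) = φ (Submodule.Quotient.mk 1) := by
  have hφ : Abelian.Ext.linearEquiv₀ (R := R) (Abelian.Ext.mk₀ (ModuleCat.ofHom φ)) =
      ModuleCat.ofHom φ := by
    apply (Abelian.Ext.mk₀_bijective (C := ModuleCat.{u} R) _ _).1
    rw [Abelian.Ext.mk₀_linearEquiv₀_apply]
  simp only [extZeroEval, LinearMap.comp_apply, LinearEquiv.coe_coe, hφ]
  rfl

lemma exists_mk₀_ofHom_eq {X : ModuleCat.{u} R} (x : ModuleExt X Y 0) :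
    ∃ φ : X →ₗ[R] Y, Abelian.Ext.mk₀ (ModuleCat.ofHom φ) = x := by
  obtain ⟨φ, rfl⟩ := (Abelian.Ext.mk₀_bijective (C := ModuleCat.{u} R) _ _).2 x
  exact ⟨φ.hom, rfl⟩

lemma extZeroEval_injective : Function.Injective (extZeroEval I Y) := by
  rw [injective_iff_map_eq_zero]
  intro x hx
  obtain ⟨φ, rfl⟩ := exists_mk₀_ofHom_eq x
  rw [extZeroEval_mk₀] at hx
  have hφ : φ = 0 := Submodule.linearMap_qext _ (LinearMap.ext_ring hx)
  exact (Abelian.Ext.mk₀_eq_zero_iff _).2 (by rw [hφ]; rfl)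

lemma range_extZeroEval :
    LinearMap.range (extZeroEval I Y) = Submodule.torsionBySet R Y I := by
  ext y
  rw [mem_torsionBySet_ideal_iff]
  constructor
  · rintro ⟨x, rfl⟩ r hr
    obtain ⟨φ, rfl⟩ := exists_mk₀_ofHom_eq x
    rw [extZeroEval_mk₀, ← map_smul, smul_quotient_mk_one_eq_zero I hr, map_zero]
  · intro hy
    refine ⟨Abelian.Ext.mk₀ (ModuleCat.ofHom
      (Submodule.liftQ I (LinearMap.toSpanSingleton R Y y) hy)), ?_⟩
    rw [extZeroEval_mk₀]
    exact one_smul R y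

variable (I Y) in
/-- `Ext^0(R/I, Y)` is the submodule of `Y` annihilated by `I`. -/
noncomputable def extZeroEquiv :
    ModuleExt (ModuleCat.of R (R ⧸ I)) Y 0 ≃ₗ[R] Submodule.torsionBySet R Y I :=
  LinearEquiv.ofInjective (extZeroEval I Y) extZeroEval_injective ≪≫ₗ
    LinearEquiv.ofEq _ _ range_extZeroEval

lemma extZeroEval_extMap (f : Y →ₗ[R] Z) (x : ModuleExt (ModuleCat.of R (R ⧸ I)) Y 0) :
    extZeroEval I Z (extMap _ f 0 x) = f (extZeroEval I Y x) := by
  obtain ⟨φ, rfl⟩ := exists_mk₀_ofHom_eq x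
  rw [extMap_apply, Abelian.Ext.mk₀_comp_mk₀, ← ModuleCat.ofHom_comp, extZeroEval_mk₀,
    extZeroEval_mk₀]
  rfl

lemma smul_moduleExt_eq_zero {j : ℕ} {r : R} (hr : r ∈ I)
    (x : ModuleExt (ModuleCat.of R (R ⧸ I)) Y j) : r • x = 0 := by
  have hid : r • 𝟙 (ModuleCat.of R (R ⧸ I)) = 0 := by
    ext
    exact smul_quotient_mk_one_eq_zero I hr
  rw [← Abelian.Ext.mk₀_id_comp x, ← Abelian.Ext.smul_comp, ← Abelian.Ext.mk₀_smul, hid,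
    Abelian.Ext.mk₀_zero, Abelian.Ext.zero_comp]

end QuotientEvaluation

section DirectLimitExact

variable {R ι : Type*} [Ring R] [Preorder ι] [IsDirectedOrder ι] [Nonempty ι] [DecidableEq ι]
variable {A B C : ι → Type*} [∀ i, AddCommGroup (A i)] [∀ i, Module R (A i)]
  [∀ i, AddCommGroup (B i)] [∀ i, Module R (B i)] [∀ i, AddCommGroup (C i)] [∀ i, Module R (C i)]
variable {tA : ∀ i j, i ≤ j → A i →ₗ[R] A j} {tB : ∀ i j, i ≤ j → B i →ₗ[R] B j}
  {tC : ∀ i j, i ≤ j → C i →ₗ[R] C j}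

lemma directLimit_map_exact [DirectedSystem C (tC · · ·)]
    {f : ∀ i, A i →ₗ[R] B i} {g : ∀ i, B i →ₗ[R] C i}
    (hf : ∀ i j h, f j ∘ₗ tA i j h = tB i j h ∘ₗ f i)
    (hg : ∀ i j h, g j ∘ₗ tB i j h = tC i j h ∘ₗ g i)
    (hfg : ∀ i, Function.Exact (f i) (g i)) :
    Function.Exact (Module.DirectLimit.map f hf) (Module.DirectLimit.map g hg) := by
  intro y
  constructor
  · intro hy
    obtain ⟨i, y, rfl⟩ := Module.DirectLimit.exists_of y
    rw [Module.DirectLimit.map_apply_of] at hy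
    obtain ⟨j, hij, hj⟩ := Module.DirectLimit.of.zero_exact hy
    obtain ⟨x, hx⟩ := (hfg j (tB i j hij y)).1 ((LinearMap.congr_fun (hg i j hij) y).trans hj)
    exact ⟨Module.DirectLimit.of R ι A tA j x, by
      rw [Module.DirectLimit.map_apply_of, hx, Module.DirectLimit.of_f]⟩
  · rintro ⟨x, rfl⟩
    obtain ⟨i, x, rfl⟩ := Module.DirectLimit.exists_of x
    rw [Module.DirectLimit.map_apply_of, Module.DirectLimit.map_apply_of,
      (hfg i).apply_apply_eq_zero, map_zero]

end DirectLimitExact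

section ExtLimit

variable {R : Type u} [CommRing R] (a : Ideal R)
variable {A B C : Type u} [AddCommGroup A] [Module R A] [AddCommGroup B] [Module R B]
  [AddCommGroup C] [Module R C]

/-- The projection `R ⧸ a ^ s ⟶ R ⧸ a ^ k` for `k ≤ s`. -/
def quotPowMap {k s : ℕ} (h : k ≤ s) :
    ModuleCat.of R (R ⧸ a ^ s) ⟶ ModuleCat.of R (R ⧸ a ^ k) :=
  ModuleCat.ofHom (Submodule.mapQ _ _ LinearMap.id (Ideal.pow_le_pow_right h))

/-- The transition map `Ext^i(R/a^k, A) → Ext^i(R/a^s, A)` for `k ≤ s`. -/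
noncomputable def extTransition (i : ℕ) (A : Type u) [AddCommGroup A] [Module R A] (k s : ℕ)
    (h : k ≤ s) :
    ModuleExt (ModuleCat.of R (R ⧸ a ^ k)) A i →ₗ[R] ModuleExt (ModuleCat.of R (R ⧸ a ^ s)) A i :=
  Abelian.Ext.precompOfLinear (Abelian.Ext.mk₀ (quotPowMap a h)) R (ModuleCat.of R A) (zero_add i)

variable {a}

lemma extTransition_apply {i k s : ℕ} (h : k ≤ s)
    (x : ModuleExt (ModuleCat.of R (R ⧸ a ^ k)) A i) :
    extTransition a i A k s h x = (Abelian.Ext.mk₀ (quotPowMap a h)).comp x (zero_add i) := rfl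

instance directedSystem_extTransition (i : ℕ) :
    DirectedSystem (fun k ↦ ModuleExt (ModuleCat.of R (R ⧸ a ^ k)) A i)
      (extTransition a i A · · ·) where
  map_self k x := by
    rw [extTransition_apply, show quotPowMap a (le_refl k) = 𝟙 _ by ext; rfl,
      Abelian.Ext.mk₀_id_comp]
  map_map k s t hks hst x := by
    have hcomp : quotPowMap a hst ≫ quotPowMap a hks = quotPowMap a (hks.trans hst) := by
      ext; rfl
    rw [extTransition_apply, extTransition_apply, extTransition_apply,
      Abelian.Ext.mk₀_comp_mk₀_assoc, hcomp]

variable (a A) in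
/-- The local cohomology module `H^i_a(A)`, as an unbundled direct limit of `Ext^i(R/a^k, A)`. -/
abbrev ExtLimit (i : ℕ) : Type u :=
  Module.DirectLimit _ (extTransition a i A)

lemma exists_pow_smul_extLimit_eq_zero {i : ℕ} (x : ExtLimit a A i) :
    ∃ k, ∀ r ∈ a ^ k, r • x = 0 := by
  obtain ⟨k, x, rfl⟩ := Module.DirectLimit.exists_of x
  exact ⟨k, fun r hr ↦ by rw [← map_smul, smul_moduleExt_eq_zero hr x, map_zero]⟩

section LocalCohomology

open localCohomology Limits

variable (a) in
/-- The diagram of the modules `Ext^i(R/a^k, M)` whose colimit is the local cohomology of `M`. -/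
noncomputable abbrev extPowDiagram (M : ModuleCat.{u} R) (i : ℕ) : ℕᵒᵖᵒᵖ ⥤ ModuleCat.{u} R :=
  diagram (idealPowersDiagram a) i ⋙ (evaluation (ModuleCat.{u} R) (ModuleCat.{u} R)).obj M

variable (a) in
/-- The comparison `derivedExtEquiv` between the `k`-th terms of the direct systems defining
`localCohomology` and `ExtLimit`. -/
noncomputable def extPowEquiv (M : ModuleCat.{u} R) (i : ℕ) (k : ℕᵒᵖᵒᵖ) :
    (extPowDiagram a M i).obj k ≃ₗ[R] ModuleExt (ModuleCat.of R (R ⧸ a ^ k.unop.unop)) M i :=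
  derivedExtEquiv (projectiveResolution (ModuleCat.of R (R ⧸ a ^ k.unop.unop))) M i

lemma extPowEquiv_map {M : ModuleCat.{u} R} {i : ℕ} {k s : ℕᵒᵖᵒᵖ} (h : k ⟶ s) (x) :
    extPowEquiv a M i s (((extPowDiagram a M i).map h).hom x) =
      extTransition a i M _ _ (leOfHom h.unop.unop) (extPowEquiv a M i k x) :=
  derivedExtEquiv_naturality (quotPowMap a (leOfHom h.unop.unop)) x

lemma extPowEquiv_symm_extTransition {M : ModuleCat.{u} R} {i k s : ℕ} (h : k ≤ s) (x) :
    (extPowEquiv a M i (.op (.op s))).symm (extTransition a i M k s h x) =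
      ((extPowDiagram a M i).map (homOfLE h).op.op).hom
        ((extPowEquiv a M i (.op (.op k))).symm x) := by
  refine (LinearEquiv.symm_apply_eq _).2 ((extPowEquiv_map (homOfLE h).op.op _).trans ?_).symm
  exact congrArg (extTransition a i M k s h)
    ((extPowEquiv a M i (.op (.op k))).apply_symm_apply x)

variable (a) in
/-- `ExtLimit` as a cocone over the diagram defining local cohomology. -/
noncomputable def extLimitCocone (M : ModuleCat.{u} R) (i : ℕ) : Cocone (extPowDiagram a M i) where
  pt := ModuleCat.of R (ExtLimit a M i)
  ι :=
    { app k := ModuleCat.ofHom (Module.DirectLimit.of R ℕ _ (extTransition a i M) k.unop.unop ∘ₗ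
        (extPowEquiv a M i k).toLinearMap)
      naturality k s h := by
        ext x
        exact (congrArg (Module.DirectLimit.of R ℕ _ (extTransition a i M) _)
          (extPowEquiv_map h x)).trans Module.DirectLimit.of_f }

/-- The map out of `ExtLimit` determined by a cocone over the diagram defining local cohomology. -/
noncomputable def extLimitDesc {M : ModuleCat.{u} R} {i : ℕ} (s : Cocone (extPowDiagram a M i)) :
    ExtLimit a M i →ₗ[R] s.pt :=
  Module.DirectLimit.lift R ℕ _ (extTransition a i M)
    (fun k ↦ (s.ι.app (.op (.op k))).hom ∘ₗ (extPowEquiv a M i (.op (.op k))).symm.toLinearMap)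
    fun k l h x ↦ (congrArg (s.ι.app (.op (.op l))).hom (extPowEquiv_symm_extTransition h x)).trans
      (congrArg (fun t ↦ t.hom ((extPowEquiv a M i (.op (.op k))).symm x))
        (s.w (homOfLE h).op.op))

lemma extLimitDesc_of {M : ModuleCat.{u} R} {i : ℕ} (s : Cocone (extPowDiagram a M i)) {k : ℕᵒᵖᵒᵖ}
    (x : (extPowDiagram a M i).obj k) :
    extLimitDesc s (((extLimitCocone a M i).ι.app k).hom x) = (s.ι.app k).hom x :=
  (Module.DirectLimit.lift_of _ _ _).trans
    (congrArg (s.ι.app k).hom ((extPowEquiv a M i k).symm_apply_apply x))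

variable (a) in
/-- `ExtLimit` is a colimit of the diagram defining local cohomology. -/
noncomputable def extLimitCoconeIsColimit (M : ModuleCat.{u} R) (i : ℕ) :
    IsColimit (extLimitCocone a M i) where
  desc s := ModuleCat.ofHom (extLimitDesc s)
  fac s k := by
    ext x
    exact extLimitDesc_of s x
  uniq s m hm := by
    ext x
    obtain ⟨k, x, rfl⟩ := Module.DirectLimit.exists_of x
    obtain ⟨x, rfl⟩ := (extPowEquiv a M i (.op (.op k))).surjective x
    exact (congrArg (fun t ↦ t.hom x) (hm (.op (.op k)))).trans (extLimitDesc_of s x).symm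

variable (a) in
/-- Local cohomology is the direct limit of the modules `Ext^i(R/a^k, M)`. -/
noncomputable def localCohomologyEquiv (M : ModuleCat.{u} R) (i : ℕ) :
    (localCohomology a i).obj M ≃ₗ[R] ExtLimit a M i :=
  (IsColimit.coconePointUniqueUpToIso
    (isColimitOfPreserves ((evaluation (ModuleCat.{u} R) (ModuleCat.{u} R)).obj M)
      (colimit.isColimit (diagram (idealPowersDiagram a) i)))
    (extLimitCoconeIsColimit a M i)).toLinearEquiv

end LocalCohomology

variable (a) in
/-- The map `H^i_a(A) → H^i_a(B)` induced by a linear map. -/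
noncomputable def extLimitMap (f : A →ₗ[R] B) (i : ℕ) : ExtLimit a A i →ₗ[R] ExtLimit a B i :=
  Module.DirectLimit.map (fun _ ↦ extMap _ f i) fun k s h ↦ by
    ext x
    exact Abelian.Ext.comp_assoc_of_third_deg_zero _ _ _ (zero_add i)

variable {f : A →ₗ[R] B} {g : B →ₗ[R] C}
  (hf : Function.Injective f) (hfg : Function.Exact f g) (hg : Function.Surjective g)

variable (a) in
/-- The connecting map `H^i_a(C) → H^{i+1}_a(A)` of a short exact sequence. -/
noncomputable def extLimitConnecting (i : ℕ) : ExtLimit a C i →ₗ[R] ExtLimit a A (i + 1) :=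
  Module.DirectLimit.map (fun _ ↦ extConnecting _ hf hfg hg i) fun k s h ↦ by
    ext x
    exact Abelian.Ext.comp_assoc _ _ _ (zero_add i) rfl (by omega)

include hf hfg hg in
lemma extLimitMap_extLimitMap_exact (i : ℕ) :
    Function.Exact (extLimitMap a f i) (extLimitMap a g i) :=
  directLimit_map_exact _ _ fun _ ↦ extMap_extMap_exact hf hfg hg i

lemma extLimitMap_extLimitConnecting_exact (i : ℕ) :
    Function.Exact (extLimitMap a g i) (extLimitConnecting a hf hfg hg i) :=
  directLimit_map_exact _ _ fun _ ↦ extMap_extConnecting_exact hf hfg hg i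

lemma extLimitConnecting_extLimitMap_exact (i : ℕ) :
    Function.Exact (extLimitConnecting a hf hfg hg i) (extLimitMap a f (i + 1)) :=
  directLimit_map_exact _ _ fun _ ↦ extConnecting_extMap_exact hf hfg hg i

instance subsingleton_extLimit_succ [Module.Injective R A] (i : ℕ) :
    Subsingleton (ExtLimit a A (i + 1)) where
  allEq x y := by
    obtain ⟨k, x, y, rfl, rfl⟩ := Module.DirectLimit.exists_of₂ x y
    rw [Subsingleton.elim x y]

end ExtLimit

section PowTorsion

variable {R : Type u} [CommRing R] {a : Ideal R}
variable {Y Z : Type u} [AddCommGroup Y] [Module R Y] [AddCommGroup Z] [Module R Z]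

/-- The `a`-power torsion submodule `Γ_a(Y)` of `Y`. -/
def powTorsion (a : Ideal R) (Y : Type*) [AddCommGroup Y] [Module R Y] : Submodule R Y where
  carrier := {y | ∃ k, ∀ r ∈ a ^ k, r • y = 0}
  zero_mem' := ⟨0, fun r _ ↦ smul_zero r⟩
  add_mem' := by
    rintro x y ⟨k, hk⟩ ⟨s, hs⟩
    refine ⟨max k s, fun r hr ↦ ?_⟩
    rw [smul_add, hk r (Ideal.pow_le_pow_right (le_max_left k s) hr),
      hs r (Ideal.pow_le_pow_right (le_max_right k s) hr), add_zero]
  smul_mem' := by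
    rintro c x ⟨k, hk⟩
    exact ⟨k, fun r hr ↦ by rw [smul_comm, hk r hr, smul_zero]⟩

/-- Every element of `Y` is annihilated by some power of `a`. -/
def IsPowTorsion (a : Ideal R) (Y : Type*) [AddCommGroup Y] [Module R Y] : Prop :=
  ∀ y : Y, y ∈ powTorsion a Y

lemma map_mem_powTorsion (f : Y →ₗ[R] Z) {y : Y} (hy : y ∈ powTorsion a Y) :
    f y ∈ powTorsion a Z := by
  obtain ⟨k, hk⟩ := hy
  exact ⟨k, fun r hr ↦ by rw [← map_smul, hk r hr, map_zero]⟩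

lemma map_mem_powTorsion_iff {f : Y →ₗ[R] Z} (hf : Function.Injective f) {y : Y} :
    f y ∈ powTorsion a Z ↔ y ∈ powTorsion a Y := by
  refine ⟨?_, map_mem_powTorsion f⟩
  rintro ⟨k, hk⟩
  exact ⟨k, fun r hr ↦ hf (by rw [map_smul, hk r hr, map_zero])⟩

lemma IsPowTorsion.of_injective (hZ : IsPowTorsion a Z) {f : Y →ₗ[R] Z}
    (hf : Function.Injective f) : IsPowTorsion a Y :=
  fun y ↦ (map_mem_powTorsion_iff hf).1 (hZ (f y))

lemma IsPowTorsion.of_surjective (hY : IsPowTorsion a Y) {f : Y →ₗ[R] Z}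
    (hf : Function.Surjective f) : IsPowTorsion a Z := by
  intro z
  obtain ⟨y, rfl⟩ := hf z
  exact map_mem_powTorsion f (hY y)

lemma isPowTorsion_powTorsion : IsPowTorsion a (powTorsion a Y) :=
  fun y ↦ (map_mem_powTorsion_iff (powTorsion a Y).injective_subtype).1 y.2

lemma isPowTorsion_extLimit (i : ℕ) : IsPowTorsion a (ExtLimit a Y i) :=
  exists_pow_smul_extLimit_eq_zero

lemma IsPowTorsion.exists_pow_smul_eq_zero [Module.Finite R Y] (hY : IsPowTorsion a Y) :
    ∃ k, ∀ r ∈ a ^ k, ∀ y : Y, r • y = 0 := by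
  obtain ⟨S, hS⟩ := Module.Finite.fg_top (R := R) (M := Y)
  choose κ hκ using hY
  refine ⟨S.sup κ, fun r hr y ↦ ?_⟩
  have hy : y ∈ Submodule.span R (S : Set Y) := hS ▸ Submodule.mem_top
  induction hy using Submodule.span_induction with
  | mem y hy => exact hκ y r (Ideal.pow_le_pow_right (Finset.le_sup hy) hr)
  | zero => rw [smul_zero]
  | add x y _ _ hx hy => rw [smul_add, hx, hy, add_zero]
  | smul c x _ hx => rw [smul_comm, hx, smul_zero]

lemma extZeroEval_extTransition {k s : ℕ} (h : k ≤ s)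
    (x : ModuleExt (ModuleCat.of R (R ⧸ a ^ k)) Y 0) :
    extZeroEval (a ^ s) Y (extTransition a 0 Y k s h x) = extZeroEval (a ^ k) Y x := by
  obtain ⟨φ, rfl⟩ := exists_mk₀_ofHom_eq x
  rw [extTransition_apply, Abelian.Ext.mk₀_comp_mk₀, extZeroEval_mk₀]
  exact extZeroEval_mk₀ _

variable (a Y) in
/-- Evaluation at `1`, as a map from `H^0_a(Y) = colim Hom(R/a^k, Y)` to `Y`. -/
noncomputable def extLimitEval : ExtLimit a Y 0 →ₗ[R] Y :=
  Module.DirectLimit.lift R ℕ _ _ (fun k ↦ extZeroEval (a ^ k) Y)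
    fun _ _ h x ↦ extZeroEval_extTransition h x

lemma extLimitEval_of {k : ℕ} (x : ModuleExt (ModuleCat.of R (R ⧸ a ^ k)) Y 0) :
    extLimitEval a Y (Module.DirectLimit.of R ℕ _ (extTransition a 0 Y) k x) =
      extZeroEval (a ^ k) Y x :=
  Module.DirectLimit.lift_of _ _ _

lemma extLimitEval_injective : Function.Injective (extLimitEval a Y) :=
  Module.DirectLimit.lift_injective _ _ fun _ ↦ extZeroEval_injective

lemma range_extLimitEval : LinearMap.range (extLimitEval a Y) = powTorsion a Y := by
  ext y
  constructor
  · rintro ⟨x, rfl⟩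
    obtain ⟨k, x, rfl⟩ := Module.DirectLimit.exists_of x
    rw [extLimitEval_of]
    exact ⟨k, mem_torsionBySet_ideal_iff.1 (range_extZeroEval.le ⟨x, rfl⟩)⟩
  · rintro ⟨k, hk⟩
    obtain ⟨x, rfl⟩ := range_extZeroEval.ge (mem_torsionBySet_ideal_iff.2 hk)
    exact ⟨_, extLimitEval_of x⟩

variable (a Y) in
/-- `H^0_a(Y)` is the `a`-power torsion submodule of `Y`. -/
noncomputable def extLimitZeroEquiv : ExtLimit a Y 0 ≃ₗ[R] powTorsion a Y :=
  LinearEquiv.ofInjective (extLimitEval a Y) extLimitEval_injective ≪≫ₗ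
    LinearEquiv.ofEq _ _ range_extLimitEval

lemma extLimitEval_extLimitMap (f : Y →ₗ[R] Z) (x : ExtLimit a Y 0) :
    extLimitEval a Z (extLimitMap a f 0 x) = f (extLimitEval a Y x) := by
  obtain ⟨k, x, rfl⟩ := Module.DirectLimit.exists_of x
  rw [extLimitEval_of, ← extZeroEval_extMap, ← extLimitEval_of]
  exact congrArg _ (Module.DirectLimit.map_apply_of ..)

lemma extLimitMap_zero_surjective {f : Y →ₗ[R] Z} (hY : IsPowTorsion a Y)
    (hf : Function.Surjective f) : Function.Surjective (extLimitMap a f 0) := by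
  intro z
  obtain ⟨y, hy⟩ := hf (extLimitEval a Z z)
  obtain ⟨x, rfl⟩ := range_extLimitEval.ge (hY y)
  exact ⟨x, extLimitEval_injective ((extLimitEval_extLimitMap f x).trans hy)⟩

end PowTorsion

section InjectiveEmbedding

variable {R : Type u} [CommRing R] {a : Ideal R}
variable {Y Z : Type u} [AddCommGroup Y] [Module R Y] [AddCommGroup Z] [Module R Z]

lemma exists_embedding_in_injective (Y : Type u) [AddCommGroup Y] [Module R Y] :
    ∃ (E : Type u) (_ : AddCommGroup E) (_ : Module R E) (f : Y →ₗ[R] E),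
      Module.Injective R E ∧ Function.Injective f := by
  let E : ModuleCat.{u} R := Injective.under (ModuleCat.of R Y)
  have : Injective (ModuleCat.of R E) := inferInstanceAs (Injective (Injective.under _))
  exact ⟨E, _, _, (Injective.ι (ModuleCat.of R Y)).hom,
    Module.injective_module_of_injective_object R E,
    (ModuleCat.mono_iff_injective _).1 inferInstance⟩

lemma module_injective_of_leftInverse [Module.Injective R Z] {i : Y →ₗ[R] Z} {r : Z →ₗ[R] Y}
    (h : Function.LeftInverse r i) : Module.Injective R Y where
  out A B _ _ _ _ f hf g := by
    obtain ⟨k, hk⟩ := Module.Injective.out f hf (i ∘ₗ g)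
    exact ⟨r ∘ₗ k, fun x ↦ by rw [LinearMap.comp_apply, hk, LinearMap.comp_apply, h]⟩

/-- By Artin–Rees, `a ^ (k + c) ⊓ I ≤ a ^ k • I`. -/
lemma IsPowTorsion.exists_pow_map_eq_zero [IsNoetherianRing R] (hY : IsPowTorsion a Y)
    {I : Ideal R} (φ : I →ₗ[R] Y) : ∃ n, ∀ x : I, (x : R) ∈ a ^ n → φ x = 0 := by
  obtain ⟨k, hk⟩ :=
    (hY.of_injective (LinearMap.range φ).injective_subtype).exists_pow_smul_eq_zero
  obtain ⟨c, hc⟩ := a.exists_pow_inf_eq_pow_smul (M := R) I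
  have hle : (a ^ k • I : Submodule R R) ≤ (LinearMap.ker φ).map (Submodule.subtype I) :=
    Submodule.smul_le.2 fun r hr x hx ↦ ⟨r • ⟨x, hx⟩, (map_smul φ r _).trans
      (congrArg Subtype.val (hk r hr ⟨φ ⟨x, hx⟩, LinearMap.mem_range_self _ _⟩)), rfl⟩
  refine ⟨k + c, fun x hx ↦ ?_⟩
  have hx' : (x : R) ∈ (a ^ k • I : Submodule R R) := by
    have hinf : (x : R) ∈ (a ^ (k + c) • ⊤ ⊓ I : Submodule R R) := ⟨by simpa using hx, x.2⟩
    rw [hc (k + c) (Nat.le_add_left c k), Nat.add_sub_cancel] at hinf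
    exact Submodule.smul_mono le_rfl inf_le_right hinf
  obtain ⟨y, hy, hyx⟩ := hle hx'
  rwa [← Subtype.ext hyx]

instance injective_powTorsion [IsNoetherianRing R] [Module.Injective R Y] :
    Module.Injective R (powTorsion a Y) := by
  refine Module.Baer.injective fun I φ ↦ ?_
  obtain ⟨n, hn⟩ := isPowTorsion_powTorsion.exists_pow_map_eq_zero φ
  let p : I →ₗ[R] R ⧸ a ^ n := (a ^ n).mkQ ∘ₗ I.subtype
  have hp : LinearMap.ker p ≤ LinearMap.ker ((powTorsion a Y).subtype ∘ₗ φ) := fun x hx ↦ by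
    rw [LinearMap.mem_ker, LinearMap.comp_apply, hn x ((Submodule.Quotient.mk_eq_zero _).1 hx),
      map_zero]
  obtain ⟨ψ, hψ⟩ := Module.Injective.out ((LinearMap.ker p).liftQ p le_rfl)
    (LinearMap.ker_eq_bot.1 (Submodule.ker_liftQ_eq_bot _ _ _ le_rfl))
    ((LinearMap.ker p).liftQ ((powTorsion a Y).subtype ∘ₗ φ) hp)
  have hψ_one : ψ (Submodule.Quotient.mk 1) ∈ powTorsion a Y :=
    ⟨n, fun r hr ↦ by rw [← map_smul, smul_quotient_mk_one_eq_zero _ hr, map_zero]⟩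
  refine ⟨LinearMap.toSpanSingleton R _ ⟨_, hψ_one⟩, fun x hx ↦ Subtype.ext ?_⟩
  have hx' : ψ (Submodule.Quotient.mk x) = (φ ⟨x, hx⟩ : Y) :=
    hψ (Submodule.Quotient.mk ⟨x, hx⟩)
  change x • ψ (Submodule.Quotient.mk 1) = _
  rw [← hx', ← map_smul, ← Submodule.Quotient.mk_smul, smul_eq_mul, mul_one]

lemma IsPowTorsion.exists_embedding_in_isPowTorsion [IsNoetherianRing R] (hY : IsPowTorsion a Y) :
    ∃ (E : Type u) (_ : AddCommGroup E) (_ : Module R E) (_ : Module.Injective R E)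
      (_ : IsPowTorsion a E) (f : Y →ₗ[R] E), Function.Injective f := by
  obtain ⟨E, _, _, f, _, hf⟩ := exists_embedding_in_injective (R := R) Y
  exact ⟨powTorsion a E, _, _, inferInstance, isPowTorsion_powTorsion,
    f.codRestrict _ fun y ↦ map_mem_powTorsion f (hY y),
    fun x y h ↦ hf (congrArg Subtype.val h)⟩

/-- If `r` retracts an injective module `E ⊇ Y` onto `Γ_a(E)`, then `W = ker r` is such a module:
it is a direct summand of `E` which meets `Γ_a(E)` trivially. -/
lemma exists_injective_ker_eq_powTorsion [IsNoetherianRing R] (a : Ideal R) (Y : Type u)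
    [AddCommGroup Y] [Module R Y] :
    ∃ (W : Type u) (_ : AddCommGroup W) (_ : Module R W) (f : Y →ₗ[R] W),
      Module.Injective R W ∧ powTorsion a W = ⊥ ∧ LinearMap.ker f = powTorsion a Y := by
  obtain ⟨E, _, _, ι, _, hι⟩ := exists_embedding_in_injective (R := R) Y
  obtain ⟨r, hr⟩ := Module.Injective.out (powTorsion a E).subtype
    (powTorsion a E).injective_subtype LinearMap.id
  have hr' (e : E) (he : e ∈ powTorsion a E) : (r e : E) = e := congrArg _ (hr ⟨e, he⟩)
  let q : E →ₗ[R] LinearMap.ker r :=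
    (LinearMap.id - (powTorsion a E).subtype ∘ₗ r).codRestrict _ fun e ↦ by
      rw [LinearMap.mem_ker, LinearMap.sub_apply, map_sub, sub_eq_zero]
      exact (hr (r e)).symm
  have hq (e : E) : q e = 0 ↔ e = r e := by
    rw [← sub_eq_zero (b := (r e : E))]
    exact Subtype.ext_iff
  refine ⟨LinearMap.ker r, _, _, q ∘ₗ ι,
    module_injective_of_leftInverse (i := (LinearMap.ker r).subtype) (r := q) fun w ↦ ?_, ?_, ?_⟩
  · ext
    change (w : E) - r w = w
    rw [LinearMap.mem_ker.1 w.2, ZeroMemClass.coe_zero, sub_zero]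
  · refine (Submodule.eq_bot_iff _).2 fun w hw ↦ Subtype.ext ?_
    rw [← hr' w (map_mem_powTorsion (LinearMap.ker r).subtype hw), LinearMap.mem_ker.1 w.2]
    rfl
  · ext y
    rw [LinearMap.mem_ker, LinearMap.comp_apply, hq, ← map_mem_powTorsion_iff hι]
    exact ⟨fun h ↦ h ▸ (r (ι y)).2, fun h ↦ (hr' _ h).symm⟩

lemma powTorsion_quotient_powTorsion [IsNoetherianRing R] :
    powTorsion a (Y ⧸ powTorsion a Y) = ⊥ := by
  obtain ⟨W, _, _, f, -, hW, hf⟩ := exists_injective_ker_eq_powTorsion a Y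
  refine (Submodule.eq_bot_iff _).2 fun y hy ↦ ?_
  have hfy := map_mem_powTorsion ((powTorsion a Y).liftQ f hf.ge) hy
  rw [hW, Submodule.mem_bot] at hfy
  exact LinearMap.ker_eq_bot'.1 (Submodule.ker_liftQ_eq_bot _ _ _ hf.le) y hfy

end InjectiveEmbedding

section Vanishing

variable {R : Type u} [CommRing R] {a : Ideal R}
variable {Y : Type u} [AddCommGroup Y] [Module R Y]

lemma bijective_of_exact_of_subsingleton {A B C D : Type*} [AddCommGroup A] [Module R A]
    [AddCommGroup B] [Module R B] [AddCommGroup C] [Module R C] [AddCommGroup D] [Module R D]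
    [Subsingleton A] [Subsingleton D] {f : A →ₗ[R] B} {g : B →ₗ[R] C} {h : C →ₗ[R] D}
    (hfg : Function.Exact f g) (hgh : Function.Exact g h) : Function.Bijective g := by
  refine ⟨(injective_iff_map_eq_zero g).2 fun b hb ↦ ?_,
    fun c ↦ (hgh c).1 (Subsingleton.elim _ _)⟩
  obtain ⟨x, rfl⟩ := (hfg b).1 hb
  rw [Subsingleton.elim x 0, map_zero]

lemma subsingleton_extLimit_succ_of_surjective {E Q : Type u}
    [AddCommGroup E] [Module R E] [AddCommGroup Q] [Module R Q] [Module.Injective R E]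
    {f : Y →ₗ[R] E} {g : E →ₗ[R] Q} (hf : Function.Injective f) (hfg : Function.Exact f g)
    (hg : Function.Surjective g) {i : ℕ} (h : Function.Surjective (extLimitMap a g i)) :
    Subsingleton (ExtLimit a Y (i + 1)) := by
  refine subsingleton_of_forall_eq 0 fun x ↦ ?_
  obtain ⟨z, rfl⟩ := (extLimitConnecting_extLimitMap_exact hf hfg hg i x).1
    (Subsingleton.elim _ _)
  exact (extLimitMap_extLimitConnecting_exact hf hfg hg i z).2 (h z)

lemma subsingleton_extLimit_succ_of_isPowTorsion [IsNoetherianRing R] (hY : IsPowTorsion a Y)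
    (i : ℕ) : Subsingleton (ExtLimit a Y (i + 1)) := by
  induction i generalizing Y with
  | zero =>
    obtain ⟨E, _, _, _, hE, f, hf⟩ := hY.exists_embedding_in_isPowTorsion
    exact subsingleton_extLimit_succ_of_surjective hf (LinearMap.exact_map_mkQ_range f)
      (Submodule.mkQ_surjective _) (extLimitMap_zero_surjective hE (Submodule.mkQ_surjective _))
  | succ i ih =>
    obtain ⟨E, _, _, _, hE, f, hf⟩ := hY.exists_embedding_in_isPowTorsion
    have := ih (hE.of_surjective (LinearMap.range f).mkQ_surjective)
    exact subsingleton_extLimit_succ_of_surjective hf (LinearMap.exact_map_mkQ_range f)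
      (Submodule.mkQ_surjective _) (Function.surjective_to_subsingleton _)

lemma subsingleton_extLimit_of_powTorsion_eq_bot [Module.Injective R Y]
    (hY : powTorsion a Y = ⊥) (i : ℕ) : Subsingleton (ExtLimit a Y i) := by
  cases i with
  | zero =>
    have : Subsingleton (powTorsion a Y) := Submodule.subsingleton_iff_eq_bot.2 hY
    exact (extLimitZeroEquiv a Y).toEquiv.subsingleton
  | succ i => infer_instance

lemma torsionBySet_eq_bot_of_powTorsion_eq_bot (hY : powTorsion a Y = ⊥) :
    Submodule.torsionBySet R Y a = ⊥ :=
  (Submodule.eq_bot_iff _).2 fun y hy ↦ (Submodule.mem_bot R).1 <|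
    hY ▸ ⟨1, by simpa using mem_torsionBySet_ideal_iff.1 hy⟩

lemma subsingleton_moduleExt_zero_of_powTorsion_eq_bot (hY : powTorsion a Y = ⊥) :
    Subsingleton (ModuleExt (ModuleCat.of R (R ⧸ a)) Y 0) := by
  have : Subsingleton (Submodule.torsionBySet R Y a) :=
    Submodule.subsingleton_iff_eq_bot.2 (torsionBySet_eq_bot_of_powTorsion_eq_bot hY)
  exact (extZeroEquiv a Y).toEquiv.subsingleton

lemma nonempty_extLimit_quotient_powTorsion_equiv [IsNoetherianRing R] (a : Ideal R) (Y : Type u)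
    [AddCommGroup Y] [Module R Y] (i : ℕ) :
    Nonempty (ExtLimit a Y (i + 1) ≃ₗ[R] ExtLimit a (Y ⧸ powTorsion a Y) (i + 1)) := by
  have hf := (powTorsion a Y).injective_subtype
  have hfg := LinearMap.exact_subtype_mkQ (powTorsion a Y)
  have hg := (powTorsion a Y).mkQ_surjective
  have := subsingleton_extLimit_succ_of_isPowTorsion (a := a) (Y := powTorsion a Y)
    isPowTorsion_powTorsion
  exact ⟨LinearEquiv.ofBijective _ (bijective_of_exact_of_subsingleton
    (extLimitMap_extLimitMap_exact hf hfg hg (i + 1))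
    (extLimitMap_extLimitConnecting_exact hf hfg hg (i + 1)))⟩

/-- Embed `N = M/Γ_a(M)` into an injective module `W` with `Γ_a(W) = 0`, and take `L = W/N`:
both functors vanish on `W` in every degree. -/
lemma exists_extLimit_equiv_succ [IsNoetherianRing R] (a : Ideal R) (M : Type u)
    [AddCommGroup M] [Module R M] :
    ∃ (L : Type u) (_ : AddCommGroup L) (_ : Module R L),
      (∀ i, Nonempty (ExtLimit a L i ≃ₗ[R] ExtLimit a M (i + 1))) ∧
      ∀ j, Nonempty (ModuleExt (ModuleCat.of R (R ⧸ a)) L j ≃ₗ[R]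
        ModuleExt (ModuleCat.of R (R ⧸ a)) (M ⧸ powTorsion a M) (j + 1)) := by
  obtain ⟨W, _, _, f, _, hW, hf⟩ := exists_injective_ker_eq_powTorsion a M
  let ι : (M ⧸ powTorsion a M) →ₗ[R] W := (powTorsion a M).liftQ f hf.ge
  have hι : Function.Injective ι :=
    LinearMap.ker_eq_bot.1 (Submodule.ker_liftQ_eq_bot _ _ _ hf.le)
  have hιg := LinearMap.exact_map_mkQ_range ι
  have hg := Submodule.mkQ_surjective (LinearMap.range ι)
  have hW' := subsingleton_extLimit_of_powTorsion_eq_bot hW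
  have hWext : ∀ j, Subsingleton (ModuleExt (ModuleCat.of R (R ⧸ a)) W j)
    | 0 => subsingleton_moduleExt_zero_of_powTorsion_eq_bot hW
    | j + 1 => inferInstance
  refine ⟨W ⧸ LinearMap.range ι, _, _, fun i ↦ ?_, fun j ↦ ⟨LinearEquiv.ofBijective _
    (bijective_of_exact_of_subsingleton (extMap_extConnecting_exact hι hιg hg j)
      (extConnecting_extMap_exact hι hιg hg j))⟩⟩
  obtain ⟨e⟩ := nonempty_extLimit_quotient_powTorsion_equiv a M i
  exact ⟨LinearEquiv.ofBijective _ (bijective_of_exact_of_subsingleton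
    (extLimitMap_extLimitConnecting_exact hι hιg hg i)
    (extLimitConnecting_extLimitMap_exact hι hιg hg i)) ≪≫ₗ e.symm⟩

end Vanishing

section FiniteExt

variable {R : Type u} [CommRing R]

/-- `Ext^j_R(R/a, Y)` is a finitely generated `R`-module. -/
def FiniteExt (a : Ideal R) (Y : Type u) [AddCommGroup Y] [Module R Y] (j : ℕ) : Prop :=
  Module.Finite R (ModuleExt (ModuleCat.of R (R ⧸ a)) Y j)

variable {a : Ideal R} {A B C : Type u} [AddCommGroup A] [Module R A] [AddCommGroup B]
  [Module R B] [AddCommGroup C] [Module R C]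

lemma finiteExt_congr (e : A ≃ₗ[R] B) {j : ℕ} : FiniteExt a A j ↔ FiniteExt a B j :=
  Module.Finite.equiv_iff (extMapEquiv _ e j)

lemma finiteExt_zero_iff : FiniteExt a A 0 ↔ Module.Finite R (Submodule.torsionBySet R A a) :=
  Module.Finite.equiv_iff (extZeroEquiv a A)

variable [IsNoetherianRing R]

lemma finite_of_exact {A B C : Type*} [AddCommGroup A] [Module R A] [AddCommGroup B] [Module R B]
    [AddCommGroup C] [Module R C] [Module.Finite R A] [Module.Finite R C] {f : A →ₗ[R] B}
    {g : B →ₗ[R] C} (hfg : Function.Exact f g) : Module.Finite R B :=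
  have := isNoetherian_of_range_eq_ker f g hfg.linearMap_ker_eq.symm
  inferInstance

lemma finiteExt_of_finite [Module.Finite R A] (j : ℕ) : FiniteExt a A j :=
  inferInstanceAs (Module.Finite R (ModuleExt (ModuleCat.of R (R ⧸ a)) A j))

lemma FiniteExt.of_injective (hB : FiniteExt a B 0) {f : A →ₗ[R] B} (hf : Function.Injective f) :
    FiniteExt a A 0 :=
  have : Module.Finite R _ := hB
  Module.Finite.of_injective _ (extMap_zero_injective (X := ModuleCat.of R (R ⧸ a)) hf)

section ShortExact

variable {f : A →ₗ[R] B} {g : B →ₗ[R] C} (hf : Function.Injective f) (hfg : Function.Exact f g)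
  (hg : Function.Surjective g) {j : ℕ}

include hf hfg hg

lemma finiteExt_middle (hA : FiniteExt a A j) (hC : FiniteExt a C j) : FiniteExt a B j :=
  have : Module.Finite R _ := hA
  have : Module.Finite R _ := hC
  finite_of_exact (extMap_extMap_exact (X := ModuleCat.of R (R ⧸ a)) hf hfg hg j)

lemma finiteExt_right (hB : FiniteExt a B j) (hA : FiniteExt a A (j + 1)) : FiniteExt a C j :=
  have : Module.Finite R _ := hB
  have : Module.Finite R _ := hA
  finite_of_exact (extMap_extConnecting_exact (X := ModuleCat.of R (R ⧸ a)) hf hfg hg j)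

lemma finiteExt_left (hC : FiniteExt a C j) (hB : FiniteExt a B (j + 1)) :
    FiniteExt a A (j + 1) :=
  have : Module.Finite R _ := hC
  have : Module.Finite R _ := hB
  finite_of_exact (extConnecting_extMap_exact (X := ModuleCat.of R (R ⧸ a)) hf hfg hg j)

end ShortExact

section Submodule

variable (N : Submodule R A) {j : ℕ}

lemma FiniteExt.submodule_zero (hA : FiniteExt a A 0) : FiniteExt a N 0 :=
  hA.of_injective N.injective_subtype

lemma FiniteExt.of_submodule_quotient (hN : FiniteExt a N j) (hQ : FiniteExt a (A ⧸ N) j) :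
    FiniteExt a A j :=
  finiteExt_middle N.injective_subtype (LinearMap.exact_subtype_mkQ N) N.mkQ_surjective hN hQ

lemma FiniteExt.quotient (hA : FiniteExt a A j) (hN : FiniteExt a N (j + 1)) :
    FiniteExt a (A ⧸ N) j :=
  finiteExt_right N.injective_subtype (LinearMap.exact_subtype_mkQ N) N.mkQ_surjective hA hN

lemma FiniteExt.submodule_succ (hA : FiniteExt a A (j + 1)) (hQ : FiniteExt a (A ⧸ N) j) :
    FiniteExt a N (j + 1) :=
  finiteExt_left N.injective_subtype (LinearMap.exact_subtype_mkQ N) N.mkQ_surjective hQ hA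

end Submodule

lemma FiniteExt.finite_of_pow_smul_eq_zero (hA : FiniteExt a A 0) (n : ℕ)
    (h : ∀ r ∈ a ^ n, ∀ x : A, r • x = 0) : Module.Finite R A := by
  induction n generalizing A with
  | zero =>
    have : Subsingleton A := subsingleton_of_forall_eq 0 fun x ↦ by
      rw [← one_smul R x, h 1 (by rw [pow_zero, Ideal.one_eq_top]; trivial) x]
    infer_instance
  | succ n ih =>
    let N := Submodule.torsionBySet R A a
    have : Module.Finite R N := finiteExt_zero_iff.1 hA
    have : Module.Finite R (A ⧸ N) := by
      refine ih (hA.quotient N (finiteExt_of_finite 1)) fun r hr ↦ ?_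
      refine (Submodule.Quotient.forall _).2 fun x ↦ ?_
      rw [← Submodule.Quotient.mk_smul, Submodule.Quotient.mk_eq_zero]
      refine mem_torsionBySet_ideal_iff.2 fun s hs ↦ ?_
      rw [smul_smul]
      exact h _ (pow_succ' a n ▸ Ideal.mul_mem_mul hs hr) x
    exact Module.Finite.of_submodule_quotient N

end FiniteExt

section FirstNonFiniteDegree

variable {R : Type u} [CommRing R] [IsNoetherianRing R] {a : Ideal R}

variable {M : Type u} [AddCommGroup M] [Module R M]

lemma FiniteExt.powTorsion_zero_one (hM₀ : FiniteExt a M 0) (hM₁ : FiniteExt a M 1) :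
    ∀ j ≤ 1, FiniteExt a (powTorsion a M) j
  | 0, _ => hM₀.submodule_zero _
  | 1, _ => by
    have := subsingleton_moduleExt_zero_of_powTorsion_eq_bot
      (powTorsion_quotient_powTorsion (a := a) (Y := M))
    exact hM₁.submodule_succ _ (Module.Finite.of_finite)

/-- Dimension shifting: pass from `M` to the module `L` of `exists_extLimit_equiv_succ`. -/
theorem finiteExt_extLimit_of_forall_lt (t : ℕ) (hM : ∀ s ≤ t + 1, FiniteExt a M s)
    (hH : ∀ i < t, ∀ j, FiniteExt a (ExtLimit a M i) j) :
    ∀ j ≤ 1, FiniteExt a (ExtLimit a M t) j := by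
  induction t generalizing M with
  | zero =>
    intro j hj
    rw [finiteExt_congr (extLimitZeroEquiv a M)]
    exact (hM 0 (by omega)).powTorsion_zero_one (hM 1 le_rfl) j hj
  | succ t ih =>
    obtain ⟨L, _, _, eH, eExt⟩ := exists_extLimit_equiv_succ a M
    have hL : ∀ s ≤ t + 1, FiniteExt a L s := fun s hs ↦
      (Module.Finite.equiv_iff (eExt s).some).2 <| (hM (s + 1) (by omega)).quotient _ <|
        (finiteExt_congr (extLimitZeroEquiv a M)).1 (hH 0 t.succ_pos (s + 2))
    intro j hj
    rw [← finiteExt_congr (eH t).some]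
    refine ih hL (fun i hi j ↦ ?_) j hj
    rw [finiteExt_congr (eH i).some]
    exact hH (i + 1) (by omega) j

end FirstNonFiniteDegree

section ArtinianCriterion

open Pointwise

lemma exists_forall_ge_eq_of_antitone {α : Type*} [PartialOrder α] [WellFoundedLT α]
    {f : ℕ → ℕ → α} (hf : Antitone f) (hf' : ∀ m, Antitone (f m)) :
    ∃ N, ∀ m ≥ N, f m = f N := by
  obtain ⟨d, hd⟩ := WellFoundedLT.antitone_chain_condition
    (f := fun m ↦ f m m) fun i j hij ↦ (hf hij j).trans (hf' i hij)
  have hcol (n : ℕ) : ∃ k, ∀ m ≥ k, f k n = f m n :=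
    WellFoundedLT.antitone_chain_condition fun i j hij ↦ hf hij n
  choose k hk using hcol
  let N := max d ((Finset.range d).sup k)
  have hdN : d ≤ N := le_max_left _ _
  refine ⟨N, fun m hm ↦ funext fun n ↦ ?_⟩
  obtain hn | hn := lt_or_ge n d
  · have hkN : k n ≤ N := le_max_of_le_right (Finset.le_sup (Finset.mem_range.2 hn))
    rw [← hk n m (hkN.trans hm), hk n N hkN]
  · refine (hf hm n).antisymm ?_
    calc f N n ≤ f d d := (hf hdN n).trans (hf' d hn)
      _ = f (max m n) (max m n) := hd _ (le_max_of_le_right hn)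
      _ ≤ f m n := (hf (le_max_left m n) _).trans (hf' m (le_max_right m n))

variable {R : Type u} [CommRing R] {P : Type u} [AddCommGroup P] [Module R P]

/-- The submodule `x ^ n U ∩ (0 :_P x)` of the `x`-torsion of `P`. For `n ∈ ℕ` these are the
graded pieces of the filtration of `U` by the kernels of the powers of `x`. -/
def socleLayer (x : R) (U : Submodule R P) (n : ℕ) : Submodule R (Submodule.torsionBy R P x) :=
  (x ^ n • U).comap (Submodule.torsionBy R P x).subtype

lemma socleLayer_mono (x : R) (n : ℕ) : Monotone fun U : Submodule R P ↦ socleLayer x U n :=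
  fun _ _ h ↦ Submodule.comap_mono (Submodule.map_mono h)

lemma socleLayer_antitone (x : R) (U : Submodule R P) : Antitone (socleLayer x U) :=
  antitone_nat_of_succ_le fun n ↦ Submodule.comap_mono <| by
    rw [pow_succ, mul_smul]
    exact Submodule.map_mono (Submodule.smul_le_self_of_tower x U)

lemma mem_of_socleLayer_le {x : R} {U V : Submodule R P} (hUV : U ≤ V)
    (h : ∀ n, socleLayer x V n ≤ socleLayer x U n) {n : ℕ} {v : P} (hv : v ∈ V)
    (hn : x ^ n • v = 0) : v ∈ U := by
  induction n generalizing v with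
  | zero => rw [← one_smul R v, ← pow_zero x, hn]; exact U.zero_mem
  | succ n ih =>
    have hxv : x ^ n • v ∈ Submodule.torsionBy R P x := by
      rwa [Submodule.mem_torsionBy_iff, smul_smul, ← pow_succ']
    obtain ⟨u, hu, huv⟩ : x ^ n • v ∈ x ^ n • U :=
      h n (show ⟨x ^ n • v, hxv⟩ ∈ socleLayer x V n from Submodule.smul_mem_pointwise_smul v _ V hv)
    have huv : x ^ n • u = x ^ n • v := huv
    have := ih (V.sub_mem hv (hUV hu)) (by rw [smul_sub, huv, sub_self])
    exact (Submodule.sub_mem_iff_left U hu).1 this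

lemma IsPowTorsion.mono {a b : Ideal R} (hP : IsPowTorsion a P) (h : b ≤ a) : IsPowTorsion b P :=
  fun p ↦ (hP p).imp fun _ hk r hr ↦ hk r (Ideal.pow_right_mono h _ hr)

lemma IsPowTorsion.exists_pow_smul_eq_zero_of_mem {a : Ideal R} (hP : IsPowTorsion a P) {x : R}
    (hx : x ∈ a) (p : P) : ∃ n, x ^ n • p = 0 :=
  (hP p).imp fun k hk ↦ hk _ (Ideal.pow_mem_pow hx k)

lemma IsPowTorsion.isArtinian_of_torsionBy {x : R} (hP : IsPowTorsion (Ideal.span {x}) P)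
    [IsArtinian R (Submodule.torsionBy R P x)] : IsArtinian R P := by
  refine monotone_stabilizes_iff_artinian.1 fun U ↦ ?_
  have hU : Antitone (OrderDual.ofDual ∘ U) := fun _ _ h ↦ U.2 h
  obtain ⟨N, hN⟩ := exists_forall_ge_eq_of_antitone
    (f := fun m n ↦ socleLayer x (OrderDual.ofDual (U m)) n)
    (fun _ _ h n ↦ socleLayer_mono x n (hU h)) fun m ↦ socleLayer_antitone x _
  refine ⟨N, fun m hm ↦ le_antisymm (U.2 hm) fun p hp ↦ ?_⟩
  obtain ⟨n, hn⟩ := hP.exists_pow_smul_eq_zero_of_mem (Ideal.mem_span_singleton_self x) p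
  exact mem_of_socleLayer_le (hU hm) (fun n ↦ (congrFun (hN m hm) n).ge) hp hn

/-- Melkersson's criterion. -/
theorem IsPowTorsion.isArtinian [IsNoetherianRing R] {a : Ideal R} (hP : IsPowTorsion a P)
    [IsArtinian R (Submodule.torsionBySet R P a)] : IsArtinian R P := by
  suffices ∀ (P : Type u) [AddCommGroup P] [Module R P], IsPowTorsion a P →
      IsArtinian R (Submodule.torsionBySet R P a) → IsArtinian R P from this P hP ‹_›
  clear! P
  induction a, IsNoetherian.noetherian a using Submodule.fg_induction with
  | singleton x =>
    intro P _ _ hP hart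
    have : IsArtinian R (Submodule.torsionBy R P x) := by
      rwa [← Submodule.torsionBySet_span_singleton_eq]
    exact hP.isArtinian_of_torsionBy
  | sup b c _ _ hb hc =>
    intro P _ _ hP hart
    have hmem (p : Submodule.torsionBySet R (Submodule.torsionBySet R P b) c) :
        (p : P) ∈ Submodule.torsionBySet R P ↑(b ⊔ c) := by
      refine mem_torsionBySet_ideal_iff.2 fun r hr ↦ ?_
      obtain ⟨s, hs, t, ht, rfl⟩ := Submodule.mem_sup.1 hr
      have hsp : s • (p : P) = 0 := mem_torsionBySet_ideal_iff.1 p.1.2 s hs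
      have htp : t • (p : P) = 0 := congrArg Subtype.val (mem_torsionBySet_ideal_iff.1 p.2 t ht)
      rw [add_smul, hsp, htp, add_zero]
    refine hb P (hP.mono le_sup_left) <| hc _
      ((hP.mono le_sup_right).of_injective (Submodule.injective_subtype _)) ?_
    exact isArtinian_of_injective
      (LinearMap.codRestrict _ (Submodule.subtype _ ∘ₗ Submodule.subtype _) hmem)
      ((LinearMap.injective_codRestrict_iff ..).2 <|
        (Submodule.injective_subtype _).comp (Submodule.injective_subtype _))

end ArtinianCriterion

section Multiplication

lemma exact_ker_subtype_rangeRestrict {R Y Z : Type*} [Ring R] [AddCommGroup Y] [Module R Y]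
    [AddCommGroup Z] [Module R Z] (φ : Y →ₗ[R] Z) :
    Function.Exact φ.ker.subtype φ.rangeRestrict := fun y ↦ by
  rw [Submodule.coe_subtype, Subtype.range_coe, SetLike.mem_coe, LinearMap.mem_ker]
  exact Subtype.ext_iff

variable {R : Type u} [CommRing R] [IsNoetherianRing R] {a : Ideal R}
variable {Y : Type u} [AddCommGroup Y] [Module R Y]

lemma FiniteExt.ker (φ : Y →ₗ[R] Y) (h₀ : FiniteExt a Y 0) {j : ℕ} (hj : j ≤ 1)
    (h : FiniteExt a Y j) : FiniteExt a φ.ker j := by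
  obtain rfl | rfl : j = 0 ∨ j = 1 := by omega
  · exact h.submodule_zero _
  · exact finiteExt_left φ.ker.injective_subtype (exact_ker_subtype_rangeRestrict φ)
      φ.surjective_rangeRestrict (h₀.submodule_zero _) h

lemma FiniteExt.range (φ : Y →ₗ[R] Y) {j : ℕ} (h : FiniteExt a Y j)
    (hK : FiniteExt a φ.ker (j + 1)) : FiniteExt a φ.range j :=
  finiteExt_right φ.ker.injective_subtype (exact_ker_subtype_rangeRestrict φ)
    φ.surjective_rangeRestrict h hK

lemma finiteExt_of_ker_of_range (φ : Y →ₗ[R] Y) {j : ℕ} (hK : FiniteExt a φ.ker j)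
    (hZ : FiniteExt a φ.range j) : FiniteExt a Y j :=
  finiteExt_middle φ.ker.injective_subtype (exact_ker_subtype_rangeRestrict φ)
    φ.surjective_rangeRestrict hK hZ

/-- Multiplication by `x ∈ a` factors as `Y → x Y → Y` and is zero on `Ext^{j+1}_R(R/a, Y)`. -/
lemma finiteExt_succ_of_ker_lsmul_of_quotient_range_lsmul {x : R} (hx : x ∈ a) {j : ℕ}
    (hK : FiniteExt a (LinearMap.lsmul R Y x).ker (j + 1))
    (hC : FiniteExt a (Y ⧸ (LinearMap.lsmul R Y x).range) j) : FiniteExt a Y (j + 1) := by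
  let φ := LinearMap.lsmul R Y x
  let X := ModuleCat.of R (R ⧸ a)
  let p := extMap X φ.rangeRestrict (j + 1)
  let i := extMap X φ.range.subtype (j + 1)
  have hi : Module.Finite R i.ker := by
    have : Module.Finite R (ModuleExt X (Y ⧸ φ.range) j) := hC
    rw [(extConnecting_extMap_exact φ.range.injective_subtype
      (LinearMap.exact_subtype_mkQ _) φ.range.mkQ_surjective j).linearMap_ker_eq]
    infer_instance
  have hpi : p.range ≤ i.ker := by
    rintro _ ⟨v, rfl⟩
    rw [LinearMap.mem_ker, extMap_comp]
    exact (extMap_lsmul x v).trans (smul_moduleExt_eq_zero hx v)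
  have : Module.Finite R p.range :=
    Module.Finite.of_injective (Submodule.inclusion hpi) (Submodule.inclusion_injective hpi)
  have : Module.Finite R (ModuleExt X φ.ker (j + 1)) := hK
  refine finite_of_exact (f := extMap X φ.ker.subtype (j + 1)) (g := p.rangeRestrict) fun v ↦ ?_
  rw [← extMap_extMap_exact φ.ker.injective_subtype (exact_ker_subtype_rangeRestrict φ)
    φ.surjective_rangeRestrict (j + 1) v]
  exact Subtype.ext_iff

end Multiplication

section MinimalSupport

variable {R : Type u} [CommRing R] [IsNoetherianRing R] {a : Ideal R}
variable {Y : Type u} [AddCommGroup Y] [Module R Y]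

lemma isPowTorsion_iff_support_subset_zeroLocus :
    IsPowTorsion a Y ↔ Module.support R Y ⊆ PrimeSpectrum.zeroLocus a := by
  refine ⟨fun h p hp r hr ↦ ?_, fun h y ↦ ?_⟩
  · obtain ⟨y, hy⟩ := Module.mem_support_iff_exists_annihilator.1 hp
    obtain ⟨k, hk⟩ := h.exists_pow_smul_eq_zero_of_mem hr y
    exact p.isPrime.mem_of_pow_mem k (hy ((Submodule.mem_annihilator_span_singleton _ _).2 hk))
  · have ha : a ≤ (Submodule.span R {y}).annihilator.radical := by
      rw [Ideal.radical_eq_sInf]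
      exact le_sInf fun p ⟨hyp, hp⟩ ↦
        h (Module.mem_support_iff_exists_annihilator.2 ⟨y, hyp⟩ : (⟨p, hp⟩ : PrimeSpectrum R) ∈ _)
    obtain ⟨k, hk⟩ := Ideal.exists_pow_le_of_le_radical_of_fg ha (IsNoetherian.noetherian a)
    exact ⟨k, fun r hr ↦ (Submodule.mem_annihilator_span_singleton _ _).1 (hk hr)⟩

lemma mem_support_of_mem_associatedPrimes {p : PrimeSpectrum R}
    (hp : p.asIdeal ∈ associatedPrimes R Y) : p ∈ Module.support R Y := by
  obtain ⟨-, y, hy⟩ := isAssociatedPrime_iff.1 hp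
  refine Module.mem_support_iff_exists_annihilator.2 ⟨y, fun r hr ↦ ?_⟩
  rwa [hy, Submodule.mem_colon_singleton, Submodule.mem_bot,
    ← Submodule.mem_annihilator_span_singleton]

lemma mem_associatedPrimes_of_minimal_support {p : PrimeSpectrum R}
    (hp : Minimal (· ∈ Module.support R Y) p) : p.asIdeal ∈ associatedPrimes R Y := by
  obtain ⟨y, hy⟩ := Module.mem_support_iff_exists_annihilator.1 hp.1
  have hmin : p.asIdeal ∈ (Submodule.span R {y}).annihilator.minimalPrimes :=
    ⟨⟨p.isPrime, hy⟩, fun Q hQ hQp ↦ hp.2 (y := ⟨Q, hQ.1⟩)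
      (Module.mem_support_iff_exists_annihilator.2 ⟨y, hQ.2⟩) hQp⟩
  exact associatedPrimes.subset_of_injective (Submodule.injective_subtype _)
    (Module.associatedPrimes.minimalPrimes_annihilator_subset_associatedPrimes R _ hmin)

lemma IsPowTorsion.associatedPrimes_subset_torsionBySet (hY : IsPowTorsion a Y) :
    associatedPrimes R Y ⊆ associatedPrimes R (Submodule.torsionBySet R Y a) := fun p hp ↦ by
  have hprime : p.IsPrime := hp.1
  have hap : a ≤ p := isPowTorsion_iff_support_subset_zeroLocus.1 hY
    (mem_support_of_mem_associatedPrimes (p := ⟨p, hprime⟩) hp)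
  obtain ⟨-, f, hf⟩ := (isAssociatedPrime_iff_exists_injective_linearMap p Y).1 hp
  have hfa (x : R ⧸ p) : f x ∈ Submodule.torsionBySet R Y a :=
    mem_torsionBySet_ideal_iff.2 fun r hr ↦ by
      obtain ⟨x, rfl⟩ := Ideal.Quotient.mk_surjective x
      rw [← map_smul, Algebra.smul_def, Ideal.Quotient.algebraMap_eq,
        Ideal.Quotient.eq_zero_iff_mem.2 (hap hr), zero_mul, map_zero]
  exact (isAssociatedPrime_iff_exists_injective_linearMap p _).2
    ⟨hprime, f.codRestrict _ hfa, (LinearMap.injective_codRestrict_iff ..).2 hf⟩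

lemma IsPowTorsion.finite_setOf_minimal_support (hY : IsPowTorsion a Y)
    [Module.Finite R (Submodule.torsionBySet R Y a)] :
    {p | Minimal (· ∈ Module.support R Y) p}.Finite :=
  ((associatedPrimes.finite R (Submodule.torsionBySet R Y a)).preimage
    fun _ _ _ _ ↦ PrimeSpectrum.ext).subset fun _ hp ↦
      hY.associatedPrimes_subset_torsionBySet (mem_associatedPrimes_of_minimal_support hp)

end MinimalSupport

section LocalizationAtMinimalSupport

lemma isArtinian_torsionBySet_maximalIdeal {A : Type*} [CommRing A] [IsLocalRing A]
    (L : Type*) [AddCommGroup L] [Module A L]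
    [Module.Finite A (Submodule.torsionBySet A L (IsLocalRing.maximalIdeal A))] :
    IsArtinian A (Submodule.torsionBySet A L (IsLocalRing.maximalIdeal A)) := by
  let := Ideal.Quotient.field (IsLocalRing.maximalIdeal A)
  have : IsSemisimpleModule A (Submodule.torsionBySet A L (IsLocalRing.maximalIdeal A)) :=
    (Submodule.torsionBySet_isTorsionBySet _).isSemisimpleModule_iff.1 inferInstance
  infer_instance

variable {R : Type u} [CommRing R] {a : Ideal R} {Y : Type u} [AddCommGroup Y] [Module R Y]

lemma maximalIdeal_le_of_mem_support_localizedModule {p : PrimeSpectrum R}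
    (hp : Minimal (· ∈ Module.support R Y) p) {P : PrimeSpectrum (Localization.AtPrime p.asIdeal)}
    (hP : P ∈ Module.support (Localization.AtPrime p.asIdeal)
      (LocalizedModule p.asIdeal.primeCompl Y)) :
    IsLocalRing.maximalIdeal (Localization.AtPrime p.asIdeal) ≤ P.asIdeal := by
  have hpP : p.asIdeal ≤ P.asIdeal.under R := by
    refine hp.2 (y := ⟨P.asIdeal.under R, inferInstance⟩) ?_ <|
      (Ideal.comap_mono (IsLocalRing.le_maximalIdeal P.isPrime.ne_top)).trans
        Localization.AtPrime.under_maximalIdeal.le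
    refine Module.mem_support_iff'.2 ?_
    obtain ⟨z, hz⟩ := Module.mem_support_iff'.1 hP
    induction z using LocalizedModule.induction_on with | h y s => ?_
    refine ⟨y, fun r hr hry ↦ hz _ hr ?_⟩
    rw [algebraMap_smul, LocalizedModule.smul'_mk, hry, LocalizedModule.zero_mk]
  rw [← Localization.AtPrime.map_eq_maximalIdeal]
  exact Ideal.map_le_iff_le_comap.2 hpP

variable [IsNoetherianRing R]

lemma exists_smul_mem_torsionBySet (p : PrimeSpectrum R) {y : Y}
    (h : ∀ r ∈ a, ∃ s ∉ p.asIdeal, s • r • y = 0) :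
    ∃ s ∉ p.asIdeal, s • y ∈ Submodule.torsionBySet R Y a := by
  let N : Submodule R Y := Submodule.map (LinearMap.toSpanSingleton R Y y) a
  have hN : p ∉ Module.support R N := by
    refine Module.notMem_support_iff'.2 ?_
    rintro ⟨_, r, hr, rfl⟩
    exact (h r hr).imp fun s hs ↦ hs.imp_right Subtype.ext
  rw [Module.mem_support_iff_of_finite, SetLike.not_le_iff_exists] at hN
  obtain ⟨s, hsN, hsp⟩ := hN
  refine ⟨s, hsp, mem_torsionBySet_ideal_iff.2 fun r hr ↦ ?_⟩
  rw [smul_comm]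
  exact congrArg Subtype.val (Module.mem_annihilator.1 hsN ⟨r • y, r, hr, rfl⟩)

lemma torsionBySet_maximalIdeal_le_localized {p : PrimeSpectrum R} (hap : a ≤ p.asIdeal) :
    Submodule.torsionBySet (Localization.AtPrime p.asIdeal)
        (LocalizedModule p.asIdeal.primeCompl Y)
        (IsLocalRing.maximalIdeal (Localization.AtPrime p.asIdeal)) ≤
      (Submodule.torsionBySet R Y a).localized p.asIdeal.primeCompl := fun z hz ↦ by
  induction z using LocalizedModule.induction_on with | h y s => ?_
  have hy (r : R) (hr : r ∈ a) : ∃ s ∉ p.asIdeal, s • r • y = 0 := by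
    have hrm : algebraMap R (Localization.AtPrime p.asIdeal) r ∈
        IsLocalRing.maximalIdeal (Localization.AtPrime p.asIdeal) :=
      (IsLocalization.AtPrime.to_map_mem_maximal_iff _ p.asIdeal r).2 (hap hr)
    have hrz := mem_torsionBySet_ideal_iff.1 hz _ hrm
    rw [algebraMap_smul, LocalizedModule.smul'_mk, IsLocalizedModule.mk_eq_mk',
      IsLocalizedModule.mk'_eq_zero'] at hrz
    obtain ⟨u, hu⟩ := hrz
    exact ⟨u, u.2, hu⟩
  obtain ⟨u, hu, huy⟩ := exists_smul_mem_torsionBySet p hy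
  refine (Submodule.mem_localized' ..).2 ⟨u • y, huy, ⟨u, hu⟩ * s, ?_⟩
  rw [IsLocalizedModule.mk_eq_mk']
  exact IsLocalizedModule.mk'_cancel_left _ y ⟨u, hu⟩ s

lemma IsPowTorsion.isArtinian_localizedModule (hY : IsPowTorsion a Y)
    [Module.Finite R (Submodule.torsionBySet R Y a)] {p : PrimeSpectrum R}
    (hp : Minimal (· ∈ Module.support R Y) p) :
    IsArtinian (Localization.AtPrime p.asIdeal) (LocalizedModule p.asIdeal.primeCompl Y) := by
  let A := Localization.AtPrime p.asIdeal
  let L := LocalizedModule p.asIdeal.primeCompl Y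
  have hL : IsPowTorsion (IsLocalRing.maximalIdeal A) L :=
    isPowTorsion_iff_support_subset_zeroLocus.2 fun _ ↦
      maximalIdeal_le_of_mem_support_localizedModule hp
  have hap : a ≤ p.asIdeal := isPowTorsion_iff_support_subset_zeroLocus.1 hY hp.1
  have : Module.Finite A ((Submodule.torsionBySet R Y a).localized p.asIdeal.primeCompl) :=
    Module.Finite.of_isLocalizedModule p.asIdeal.primeCompl
      (Submodule.toLocalized p.asIdeal.primeCompl (Submodule.torsionBySet R Y a))
  have : Module.Finite A (Submodule.torsionBySet A L (IsLocalRing.maximalIdeal A)) :=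
    Module.Finite.of_injective _
      (Submodule.inclusion_injective (torsionBySet_maximalIdeal_le_localized hap))
  have := isArtinian_torsionBySet_maximalIdeal (A := A) L
  exact hL.isArtinian

end LocalizationAtMinimalSupport

section DimensionDrop

lemma krullDim_lt_of_forall_not_minimal {α : Type*} [PartialOrder α] {S T : Set α} (hTS : T ⊆ S)
    (hT : ∀ p ∈ T, ¬ Minimal (· ∈ S) p) {d : ℕ} (hS : Order.krullDim S < (d + 1 : ℕ)) :
    Order.krullDim T < d := by
  refine Order.krullDim_lt_coe_iff.2 fun l ↦ ?_
  obtain ⟨q, hq, hql⟩ : ∃ q ∈ S, q < l.head := by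
    simpa [Minimal, hTS l.head.2, lt_iff_le_not_ge] using hT l.head l.head.2
  have : 0 + l.length + 1 < d + 1 := Order.krullDim_lt_coe_iff.1 hS <|
    RelSeries.cons (l.map (Set.inclusion hTS) fun _ _ h ↦ h : LTSeries S) ⟨q, hq⟩ hql
  omega

variable {R : Type u} [CommRing R] {a : Ideal R} {Y : Type u} [AddCommGroup Y] [Module R Y]

lemma eventually_notMem_support_quotient_range_lsmul {p : PrimeSpectrum R}
    [IsArtinian (Localization.AtPrime p.asIdeal) (LocalizedModule p.asIdeal.primeCompl Y)]
    (x : R) :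
    ∀ᶠ n in Filter.atTop, p ∉ Module.support R ((LinearMap.lsmul R Y (x ^ n)).range ⧸
      (LinearMap.lsmul R (LinearMap.lsmul R Y (x ^ n)).range (x ^ n)).range) := by
  let A := Localization.AtPrime p.asIdeal
  let L := LocalizedModule p.asIdeal.primeCompl Y
  let f : Module.End A L := Algebra.lsmul A A L (algebraMap R A x)
  have hf (n : ℕ) (z : L) : (f ^ n) z = x ^ n • z :=
    calc (f ^ n) z = algebraMap R A x ^ n • z :=
          (LinearMap.congr_fun (map_pow (Algebra.lsmul A A L) (algebraMap R A x) n) z).symm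
      _ = x ^ n • z := by rw [← map_pow, algebraMap_smul]
  filter_upwards [f.eventually_iInf_range_pow_eq] with n hn
  refine Module.notMem_support_iff'.2 fun z ↦ ?_
  obtain ⟨⟨_, y, rfl⟩, rfl⟩ := Submodule.Quotient.mk_surjective _ z
  obtain ⟨z, hz⟩ : LocalizedModule.mk (x ^ n • y) 1 ∈ (f ^ (n + n)).range := by
    have hmem : LocalizedModule.mk (x ^ n • y) 1 ∈ ⨅ m, (f ^ m).range :=
      hn.ge ⟨LocalizedModule.mk y 1, by rw [hf, LocalizedModule.smul'_mk]⟩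
    exact (Submodule.mem_iInf _).1 hmem (n + n)
  induction z using LocalizedModule.induction_on with | h y' s => ?_
  rw [hf, LocalizedModule.smul'_mk, LocalizedModule.mk_eq] at hz
  obtain ⟨u, hu⟩ := hz
  refine ⟨u * s, (u * s).2, ?_⟩
  rw [← Submodule.Quotient.mk_smul, Submodule.Quotient.mk_eq_zero]
  refine ⟨⟨x ^ n • u • y', _, rfl⟩, Subtype.ext ?_⟩
  calc x ^ n • x ^ n • (u : R) • y' = (u : R) • x ^ (n + n) • y' := by module
    _ = (u : R) • (s : R) • x ^ n • y := by
      simpa only [one_smul, Submonoid.smul_def] using hu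
    _ = ((u : R) * s) • x ^ n • y := smul_smul _ _ _

lemma IsPowTorsion.eventually_supportDim_quotient_range_lsmul_lt [IsNoetherianRing R]
    (hY : IsPowTorsion a Y) [Module.Finite R (Submodule.torsionBySet R Y a)] (x : R) {d : ℕ}
    (hd : Module.supportDim R Y < (d + 1 : ℕ)) :
    ∀ᶠ n in Filter.atTop, Module.supportDim R ((LinearMap.lsmul R Y (x ^ n)).range ⧸
      (LinearMap.lsmul R (LinearMap.lsmul R Y (x ^ n)).range (x ^ n)).range) < d := by
  have hmin := hY.finite_setOf_minimal_support.eventually_all.2 fun p hp ↦ by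
    have := hY.isArtinian_localizedModule hp
    exact eventually_notMem_support_quotient_range_lsmul (Y := Y) (p := p) x
  filter_upwards [hmin] with n hn
  refine krullDim_lt_of_forall_not_minimal ?_ (fun p hp hmin ↦ hn p hmin hp) hd
  exact (Module.support_subset_of_surjective _ (Submodule.mkQ_surjective _)).trans
    (Module.support_subset_of_injective _ (Submodule.injective_subtype _))

end DimensionDrop

section Cofiniteness

variable {R : Type u} [CommRing R] [IsNoetherianRing R] {a : Ideal R}
variable {Y : Type u} [AddCommGroup Y] [Module R Y]

lemma FiniteExt.finite_of_le_radical_annihilator (h₀ : FiniteExt a Y 0)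
    (ha : a ≤ (Module.annihilator R Y).radical) : Module.Finite R Y := by
  obtain ⟨k, hk⟩ := Ideal.exists_pow_le_of_le_radical_of_fg ha (IsNoetherian.noetherian a)
  exact h₀.finite_of_pow_smul_eq_zero k fun r hr ↦ Module.mem_annihilator.1 (hk hr)

lemma finiteExt_of_lsmul {w : R} (hw : w ∈ a) {d : ℕ} (hd : d ≤ 1)
    (hext : ∀ j ≤ d, FiniteExt a Y j)
    (hker : ∀ (N : Type u) [AddCommGroup N] [Module R N] (f : N →ₗ[R] Y), Function.Injective f →
      w ∈ Module.annihilator R N → (∀ j ≤ d, FiniteExt a N j) → ∀ j, FiniteExt a N j)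
    (hquot : (∀ j < d, FiniteExt a ((LinearMap.lsmul R Y w).range ⧸
        (LinearMap.lsmul R (LinearMap.lsmul R Y w).range w).range) j) →
      ∀ j, FiniteExt a ((LinearMap.lsmul R Y w).range ⧸
        (LinearMap.lsmul R (LinearMap.lsmul R Y w).range w).range) j) :
    ∀ j, FiniteExt a Y j := by
  have hker_lsmul (Z : Submodule R Y) (hZ : ∀ j ≤ d, FiniteExt a Z j) :
      ∀ j, FiniteExt a (LinearMap.lsmul R Z w).ker j :=
    hker _ (Z.subtype ∘ₗ Submodule.subtype _)
      ((Submodule.injective_subtype _).comp (Submodule.injective_subtype _))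
      (Module.mem_annihilator.2 fun z ↦ Subtype.ext z.2)
      fun j hj ↦ (hZ 0 d.zero_le).ker _ (hj.trans hd) (hZ j hj)
  let Z := (LinearMap.lsmul R Y w).range
  have hK : ∀ j, FiniteExt a (LinearMap.lsmul R Y w).ker j :=
    hker _ (Submodule.subtype _) (Submodule.injective_subtype _)
      (Module.mem_annihilator.2 fun y ↦ Subtype.ext y.2)
      fun j hj ↦ (hext 0 d.zero_le).ker _ (hj.trans hd) (hext j hj)
  have hZ (j : ℕ) (hj : j ≤ d) : FiniteExt a Z j := (hext j hj).range _ (hK (j + 1))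
  have hKZ := hker_lsmul Z hZ
  have hC := hquot fun j hj ↦ (hZ j hj.le).quotient _ ((hZ (j + 1) hj).range _ (hKZ (j + 2)))
  have hZ' (j : ℕ) : FiniteExt a Z j := by
    cases j with
    | zero => exact hZ 0 d.zero_le
    | succ j => exact finiteExt_succ_of_ker_lsmul_of_quotient_range_lsmul hw (hKZ _) (hC j)
  exact fun j ↦ finiteExt_of_ker_of_range _ (hK j) (hZ' j)

theorem IsPowTorsion.finiteExt_of_supportDim_lt (hY : IsPowTorsion a Y) {d : ℕ} (hd : d ≤ 2)
    (hdim : Module.supportDim R Y < d) (hext : ∀ j < d, FiniteExt a Y j) :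
    ∀ j, FiniteExt a Y j := by
  induction d generalizing Y with
  | zero =>
    have : Subsingleton Y := (Module.supportDim_eq_bot_iff_subsingleton R Y).1 <|
      WithBot.lt_coe_bot.1 hdim
    exact finiteExt_of_finite
  | succ d ih =>
    induction hI : Module.annihilator R Y using WellFoundedGT.induction generalizing Y with
    | ind I ihI =>
    subst hI
    have h₀ : FiniteExt a Y 0 := hext 0 d.succ_pos
    by_cases ha : a ≤ (Module.annihilator R Y).radical
    · have := h₀.finite_of_le_radical_annihilator ha
      exact finiteExt_of_finite
    obtain ⟨x, hxa, hx⟩ := SetLike.not_le_iff_exists.1 ha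
    have : Module.Finite R (Submodule.torsionBySet R Y a) := finiteExt_zero_iff.1 h₀
    obtain ⟨n, hn, hn₀⟩ := ((hY.eventually_supportDim_quotient_range_lsmul_lt x hdim).and
      (Filter.eventually_gt_atTop 0)).exists
    have hw : x ^ n ∉ Module.annihilator R Y := fun h ↦ hx ⟨n, h⟩
    refine finiteExt_of_lsmul (Ideal.pow_mem_of_mem a hxa n hn₀) (by omega)
      (fun j hj ↦ hext j (Nat.lt_succ_of_le hj)) (fun N _ _ f hf hwN hN ↦ ?_) fun hC ↦ ?_
    · have hann : Module.annihilator R Y < Module.annihilator R N :=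
        SetLike.lt_iff_le_and_exists.2 ⟨f.annihilator_le_of_injective hf, x ^ n, hwN, hw⟩
      exact ihI _ hann (hY.of_injective hf)
        ((Module.supportDim_le_of_injective f hf).trans_lt hdim)
        (fun j hj ↦ hN j (Nat.le_of_lt_succ hj)) rfl
    · exact ih ((hY.of_injective (Submodule.injective_subtype _)).of_surjective
        (Submodule.mkQ_surjective _)) (by omega) hn hC

end Cofiniteness

section FiniteInDimensionLEOne

variable {R : Type u} [CommRing R] {a : Ideal R}

lemma finite_extQuot_iff {M : ModuleCat.{u} R} {j : ℕ} :
    Module.Finite R (extQuot a j M) ↔ FiniteExt a M j :=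
  Module.Finite.equiv_iff (derivedExtEquiv (projectiveResolution _) M j)

lemma IsPowTorsion.finiteExt_of_supportDim_quotient_le_one [IsNoetherianRing R] {Y : Type u}
    [AddCommGroup Y] [Module R Y] (hY : IsPowTorsion a Y) {N : Submodule R Y} (hN : N.FG)
    (hdim : Module.supportDim R (Y ⧸ N) ≤ 1) (hext : ∀ j ≤ 1, FiniteExt a Y j) :
    ∀ j, FiniteExt a Y j := by
  have : Module.Finite R N := Module.Finite.iff_fg.2 hN
  have hQ : ∀ j, FiniteExt a (Y ⧸ N) j :=
    (hY.of_surjective N.mkQ_surjective).finiteExt_of_supportDim_lt le_rfl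
      (hdim.trans_lt (by norm_num)) fun j hj ↦
        (hext j (Nat.le_of_lt_succ hj)).quotient N (finiteExt_of_finite _)
  exact fun j ↦ .of_submodule_quotient N (finiteExt_of_finite j) (hQ j)

end FiniteInDimensionLEOne

theorem stmt12_general {R : Type u} [CommRing R] [IsNoetherianRing R] (a : Ideal R)
    (M : ModuleCat.{u} R) (t : ℕ) (hM : ∀ s ≤ t + 1, Module.Finite R (extQuot a s M))
    (hFD : ∀ i < t, ∃ N : Submodule R ((localCohomology a i).obj M), N.FG ∧
      Module.supportDim R (((localCohomology a i).obj M) ⧸ N) ≤ 1) :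
    ∀ j ≤ 1, Module.Finite R (extQuot a j ((localCohomology a t).obj M)) := by
  simp only [finite_extQuot_iff, finiteExt_congr (localCohomologyEquiv a M t)] at hM ⊢
  refine finiteExt_extLimit_of_forall_lt t hM fun i hi ↦ ?_
  induction i using Nat.strong_induction_on with | h i ih => ?_
  have hext : ∀ j ≤ 1, FiniteExt a ((localCohomology a i).obj M) j := by
    simp only [finiteExt_congr (localCohomologyEquiv a M i)]
    exact finiteExt_extLimit_of_forall_lt i (fun s hs ↦ hM s (by omega)) fun k hk ↦
      ih k hk (hk.trans hi)
  have htors : IsPowTorsion a ((localCohomology a i).obj M) :=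
    (isPowTorsion_extLimit i).of_injective (localCohomologyEquiv a M i).injective
  obtain ⟨N, hN, hdim⟩ := hFD i hi
  simp only [← finiteExt_congr (localCohomologyEquiv a M i)]
  exact htors.finiteExt_of_supportDim_quotient_le_one hN hdim hext

theorem stmt12 {R : Type u} [CommRing R] [IsNoetherianRing R] (a : Ideal R)
    (n : ℕ) (hn : n ≤ 1) (M : ModuleCat.{u} R) (hM : Nontrivial M)
    (hfg : Module.Finite R M) (t : ℕ)
    (hFD : ∀ i < t, ∃ N : Submodule R ((localCohomology a i).obj M), N.FG ∧
      Order.krullDim (Module.support R (((localCohomology a i).obj M) ⧸ N)) ≤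
        (n : WithBot (WithTop ℕ))) :
    ∀ j ≤ n, Module.Finite R (extQuot a j ((localCohomology a t).obj M)) := fun j hj ↦
  stmt12_general a M t (fun s _ ↦ finite_extQuot_iff.2 (finiteExt_of_finite s))
    (fun i hi ↦ (hFD i hi).imp fun _ h ↦
      h.imp_right (·.trans ((Nat.mono_cast hn).trans_eq Nat.cast_one))) j (hj.trans hn)
end

section
/- Let R be a commutative noetherian ring with identity, a an ideal of R, and M an a-torsion R-module with dim_R M ≤ 2. If Hom_R(R/a, M) is finitely generated, then for every prime ideal p in the set T_M = {p ∈ Supp_R M | dim R/p = 2}, the localization M_p is an artinian R_p-module. -/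
universe u

open CategoryTheory

/-!
Since `dim Supp M ≤ 2 = dim R/p`, the prime `p` is minimal in `Supp M`, so the support of `M_p` is
contained in the closed point of `Spec R_p`. The module `Hom(R/a, M) ≅ (0 :_M a)` is finitely
generated, hence so is its localization `(0 :_{M_p} a R_p)`; being supported at the closed point,
the latter is artinian. Melkersson's criterion then lifts the chain condition to `M_p`: a module
which is torsion for a finitely generated ideal `b` is artinian as soon as its submodule of
elements killed by `b` is.
-/

section Order

variable {α : Type*}

theorem exists_forall_ge_eq_of_antitone₂ [PartialOrder α] [WellFoundedLT α] {g : ℕ → ℕ → α}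
    (hg : Antitone g) (hg' : ∀ i, Antitone (g i)) : ∃ i₀, ∀ i, i₀ ≤ i → g i₀ = g i := by
  have diagonal_antitone : Antitone fun i => g i i :=
    fun i j hij => (hg hij j).trans (hg' i hij)
  obtain ⟨k, hk⟩ := WellFoundedLT.antitone_chain_condition diagonal_antitone
  choose s hs using fun n =>
    WellFoundedLT.antitone_chain_condition fun i j (hij : i ≤ j) => hg hij n
  refine ⟨k + (Finset.range k).sup s, fun i hi => (le_antisymm (hg hi) fun n => ?_).symm⟩
  obtain hn | hn := lt_or_ge n k
  · have hsn : s n ≤ k + (Finset.range k).sup s :=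
      (Finset.le_sup (Finset.mem_range.2 hn)).trans (Nat.le_add_left _ _)
    exact ((hs n _ hsn).symm.trans (hs n i (hsn.trans hi))).le
  · calc g (k + (Finset.range k).sup s) n ≤ g k n := hg (Nat.le_add_right _ _) n
      _ ≤ g k k := hg' k hn
      _ = g (max i n) (max i n) := hk _ (hn.trans (le_max_right _ _))
      _ ≤ g i (max i n) := hg (le_max_left _ _) _
      _ ≤ g i n := hg' i (le_max_right _ _)

theorem minimal_mem_of_krullDim_le_krullDim_Ici [Preorder α] {s : Set α} (hs : IsUpperSet s)
    {p : α} (hp : p ∈ s) (hdim : Order.krullDim s ≤ Order.krullDim (Set.Ici p))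
    (hfin : Order.krullDim (Set.Ici p) < ⊤) : Minimal (· ∈ s) p := by
  refine ⟨hp, fun q hq hqp => ?_⟩
  by_contra hpq
  have succ_le : Order.coheight p + 1 ≤ Order.coheight q :=
    Order.coheight_add_one_le (lt_of_le_not_ge hqp hpq)
  rw [← Order.coheight_eq_krullDim_Ici] at hdim hfin
  have coheight_le : Order.coheight q ≤ Order.coheight p := by
    rw [← WithBot.coe_le_coe, Order.coheight_eq_krullDim_Ici q]
    exact (Order.krullDim_le_of_strictMono (Set.inclusion (hs.Ici_subset hq))
      fun _ _ h => h).trans hdim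
  have hlt := (ENat.add_one_le_iff (WithBot.coe_lt_coe.1 hfin).ne).1 (succ_le.trans coheight_le)
  exact hlt.false

end Order

section Module

variable {R M : Type*} [CommRing R] [AddCommGroup M] [Module R M]

/-- `M` is `a`-torsion: every element of `M` is annihilated by some power of the ideal `a`. -/
def IsIdealTorsion (a : Ideal R) (M : Type*) [AddCommGroup M] [Module R M] : Prop :=
  ∀ m : M, ∃ n : ℕ, ∀ r ∈ a ^ n, r • m = 0

namespace IsIdealTorsion

variable {a b : Ideal R}

theorem mono (h : IsIdealTorsion a M) (hba : b ≤ a) : IsIdealTorsion b M := fun m =>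
  let ⟨n, hn⟩ := h m
  ⟨n, fun r hr => hn r (Ideal.pow_right_mono hba n hr)⟩

theorem submodule (h : IsIdealTorsion a M) (N : Submodule R M) : IsIdealTorsion a N := fun m =>
  let ⟨n, hn⟩ := h m
  ⟨n, fun r hr => Subtype.ext (hn r hr)⟩

end IsIdealTorsion

section Melkersson

variable {x : R} {N N' : Submodule R M}

/-- The elements of `x ^ n N` annihilated by `x`, as a submodule of `(0 :_M x)`. In the proof of
Melkersson's criterion they play the role which the ideals of leading coefficients in degree `n`
play in Hilbert's basis theorem. -/
def torsionSlice (x : R) (N : Submodule R M) (n : ℕ) : Submodule R (Submodule.torsionBy R M x) :=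
  (N.map (LinearMap.lsmul R M (x ^ n))).submoduleOf (Submodule.torsionBy R M x)

theorem mem_torsionSlice {n : ℕ} {y : Submodule.torsionBy R M x} :
    y ∈ torsionSlice x N n ↔ ∃ m ∈ N, x ^ n • m = y := Iff.rfl

theorem torsionSlice_mono (x : R) : Monotone (torsionSlice (M := M) x) :=
  fun _ _ h _ => Submodule.comap_mono (Submodule.map_mono h)

theorem torsionSlice_antitone (x : R) (N : Submodule R M) : Antitone (torsionSlice x N) := by
  intro n k hnk y hy
  rw [mem_torsionSlice] at hy ⊢
  obtain ⟨m, hm, hmy⟩ := hy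
  exact ⟨x ^ (k - n) • m, N.smul_mem _ hm, by rw [smul_smul, pow_mul_pow_sub x hnk, hmy]⟩

theorem le_of_torsionSlice_le (htor : IsIdealTorsion (Ideal.span {x}) M) (hle : N ≤ N')
    (h : torsionSlice x N' ≤ torsionSlice x N) : N' ≤ N := by
  have mem_of_pow_smul_eq_zero : ∀ n, ∀ m ∈ N', x ^ n • m = 0 → m ∈ N := by
    intro n
    induction n with
    | zero =>
      intro m _ hm
      rw [pow_zero, one_smul] at hm
      exact hm ▸ N.zero_mem
    | succ n ih =>
      intro m hmN' hm
      have hxm : x ^ n • m ∈ Submodule.torsionBy R M x := by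
        rwa [Submodule.mem_torsionBy_iff, smul_smul, ← pow_succ']
      have hslice : ⟨x ^ n • m, hxm⟩ ∈ torsionSlice x N' n := mem_torsionSlice.2 ⟨m, hmN', rfl⟩
      obtain ⟨m', hm', heq⟩ := mem_torsionSlice.1 (h n hslice)
      have hdiff : m - m' ∈ N :=
        ih _ (N'.sub_mem hmN' (hle hm')) (by rw [smul_sub, heq, sub_self])
      exact (N.sub_mem_iff_left hm').1 hdiff
  intro m hm
  obtain ⟨n, hn⟩ := htor m
  exact mem_of_pow_smul_eq_zero n m hm
    (hn _ (Ideal.pow_mem_pow (Ideal.mem_span_singleton_self x) n))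

theorem isArtinian_of_isArtinian_torsionBy (htor : IsIdealTorsion (Ideal.span {x}) M)
    (hart : IsArtinian R (Submodule.torsionBy R M x)) : IsArtinian R M := by
  refine monotone_stabilizes_iff_artinian.1 fun N => ?_
  obtain ⟨i₀, hi₀⟩ := exists_forall_ge_eq_of_antitone₂
    (g := fun i => torsionSlice x (N i).ofDual)
    (fun i j hij => torsionSlice_mono x (N.monotone hij))
    (fun i => torsionSlice_antitone x _)
  exact ⟨i₀, fun i hi => le_antisymm (N.monotone hi)
    (le_of_torsionSlice_le htor (N.monotone hi) (hi₀ i hi).le)⟩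

theorem isArtinian_torsionBySet_torsionBySet {s t : Set R}
    (hart : IsArtinian R (Submodule.torsionBySet R M (s ∪ t))) :
    IsArtinian R (Submodule.torsionBySet R (Submodule.torsionBySet R M s) t) := by
  let j : Submodule.torsionBySet R (Submodule.torsionBySet R M s) t →ₗ[R] M :=
    (Submodule.torsionBySet R M s).subtype ∘ₗ Submodule.subtype _
  have hj : ∀ m, j m ∈ Submodule.torsionBySet R M (s ∪ t) := by
    rintro ⟨⟨m, hs⟩, ht⟩
    rw [Submodule.mem_torsionBySet_iff] at hs ht ⊢
    rintro ⟨r, hr | hr⟩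
    exacts [hs ⟨r, hr⟩, congrArg Subtype.val (ht ⟨r, hr⟩)]
  exact isArtinian_of_injective (j.codRestrict _ hj) <| (LinearMap.injective_codRestrict_iff hj).2
    (Subtype.val_injective.comp Subtype.val_injective)

theorem isArtinian_of_isArtinian_torsionBySet {a : Ideal R} (ha : a.FG)
    (htor : IsIdealTorsion a M) (hart : IsArtinian R (Submodule.torsionBySet R M a)) :
    IsArtinian R M := by
  induction a, ha using Submodule.fg_induction generalizing M with
  | singleton x =>
    rw [Submodule.torsionBySet_span_singleton_eq] at hart
    exact isArtinian_of_isArtinian_torsionBy htor hart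
  | sup a b _ _ iha ihb =>
    have torsion_sup : Submodule.torsionBySet R M (a ⊔ b : Ideal R) =
        Submodule.torsionBySet R M (a ∪ b : Set R) := by
      rw [Submodule.torsionBySet_eq_torsionBySet_span (s := (a ∪ b : Set R)), Ideal.span_union,
        Ideal.span_eq, Ideal.span_eq]
    rw [torsion_sup] at hart
    exact iha (htor.mono le_sup_left) (ihb ((htor.mono le_sup_right).submodule _)
      (isArtinian_torsionBySet_torsionBySet hart))

end Melkersson

section Localization

variable {M' : Type*} [AddCommGroup M'] [Module R M']

theorem exists_smul_eq_zero_of_fg_le_ker (S : Submonoid R) (f : M →ₗ[R] M')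
    [IsLocalizedModule S f] {N : Submodule R M} (hN : N.FG) (hle : N ≤ LinearMap.ker f) :
    ∃ c : S, ∀ m ∈ N, c • m = 0 := by
  induction N, hN using Submodule.fg_induction with
  | singleton x =>
    obtain ⟨c, hc⟩ :=
      (IsLocalizedModule.eq_zero_iff S f).1 (hle (Submodule.mem_span_singleton_self x))
    refine ⟨c, fun m hm => ?_⟩
    obtain ⟨r, rfl⟩ := Submodule.mem_span_singleton.1 hm
    rw [smul_comm, hc, smul_zero]
  | sup N₁ N₂ _ _ ih₁ ih₂ =>
    obtain ⟨c₁, hc₁⟩ := ih₁ (le_sup_left.trans hle)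
    obtain ⟨c₂, hc₂⟩ := ih₂ (le_sup_right.trans hle)
    refine ⟨c₁ * c₂, fun m hm => ?_⟩
    obtain ⟨m₁, hm₁, m₂, hm₂, rfl⟩ := Submodule.mem_sup.1 hm
    rw [smul_add, mul_smul, mul_smul, smul_comm c₁ c₂ m₁, hc₁ m₁ hm₁, hc₂ m₂ hm₂, smul_zero,
      smul_zero, add_zero]

variable (S : Submonoid R) (A : Type*) [CommRing A] [Algebra R A] [Module A M']
  [IsScalarTower R A M'] {a : Ideal R}

theorem IsIdealTorsion.localization (f : M →ₗ[R] M') [IsLocalizedModule S f]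
    (h : IsIdealTorsion a M) : IsIdealTorsion (a.map (algebraMap R A)) M' := by
  intro y
  obtain ⟨⟨m, s⟩, rfl⟩ := IsLocalizedModule.mk'_surjective S f y
  obtain ⟨n, hn⟩ := h m
  refine ⟨n, fun r hr => (Submodule.mem_annihilator_span_singleton _ r).1 ?_⟩
  rw [← Ideal.map_pow] at hr
  refine Ideal.map_le_iff_le_comap.2 (fun t ht => ?_) hr
  rw [Ideal.mem_comap, Submodule.mem_annihilator_span_singleton, algebraMap_smul,
    Function.uncurry_apply_pair, ← IsLocalizedModule.mk'_smul, hn t ht, IsLocalizedModule.mk'_zero]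

theorem comap_mem_support_of_mem_support (f : M →ₗ[R] M') [IsLocalizedModule S f]
    {Q : PrimeSpectrum A} (hQ : Q ∈ Module.support A M') :
    Q.comap (algebraMap R A) ∈ Module.support R M := by
  rw [Module.mem_support_iff_exists_annihilator] at hQ ⊢
  obtain ⟨y, hy⟩ := hQ
  obtain ⟨⟨m, s⟩, rfl⟩ := IsLocalizedModule.mk'_surjective S f y
  refine ⟨m, fun r hr => hy ?_⟩
  rw [Submodule.mem_annihilator_span_singleton] at hr ⊢
  rw [algebraMap_smul, Function.uncurry_apply_pair, ← IsLocalizedModule.mk'_smul, hr,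
    IsLocalizedModule.mk'_zero]

theorem torsionBySet_map_le_localized' (f : M →ₗ[R] M') [IsLocalizedModule S f]
    [IsLocalization S A] (ha : a.FG) :
    Submodule.torsionBySet A M' (a.map (algebraMap R A)) ≤
      (Submodule.torsionBySet R M a).localized' A S f := by
  intro y hy
  obtain ⟨⟨m, s⟩, rfl⟩ := IsLocalizedModule.mk'_surjective S f y
  rw [Submodule.mem_torsionBySet_iff] at hy
  have smul_le_ker : Submodule.map (LinearMap.toSpanSingleton R M m) a ≤ LinearMap.ker f := by
    rintro _ ⟨r, hr, rfl⟩
    have hry : r • IsLocalizedModule.mk' f m s = 0 := by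
      simpa only [algebraMap_smul] using! hy ⟨algebraMap R A r, Ideal.mem_map_of_mem _ hr⟩
    rwa [← IsLocalizedModule.mk'_smul, IsLocalizedModule.mk'_eq_zero] at hry
  obtain ⟨c, hc⟩ := exists_smul_eq_zero_of_fg_le_ker S f (Submodule.FG.map _ ha) smul_le_ker
  refine ⟨c • m, ?_, c * s, IsLocalizedModule.mk'_cancel_left f m c s⟩
  rw [Submodule.mem_torsionBySet_iff]
  rintro ⟨r, hr⟩
  rw [smul_comm]
  exact hc _ ⟨r, hr, rfl⟩

end Localization

section Support

theorem isArtinian_of_forall_mem_support_isMaximal [IsNoetherianRing R] [hfin : Module.Finite R M]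
    (hmax : ∀ p ∈ Module.support R M, p.asIdeal.IsMaximal) : IsArtinian R M := by
  induction hfin using IsNoetherianRing.induction_on_isQuotientEquivQuotientPrime R with
  | subsingleton N => infer_instance
  | quotient N p e =>
    have hp : p ∈ Module.support R N := by
      rw [e.support_eq, Module.support_eq_zeroLocus, Ideal.annihilator_quotient]
      exact subset_rfl (a := (p.asIdeal : Set R))
    have := isSimpleModule_iff_quot_maximal.2 ⟨p.asIdeal, hmax p hp, ⟨e⟩⟩
    infer_instance
  | exact N₁ N₂ N₃ i g hi hg hig ih₁ ih₃ =>
    have := ih₁ fun p hp => hmax p (Module.support_subset_of_injective i hi hp)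
    have := ih₃ fun p hp => hmax p (Module.support_subset_of_surjective g hg hp)
    exact isArtinian_of_range_eq_ker i g hig.linearMap_ker_eq.symm

variable {p : PrimeSpectrum R}

theorem minimal_mem_support_of_krullDim_le (hp : p ∈ Module.support R M)
    (hdim : Order.krullDim (Module.support R M) ≤ ringKrullDim (R ⧸ p.asIdeal))
    (hfin : ringKrullDim (R ⧸ p.asIdeal) < ⊤) : Minimal (· ∈ Module.support R M) p := by
  rw [ringKrullDim_quotient] at hdim hfin
  exact minimal_mem_of_krullDim_le_krullDim_Ici (fun _ _ => Module.mem_support_mono) hp hdim hfin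

theorem isMaximal_of_mem_support_localizedModule (hp : Minimal (· ∈ Module.support R M) p)
    {Q : PrimeSpectrum (Localization.AtPrime p.asIdeal)}
    (hQ : Q ∈ Module.support (Localization.AtPrime p.asIdeal)
      (LocalizedModule p.asIdeal.primeCompl M)) : Q.asIdeal.IsMaximal := by
  have hQp : Q.asIdeal.under R ≤ p.asIdeal :=
    (Ideal.comap_mono (IsLocalRing.le_maximalIdeal Q.isPrime.ne_top)).trans
      Localization.AtPrime.under_maximalIdeal.le
  have hQM : Q.comap (algebraMap R _) ∈ Module.support R M :=
    comap_mem_support_of_mem_support p.asIdeal.primeCompl _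
      (LocalizedModule.mkLinearMap p.asIdeal.primeCompl M) hQ
  have hpQ : p.asIdeal ≤ Q.asIdeal.under R := hp.le_of_le hQM hQp
  rw [Localization.AtPrime.eq_maximalIdeal_iff_under_eq.1 (le_antisymm hQp hpQ)]
  infer_instance

end Support

theorem range_applyₗ_one_eq_torsionBySet (a : Ideal R) :
    LinearMap.range (LinearMap.applyₗ 1 : ((R ⧸ a) →ₗ[R] M) →ₗ[R] M) =
      Submodule.torsionBySet R M a := by
  ext m
  rw [Submodule.mem_torsionBySet_iff]
  constructor
  · rintro ⟨φ, rfl⟩ ⟨r, hr⟩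
    have hr_one : r • (1 : R ⧸ a) = 0 := by
      rw [Algebra.smul_def, mul_one]
      exact Ideal.Quotient.eq_zero_iff_mem.2 hr
    rw [LinearMap.applyₗ_apply_apply, ← map_smul, hr_one, map_zero]
  · intro hm
    exact ⟨a.liftQ (LinearMap.toSpanSingleton R M m) fun r hr => hm ⟨r, hr⟩, one_smul R m⟩

theorem stmt13_general [IsNoetherianRing R] {a : Ideal R} (htor : IsIdealTorsion a M)
    (hhom : Module.Finite R ((R ⧸ a) →ₗ[R] M)) {p : PrimeSpectrum R}
    (hp : Minimal (· ∈ Module.support R M) p) :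
    IsArtinian (Localization.AtPrime p.asIdeal) (LocalizedModule p.asIdeal.primeCompl M) := by
  let S := p.asIdeal.primeCompl
  let A := Localization.AtPrime p.asIdeal
  let f := LocalizedModule.mkLinearMap S M
  let T := (Submodule.torsionBySet R M a).localized' A S f
  have : IsNoetherianRing A := IsLocalization.isNoetherianRing S A inferInstance
  have torsion_fg : (Submodule.torsionBySet R M a).FG := by
    rw [← range_applyₗ_one_eq_torsionBySet, ← Module.Finite.iff_fg]
    infer_instance
  have : Module.Finite A T := Module.Finite.iff_fg.2 (Submodule.localized'_fg A S f torsion_fg)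
  have : IsArtinian A T := isArtinian_of_forall_mem_support_isMaximal fun Q hQ =>
    isMaximal_of_mem_support_localizedModule hp
      (Module.support_subset_of_injective T.subtype T.subtype_injective hQ)
  have ha : a.FG := IsNoetherian.noetherian a
  exact isArtinian_of_isArtinian_torsionBySet (ha.map _) (htor.localization S A f)
    (isArtinian_of_le (torsionBySet_map_le_localized' S A f ha))

end Module

section Ext

variable (R : Type*) [Ring R] {C : Type*} [Category* C] [Abelian C] [Linear R C]

instance preservesLimits_linearYoneda_obj (Y : C) :
    Limits.PreservesLimits ((linearYoneda R C).obj Y) :=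
  have : Limits.PreservesLimits ((linearYoneda R C).obj Y ⋙ forget (ModuleCat R)) :=
    inferInstanceAs (Limits.PreservesLimits (yoneda.obj Y))
  Limits.preservesLimits_of_reflects_of_preserves _ (forget _)

/-- The isomorphism `Ext^0(X, Y) ≅ Hom(X, Y)`: the functor `Hom(-, Y)`, viewed as right exact by
passing to opposite categories, agrees with its zeroth left derived functor. -/
noncomputable def extZeroIso [EnoughProjectives C] (X Y : C) :
    ((Ext R C 0).obj (Opposite.op X)).obj Y ≅ ModuleCat.of R (X ⟶ Y) :=
  have := Limits.preservesFiniteColimits_rightOp ((linearYoneda R C).obj Y)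
  (((linearYoneda R C).obj Y).rightOp.leftDerivedZeroIsoSelf.app X).unop.symm

end Ext

theorem finite_linearMap_of_finite_extQuot {R : Type u} [CommRing R] {a : Ideal R}
    {M : ModuleCat.{u} R} (h : Module.Finite R (extQuot a 0 M)) :
    Module.Finite R ((R ⧸ a) →ₗ[R] M) := by
  rw [extQuot] at h
  exact .equiv ((extZeroIso R (.of R (R ⧸ a)) M).toLinearEquiv ≪≫ₗ ModuleCat.homLinearEquiv)

theorem stmt13 {R : Type u} [CommRing R] [IsNoetherianRing R] (a : Ideal R)
    (M : ModuleCat.{u} R)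
    (htor : ∀ m : M, ∃ n : ℕ, ∀ r ∈ a ^ n, r • m = 0)
    (hdim : Order.krullDim (Module.support R M) ≤ 2)
    (hhom : Module.Finite R (extQuot a 0 M)) :
    ∀ p : PrimeSpectrum R, p ∈ Module.support R M →
      ringKrullDim (R ⧸ p.asIdeal) = 2 →
        IsArtinian (Localization.AtPrime p.asIdeal)
          (LocalizedModule p.asIdeal.primeCompl M) := by
  intro p hp hp2
  exact stmt13_general htor (finite_linearMap_of_finite_extQuot hhom)
    (minimal_mem_support_of_krullDim_le hp (hp2 ▸ hdim) (hp2 ▸ by decide))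
end
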